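/- Let G be a finite nonsolvable group satisfying the two-prime hypothesis, and let M/N be a nonabelian chief factor of G, i.e., N < M are normal subgroups of G such that there is no normal subgroup of G strictly between N and M, and the quotient M/N is nonabelian. Then M/N is either a simple group or isomorphic to A_5 × A_5. -/

import Mathlib

open CategoryTheory

/-- The set of degrees of the complex irreducible characters of `G`. -/
def charDegrees (G : Type) [Group G] : Set ℕ :=
  {n | ∃ V : FDRep ℂ G, Simple V ∧ Module.finrank ℂ V = n}

/-- `G` satisfies the two-prime hypothesis: for any distinct irreducible character degrees
`a`, `b`, the gcd `gcd a b` has at most two prime divisors counted with multiplicity. -/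
def TwoPrimeHypothesis (G : Type) [Group G] : Prop :=
  ∀ a ∈ charDegrees G, ∀ b ∈ charDegrees G, a ≠ b →
    (Nat.gcd a b).primeFactorsList.length ≤ 2

/-!
Passing to `G / N`, let `M` be a nonabelian minimal normal subgroup of `G` that is not simple, let
`S` be a simple factor of `M`, and let `H` be the normalizer of `S`, a proper subgroup of `G`. For
`g ∉ H` and irreducible characters `θ₁`, `θ₂` of `S` of different degrees with `θ₁(1) ≠ 1`, the
character `θ₁ × θ₂ᵍ` of `M` has inertia group inside `H`, so by Clifford theory
`|G : H| θ₁(1) θ₂(1)` divides the degree of every irreducible character of `G` above it.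

Suppose that `θ₁(1)` is neither `1` nor a prime and that a Sylow `p`-subgroup of `H` fixes `θ₁`,
where `p ∤ θ₁(1)`. As `M` is perfect, `θ₁ × 1` extends to the product of `M` with this Sylow
subgroup, and inducing the extension to `G` yields a character above `θ₁ × 1` whose degree is not
divisible by `|G : H| p`. If `p ∣ θ₂(1)`, this degree differs from those above `θ₁ × θ₂ᵍ`, yet both
are divisible by `|G : H| θ₁(1)`, which has at least three prime factors: a contradiction.

It remains to find `p`, `θ₁` and `θ₂` with these properties. For every prime `p` dividing `|S|`,
counting orbits shows that a Sylow `p`-subgroup of `H` fixes some nontrivial irreducible character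
of degree prime to `p`; this settles the case where no character degree of `S` is prime. If `S` has
an irreducible character of prime degree `p`, it vanishes on the nontrivial elements that a Sylow
`p`-subgroup centralizes, so some element `z` of order `p` generates its own centralizer. Column
orthogonality at `z` then shows that every character of degree prime to `p` is fixed, and, when `p`
is the largest prime degree, that the characters of prime degree other than `p` share one degree.
Were every prime degree to divide every nonprime degree other than `1`, column orthogonality of `1`
and `z` would read `1 + r * a = 0` for a prime `r` and an algebraic integer `a`, which is absurd.
-/

open MonoidAlgebra (of)
open scoped MonoidAlgebra

section MatrixAlgebras

variable {ι : Type*} [Fintype ι]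

lemma exists_eq_smul_one_of_forall_commute [DecidableEq ι] {R : Type*} [CommSemiring R]
    {A : Matrix ι ι R} (h : ∀ B, Commute B A) : ∃ c : R, A = c • 1 := by
  obtain ⟨c, rfl⟩ := Matrix.mem_range_scalar_of_commute_single (M := A) fun _ _ _ => h _
  exact ⟨c, by rw [Matrix.scalar_apply, Matrix.smul_one_eq_diagonal]⟩

variable {K : Type*} [Field K]

lemma eq_zero_or_eq_one_of_isIdempotentElem_of_forall_commute [DecidableEq ι] {A : Matrix ι ι K}
    (hA : IsIdempotentElem A) (h : ∀ B, Commute B A) : A = 0 ∨ A = 1 := by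
  obtain ⟨c, rfl⟩ := exists_eq_smul_one_of_forall_commute h
  rcases isEmpty_or_nonempty ι with _ | ⟨⟨i⟩⟩
  · exact .inl (Subsingleton.elim _ _)
  have hc : IsIdempotentElem c := by
    simpa [IsIdempotentElem, Matrix.mul_apply, Matrix.one_apply] using congrFun₂ hA.eq i i
  rcases IsIdempotentElem.iff_eq_zero_or_one.1 hc with rfl | rfl
  · exact .inl (zero_smul _ _)
  · exact .inr (one_smul _ _)

lemma trace_eq_rank_of_isIdempotentElem {A : Matrix ι ι K} (hA : IsIdempotentElem A) :
    A.trace = A.rank := by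
  classical
  have hA' : IsIdempotentElem (Matrix.toLin' A) := by
    rw [IsIdempotentElem, Module.End.mul_eq_comp, ← Matrix.toLin'_mul, hA.eq]
  rw [← Matrix.trace_toLin'_eq, (LinearMap.IsIdempotentElem.isProj_range _ hA').trace]
  rfl

lemma eq_zero_of_rank_eq_zero {A : Matrix ι ι K} (h : A.rank = 0) : A = 0 := by
  classical
  rw [Matrix.rank, Submodule.finrank_eq_zero, LinearMap.range_eq_bot] at h
  exact Matrix.toLin'.map_eq_zero_iff.1 h

end MatrixAlgebras

section PiMatrix

variable {K : Type*} [Field K] {n : ℕ} {d : Fin n → ℕ}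

lemma trace_mulLeft_pi_matrix (a : Π i, Matrix (Fin (d i)) (Fin (d i)) K) :
    LinearMap.trace K _ (LinearMap.mulLeft K a) = ∑ i, d i * (a i).trace := by
  rw [LinearMap.trace_eq_matrix_trace K
    (Pi.basis fun i => Matrix.stdBasis K (Fin (d i)) (Fin (d i)))]
  simp only [Matrix.trace, Matrix.diag, LinearMap.toMatrix_apply, Pi.basis_repr, Pi.basis_apply,
    LinearMap.mulLeft_apply, Fintype.sum_sigma, Fintype.sum_prod_type, Finset.mul_sum]
  refine Finset.sum_congr rfl fun i _ => Finset.sum_congr rfl fun x _ => ?_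
  have diagonal_entry (y : Fin (d i)) : (Matrix.stdBasis K (Fin (d i)) (Fin (d i))).repr
      (a i * Matrix.stdBasis K (Fin (d i)) (Fin (d i)) (x, y)) (x, y) = a i x x := by
    rw [Matrix.stdBasis_eq_single]
    change (a i * Matrix.single x y 1 : Matrix _ _ K) x y = _
    rw [Matrix.mul_single_apply_same, mul_one]
  simp only [Pi.mul_apply, Pi.single_eq_same, diagonal_entry, Finset.sum_const, Finset.card_univ,
    Fintype.card_fin, nsmul_eq_mul]

lemma isIdempotentElem_pi_single_one {κ : Type*} [DecidableEq κ] {R : κ → Type*}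
    [∀ i, NonAssocSemiring (R i)] (i : κ) : IsIdempotentElem (Pi.single i (1 : R i)) := by
  rw [IsIdempotentElem, ← Pi.single_mul, mul_one]

lemma pi_single_one_mul {κ : Type*} [DecidableEq κ] {R : κ → Type*} [∀ i, NonAssocSemiring (R i)]
    (i : κ) (a : Π i, R i) : Pi.single i 1 * a = Pi.single i (a i) := by
  ext1 j
  by_cases h : j = i
  · subst h; simp
  · simp [h]

lemma commute_pi_single_one {κ : Type*} [DecidableEq κ] {R : κ → Type*}
    [∀ i, NonAssocSemiring (R i)] (i : κ) (a : Π i, R i) : Commute (Pi.single i 1) a := by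
  rw [Commute, SemiconjBy, pi_single_one_mul]
  ext1 j
  by_cases h : j = i
  · subst h; simp
  · simp [h]

variable {ι : Type*} [Fintype ι] [DecidableEq ι] [Nonempty ι]
  {W : (Π i, Matrix (Fin (d i)) (Fin (d i)) K) →ₐ[K] Matrix ι ι K}

lemma exists_map_single_one_eq_one (hW : Function.Surjective W) :
    ∃ i, W (Pi.single i 1) = 1 := by
  have zero_or_one (i : Fin n) : W (Pi.single i 1) = 0 ∨ W (Pi.single i 1) = 1 := by
    refine eq_zero_or_eq_one_of_isIdempotentElem_of_forall_commute
      ((isIdempotentElem_pi_single_one i).map W) fun B => ?_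
    obtain ⟨b, rfl⟩ := hW B
    exact ((commute_pi_single_one i b).map W).symm
  by_contra! h
  refine one_ne_zero (α := Matrix ι ι K) ?_
  rw [← map_one W, ← Finset.univ_sum_single 1, map_sum]
  exact Finset.sum_eq_zero fun i _ => (zero_or_one i).resolve_right (h i)

lemma exists_algEquiv_of_surjective [∀ i, NeZero (d i)] (hW : Function.Surjective W) :
    ∃ i, ∃ Φ : Matrix (Fin (d i)) (Fin (d i)) K ≃ₐ[K] Matrix ι ι K, ∀ a, W a = Φ (a i) := by
  obtain ⟨i, hi⟩ := exists_map_single_one_eq_one hW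
  have apply_eq (a) : W a = W (Pi.single i (a i)) := by
    rw [← pi_single_one_mul, map_mul, hi, one_mul]
  let φ : Matrix (Fin (d i)) (Fin (d i)) K →ₐ[K] Matrix ι ι K := AlgHom.ofLinearMap
    (W.toLinearMap ∘ₗ LinearMap.single K (fun i => Matrix (Fin (d i)) (Fin (d i)) K) i) hi
    fun x y => by simp [Pi.single_mul]
  have φ_surjective : Function.Surjective φ := fun B => by
    obtain ⟨b, rfl⟩ := hW B
    exact ⟨b i, (apply_eq b).symm⟩
  exact ⟨i, .ofBijective φ ⟨φ.toRingHom.injective, φ_surjective⟩, apply_eq⟩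

end PiMatrix

section CharacterOfMatrixRepresentation

variable {X ι : Type*} [Group X] [Fintype ι]

/-- The character `x ↦ tr W(x)` of a matrix representation `W` of `X`, given as a homomorphism from
the group algebra. -/
noncomputable def traceChar [DecidableEq ι] (W : ℂ[X] →ₐ[ℂ] Matrix ι ι ℂ) (x : X) : ℂ :=
  (W (of ℂ X x)).trace

/-- `f` is the character of an irreducible complex matrix representation. By Burnside's theorem
irreducibility means that the image of the group algebra is the full matrix algebra. -/
def IsIrrChar (f : X → ℂ) : Prop :=
  ∃ (n : ℕ) (_ : NeZero n) (W : ℂ[X] →ₐ[ℂ] Matrix (Fin n) (Fin n) ℂ),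
    Function.Surjective W ∧ traceChar W = f

variable [DecidableEq ι] (W : ℂ[X] →ₐ[ℂ] Matrix ι ι ℂ)

lemma traceChar_one : traceChar W 1 = Fintype.card ι := by
  rw [traceChar, map_one, map_one, Matrix.trace_one]

lemma traceChar_conj (x y : X) : traceChar W (x * y * x⁻¹) = traceChar W y := by
  rw [traceChar, map_mul, map_mul, Matrix.trace_mul_comm, ← map_mul, ← map_mul, ← mul_assoc,
    inv_mul_cancel, one_mul, traceChar]

lemma traceChar_algEquiv_comp {κ : Type*} [Fintype κ] [DecidableEq κ]
    (Φ : Matrix ι ι ℂ ≃ₐ[ℂ] Matrix κ κ ℂ) : traceChar (Φ.toAlgHom.comp W) = traceChar W :=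
  funext fun _ => Matrix.trace_map Φ _

lemma eq_sum_coeff_smul_of [Fintype X] (a : ℂ[X]) : a = ∑ x, a.coeff x • of ℂ X x := by
  apply MonoidAlgebra.ext
  ext y
  classical simp

lemma trace_eq_sum_coeff_mul_traceChar [Fintype X] (a : ℂ[X]) :
    (W a).trace = ∑ x, a.coeff x * traceChar W x := by
  conv_lhs => rw [eq_sum_coeff_smul_of a]
  simp only [map_sum, map_smul, Matrix.trace_sum, Matrix.trace_smul, smul_eq_mul, traceChar]

variable {W}

lemma isIrrChar_traceChar [Nonempty ι] (hW : Function.Surjective W) :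
    IsIrrChar (traceChar W) :=
  let Φ := Matrix.reindexAlgEquiv ℂ ℂ (Fintype.equivFin ι)
  ⟨Fintype.card ι, ⟨Fintype.card_ne_zero⟩, Φ.toAlgHom.comp W, Φ.surjective.comp hW,
    traceChar_algEquiv_comp W Φ⟩

end CharacterOfMatrixRepresentation

section Wedderburn

variable {X : Type*} [Group X] {n : ℕ} {d : Fin n → ℕ}

/-- The `i`-th matrix representation of a Wedderburn decomposition of the group algebra. -/
noncomputable def blockHom (e : ℂ[X] ≃ₐ[ℂ] Π i, Matrix (Fin (d i)) (Fin (d i)) ℂ) (i : Fin n) :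
    ℂ[X] →ₐ[ℂ] Matrix (Fin (d i)) (Fin (d i)) ℂ :=
  (Pi.evalAlgHom ℂ _ i).comp e.toAlgHom

variable (e : ℂ[X] ≃ₐ[ℂ] Π i, Matrix (Fin (d i)) (Fin (d i)) ℂ)

lemma blockHom_surjective (i : Fin n) : Function.Surjective (blockHom e i) := fun B =>
  ⟨e.symm (Pi.single i B), by simp [blockHom]⟩

lemma exists_blockHom_algEquiv [∀ i, NeZero (d i)] {ι : Type*} [Fintype ι] [DecidableEq ι]
    [Nonempty ι] {W : ℂ[X] →ₐ[ℂ] Matrix ι ι ℂ} (hW : Function.Surjective W) :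
    ∃ i, ∃ Φ : Matrix (Fin (d i)) (Fin (d i)) ℂ ≃ₐ[ℂ] Matrix ι ι ℂ,
      W = Φ.toAlgHom.comp (blockHom e i) := by
  obtain ⟨i, Φ, hΦ⟩ := exists_algEquiv_of_surjective (W := W.comp e.symm.toAlgHom)
    (hW.comp e.symm.surjective)
  exact ⟨i, Φ, AlgHom.ext fun a => by simpa [blockHom] using hΦ (e a)⟩

variable [Fintype X]

lemma trace_mulLeft_monoidAlgebra {K : Type*} [Field K] (a : K[X]) :
    LinearMap.trace K K[X] (LinearMap.mulLeft K a) = Fintype.card X * a.coeff 1 := by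
  classical
  have diagonal_entry (x : X) : (MonoidAlgebra.basis X K).repr
      (LinearMap.mulLeft K a (MonoidAlgebra.basis X K x)) x = a.coeff 1 := by
    rw [MonoidAlgebra.basis_apply]
    change (a * MonoidAlgebra.single x 1).coeff x = _
    rw [MonoidAlgebra.coeff_mul_single_apply, mul_inv_cancel, mul_one]
  rw [LinearMap.trace_eq_matrix_trace K (MonoidAlgebra.basis X K)]
  simp only [Matrix.trace, Matrix.diag, LinearMap.toMatrix_apply, diagonal_entry, Finset.sum_const,
    Finset.card_univ, nsmul_eq_mul]

lemma sum_mul_trace_blockHom (a : ℂ[X]) :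
    ∑ i, d i * (blockHom e i a).trace = Fintype.card X * a.coeff 1 := by
  rw [← trace_mulLeft_monoidAlgebra,
    ← LinearMap.trace_conj' (LinearMap.mulLeft ℂ a) e.toLinearEquiv]
  refine (trace_mulLeft_pi_matrix (e a)).symm.trans (congrArg _ (LinearMap.ext fun x => ?_))
  simp [LinearEquiv.conj_apply]

omit [Fintype X] in
lemma exists_wedderburn (X : Type*) [Group X] [Finite X] :
    ∃ (n : ℕ) (d : Fin n → ℕ), (∀ i, NeZero (d i)) ∧
      Nonempty (ℂ[X] ≃ₐ[ℂ] Π i, Matrix (Fin (d i)) (Fin (d i)) ℂ) :=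
  IsSemisimpleRing.exists_algEquiv_pi_matrix_of_isAlgClosed ℂ ℂ[X]

end Wedderburn

section CharacterIdempotent

variable {X : Type*} [Group X] [Fintype X]

/-- The element `(f 1 / |X|) ∑ₓ f(x⁻¹) x` of the group algebra: when `f` is an irreducible
character, the primitive central idempotent on which `f` is supported. -/
noncomputable def charIdem (f : X → ℂ) : ℂ[X] :=
  ∑ x, (f 1 / Nat.card X * f x⁻¹) • of ℂ X x

lemma coeff_sum_smul_of (c : X → ℂ) (x : X) : (∑ y, c y • of ℂ X y).coeff x = c x := by
  classical simp [Finsupp.single_apply]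

lemma charIdem_coeff (f : X → ℂ) (x : X) : (charIdem f).coeff x = f 1 / Nat.card X * f x⁻¹ :=
  coeff_sum_smul_of _ x

omit [Fintype X] in
lemma coeff_mul_of_inv_one (a : ℂ[X]) (x : X) : (a * of ℂ X x⁻¹).coeff 1 = a.coeff x := by
  rw [MonoidAlgebra.of_apply, MonoidAlgebra.coeff_mul_single_apply, inv_inv, one_mul, mul_one]

lemma charIdem_traceChar_blockHom {n : ℕ} {d : Fin n → ℕ}
    (e : ℂ[X] ≃ₐ[ℂ] Π i, Matrix (Fin (d i)) (Fin (d i)) ℂ) (i : Fin n) :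
    charIdem (traceChar (blockHom e i)) = e.symm (Pi.single i 1) := by
  apply MonoidAlgebra.ext
  ext x
  have regular_trace := sum_mul_trace_blockHom e (e.symm (Pi.single i 1) * of ℂ X x⁻¹)
  rw [coeff_mul_of_inv_one, Finset.sum_eq_single_of_mem i (Finset.mem_univ i)] at regular_trace
  · have block_eq : blockHom e i (e.symm (Pi.single i 1)) = 1 := by simp [blockHom]
    rw [map_mul, block_eq, one_mul] at regular_trace
    rw [charIdem_coeff, traceChar_one, Fintype.card_fin, traceChar, div_mul_eq_mul_div,
      regular_trace, Nat.card_eq_fintype_card, mul_div_cancel_left₀]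
    exact_mod_cast Fintype.card_ne_zero
  · intro j _ hj
    have block_eq : blockHom e j (e.symm (Pi.single i 1)) = 0 := by simp [blockHom, hj]
    rw [map_mul, block_eq, zero_mul, Matrix.trace_zero, mul_zero]

lemma IsIrrChar.commute_charIdem {f : X → ℂ} (hf : IsIrrChar f) (a : ℂ[X]) :
    Commute (charIdem f) a := by
  obtain ⟨m, _, W, hW, rfl⟩ := hf
  obtain ⟨n, d, _, ⟨e⟩⟩ := exists_wedderburn X
  obtain ⟨i, Φ, rfl⟩ := exists_blockHom_algEquiv e hW
  rw [traceChar_algEquiv_comp, charIdem_traceChar_blockHom]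
  simpa using (commute_pi_single_one i (e a)).map e.symm

variable {ι : Type*} [Fintype ι] [DecidableEq ι] [Nonempty ι] {W : ℂ[X] →ₐ[ℂ] Matrix ι ι ℂ}

lemma map_charIdem_traceChar (hW : Function.Surjective W) : W (charIdem (traceChar W)) = 1 := by
  obtain ⟨n, d, _, ⟨e⟩⟩ := exists_wedderburn X
  obtain ⟨i, Φ, rfl⟩ := exists_blockHom_algEquiv e hW
  rw [traceChar_algEquiv_comp, charIdem_traceChar_blockHom]
  simp [blockHom]

lemma sum_traceChar_inv_mul_self (hW : Function.Surjective W) :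
    ∑ x, traceChar W x⁻¹ * traceChar W x = Nat.card X := by
  have hX : (Nat.card X : ℂ) ≠ 0 := by exact_mod_cast Nat.card_pos.ne'
  have hι : (Fintype.card ι : ℂ) ≠ 0 := by exact_mod_cast Fintype.card_ne_zero
  have trace_eq := trace_eq_sum_coeff_mul_traceChar W (charIdem (traceChar W))
  simp only [map_charIdem_traceChar hW, Matrix.trace_one, charIdem_coeff, traceChar_one, mul_assoc,
    ← Finset.mul_sum] at trace_eq
  field_simp at trace_eq
  exact trace_eq.symm

end CharacterIdempotent

section IrreducibleCharacters

variable (X : Type*) [Group X] [Finite X]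

lemma isIrrChar_iff_exists_blockHom {X : Type*} [Group X] [Finite X] {n : ℕ} {d : Fin n → ℕ}
    [∀ i, NeZero (d i)] (e : ℂ[X] ≃ₐ[ℂ] Π i, Matrix (Fin (d i)) (Fin (d i)) ℂ) {f : X → ℂ} :
    IsIrrChar f ↔ ∃ i, traceChar (blockHom e i) = f := by
  constructor
  · rintro ⟨m, _, W, hW, rfl⟩
    obtain ⟨i, Φ, rfl⟩ := exists_blockHom_algEquiv e hW
    exact ⟨i, (traceChar_algEquiv_comp _ Φ).symm⟩
  · rintro ⟨i, rfl⟩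
    exact isIrrChar_traceChar (blockHom_surjective e i)

lemma finite_setOf_isIrrChar : {f : X → ℂ | IsIrrChar f}.Finite := by
  obtain ⟨n, d, _, ⟨e⟩⟩ := exists_wedderburn X
  simp only [isIrrChar_iff_exists_blockHom e]
  exact Set.finite_range _

/-- The finite set of irreducible complex characters of `X`. -/
noncomputable def irrChars : Finset (X → ℂ) := (finite_setOf_isIrrChar X).toFinset

variable {X}

lemma mem_irrChars {f : X → ℂ} : f ∈ irrChars X ↔ IsIrrChar f :=
  (finite_setOf_isIrrChar X).mem_toFinset

lemma traceChar_blockHom_injective {n : ℕ} {d : Fin n → ℕ} [∀ i, NeZero (d i)]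
    (e : ℂ[X] ≃ₐ[ℂ] Π i, Matrix (Fin (d i)) (Fin (d i)) ℂ) :
    Function.Injective fun i => traceChar (blockHom e i) := by
  intro i j hij
  have := Fintype.ofFinite X
  have single_eq := congrArg charIdem hij
  simp only [charIdem_traceChar_blockHom, EmbeddingLike.apply_eq_iff_eq] at single_eq
  by_contra hne
  have := congrFun single_eq i
  rw [Pi.single_eq_same, Pi.single_eq_of_ne hne] at this
  exact one_ne_zero this

lemma sum_irrChars_eq_sum_blockHom {A : Type*} [AddCommMonoid A] {n : ℕ} {d : Fin n → ℕ}
    [∀ i, NeZero (d i)] (e : ℂ[X] ≃ₐ[ℂ] Π i, Matrix (Fin (d i)) (Fin (d i)) ℂ)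
    (F : (X → ℂ) → A) : ∑ f ∈ irrChars X, F f = ∑ i, F (traceChar (blockHom e i)) := by
  refine (Finset.sum_bij (fun i _ => traceChar (blockHom e i))
    (fun i _ => mem_irrChars.2 (isIrrChar_traceChar (blockHom_surjective e i)))
    (fun i _ j _ h => traceChar_blockHom_injective e h) (fun f hf => ?_) fun _ _ => rfl).symm
  obtain ⟨i, rfl⟩ := (isIrrChar_iff_exists_blockHom e).1 (mem_irrChars.1 hf)
  exact ⟨i, Finset.mem_univ i, rfl⟩

lemma sum_irrChars_mul_sum_coeff {X : Type*} [Group X] [Fintype X] (a : ℂ[X]) :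
    ∑ f ∈ irrChars X, f 1 * ∑ x, a.coeff x * f x = Nat.card X * a.coeff 1 := by
  obtain ⟨n, d, _, ⟨e⟩⟩ := exists_wedderburn X
  rw [sum_irrChars_eq_sum_blockHom e, Nat.card_eq_fintype_card, ← sum_mul_trace_blockHom e]
  simp only [trace_eq_sum_coeff_mul_traceChar, traceChar_one, Fintype.card_fin]

end IrreducibleCharacters

section ClassSum

variable {X : Type*} [Group X] [Fintype X]

open Classical in
/-- The sum in the group algebra of the elements conjugate to `g`. -/
noncomputable def classSum (g : X) : ℂ[X] := ∑ y with IsConj g y, of ℂ X y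

open Classical in
lemma card_filter_isConj (g : X) :
    (Finset.univ.filter (IsConj g)).card = (Subgroup.centralizer {g}).index := by
  have orbit_stabilizer := ConjClasses.card_carrier g
  rw [← Nat.card_eq_fintype_card (α := X),
    ← Nat.card_eq_fintype_card (α := MulAction.stabilizer _ g),
    ← Subgroup.nat_card_centralizer_nat_card_stabilizer,
    Subgroup.card_eq_card_quotient_mul_card_subgroup (Subgroup.centralizer {g}),
    Nat.mul_div_cancel _ Nat.card_pos, Fintype.card_subtype] at orbit_stabilizer
  rw [Subgroup.index, ← orbit_stabilizer]
  congr 1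
  ext y
  simp only [Finset.mem_filter_univ, ConjClasses.mem_carrier_iff_mk_eq,
    ConjClasses.mk_eq_mk_iff_isConj, isConj_comm]

lemma commute_classSum (g : X) (a : ℂ[X]) : Commute (classSum g) a := by
  classical
  induction a using MonoidAlgebra.induction_linear with
  | zero => exact Commute.zero_right _
  | add a b ha hb => exact ha.add_right hb
  | single m r =>
    rw [← mul_one r, ← smul_eq_mul, ← MonoidAlgebra.smul_single, ← MonoidAlgebra.of_apply]
    refine Commute.smul_right ?_ r
    rw [Commute, SemiconjBy, classSum, Finset.sum_mul, Finset.mul_sum]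
    refine Finset.sum_equiv (MulAut.conj m⁻¹).toEquiv (fun y => ?_) fun y _ => ?_
    · have hy : IsConj y (MulAut.conj m⁻¹ y) := isConj_iff.2 ⟨m⁻¹, rfl⟩
      simp only [Finset.mem_filter_univ]
      exact ⟨fun h => h.trans hy, fun h => h.trans hy.symm⟩
    · rw [← map_mul, ← map_mul]
      simp [mul_assoc]

open Classical in
lemma classSum_coeff (g x : X) : (classSum g).coeff x = if IsConj g x then 1 else 0 := by
  simp [classSum, Finsupp.single_apply]

lemma map_classSum {ι : Type*} [Fintype ι] [DecidableEq ι] [Nonempty ι]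
    {W : ℂ[X] →ₐ[ℂ] Matrix ι ι ℂ} (hW : Function.Surjective W) (g : X) :
    W (classSum g) =
      ((Subgroup.centralizer {g}).index * traceChar W g / Fintype.card ι : ℂ) • 1 := by
  classical
  have hι : (Fintype.card ι : ℂ) ≠ 0 := by exact_mod_cast Fintype.card_ne_zero
  obtain ⟨c, hc⟩ := exists_eq_smul_one_of_forall_commute (A := W (classSum g)) fun B => by
    obtain ⟨b, rfl⟩ := hW B
    exact ((commute_classSum g b).map W).symm
  have trace_eq := trace_eq_sum_coeff_mul_traceChar W (classSum g)
  have conj_eq (x) (hx : x ∈ Finset.univ.filter (IsConj g)) : traceChar W x = traceChar W g := by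
    obtain ⟨y, rfl⟩ := isConj_iff.1 (Finset.mem_filter.1 hx).2
    exact traceChar_conj W y g
  simp only [classSum_coeff, ite_mul, one_mul, zero_mul, ← Finset.sum_filter] at trace_eq
  rw [Finset.sum_congr rfl conj_eq, Finset.sum_const, card_filter_isConj, hc, Matrix.trace_smul,
    Matrix.trace_one, smul_eq_mul, nsmul_eq_mul] at trace_eq
  rw [hc, ← trace_eq, mul_div_cancel_right₀ _ hι]

open Classical in
lemma sum_irrChars_mul_inv (g h : X) : ∑ f ∈ irrChars X, f g * f h⁻¹ =
    if IsConj g h then (Nat.card (Subgroup.centralizer {g}) : ℂ) else 0 := by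
  obtain ⟨n, d, _, ⟨e⟩⟩ := exists_wedderburn X
  have hindex : ((Subgroup.centralizer {g}).index : ℂ) ≠ 0 := by
    exact_mod_cast Subgroup.index_ne_zero_of_finite
  have block_trace (i : Fin n) : d i * (blockHom e i (classSum g * of ℂ X h⁻¹)).trace =
      (Subgroup.centralizer {g}).index *
        (traceChar (blockHom e i) g * traceChar (blockHom e i) h⁻¹) := by
    have hd : (d i : ℂ) ≠ 0 := NeZero.ne _
    rw [map_mul, map_classSum (blockHom_surjective e i), smul_mul_assoc, one_mul,
      Matrix.trace_smul, Fintype.card_fin, smul_eq_mul, traceChar, traceChar]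
    field_simp
  have regular_trace := sum_mul_trace_blockHom e (classSum g * of ℂ X h⁻¹)
  rw [coeff_mul_of_inv_one, classSum_coeff, Finset.sum_congr rfl fun i _ => block_trace i,
    ← Finset.mul_sum, ← sum_irrChars_eq_sum_blockHom e fun f => f g * f h⁻¹,
    ← Nat.card_eq_fintype_card, ← (Subgroup.centralizer {g}).index_mul_card] at regular_trace
  apply mul_left_cancel₀ hindex
  rw [regular_trace]
  push_cast
  split_ifs <;> ring

end ClassSum

section EigenProjections

variable {n : ℕ} [NeZero n]

lemma pow_zmod_val_add {M : Type*} [Monoid M] {T : M} (hT : T ^ n = 1) (s t : ZMod n) :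
    T ^ (s + t).val = T ^ s.val * T ^ t.val := by
  rw [ZMod.val_add, ← pow_eq_pow_mod _ hT, pow_add]

omit [NeZero n] in
lemma pow_zmod_val_one {M : Type*} [Monoid M] {T : M} (hT : T ^ n = 1) :
    T ^ (1 : ZMod n).val = T := by
  rw [ZMod.val_one_eq_one_mod, ← pow_eq_pow_mod _ hT, pow_one]

lemma stdAddChar_pow (i : ZMod n) : (ZMod.stdAddChar i : ℂ) ^ n = 1 := by
  rw [← AddChar.map_nsmul_eq_pow, nsmul_eq_mul, CharP.cast_eq_zero, zero_mul,
    AddChar.map_zero_eq_one]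

lemma isIntegral_stdAddChar (i : ZMod n) : IsIntegral ℤ (ZMod.stdAddChar i : ℂ) :=
  .of_pow (NeZero.pos n) (by rw [stdAddChar_pow]; exact isIntegral_one)

variable {R : Type*} [Ring R] [Algebra ℂ R]

/-- For `T ^ n = 1`, the projection onto the eigenspace of `T` for the `n`-th root of unity
`exp(2πik/n)`, obtained by Fourier inversion from the powers of `T`. -/
noncomputable def eigenProj (T : R) (k : ZMod n) : R :=
  (n : ℂ)⁻¹ • ZMod.dft (fun s : ZMod n => T ^ s.val) k

lemma sum_stdAddChar_smul_eigenProj (T : R) (t : ZMod n) :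
    ∑ k, ZMod.stdAddChar (k * t) • eigenProj T k = T ^ t.val := by
  have inversion := congrFun (ZMod.dft.symm_apply_apply fun s : ZMod n => T ^ s.val) t
  rw [ZMod.invDFT_apply, Finset.smul_sum] at inversion
  simpa only [eigenProj, smul_comm (n : ℂ)⁻¹] using inversion

lemma sum_eigenProj (T : R) : ∑ k : ZMod n, eigenProj T k = 1 := by
  simpa using sum_stdAddChar_smul_eigenProj T (0 : ZMod n)

lemma commute_eigenProj {A T : R} (h : Commute A T) (k : ZMod n) : Commute A (eigenProj T k) := by
  rw [eigenProj, ZMod.dft_apply, commute_iff_eq, mul_smul_comm, smul_mul_assoc, Finset.mul_sum,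
    Finset.sum_mul]
  simp only [mul_smul_comm, smul_mul_assoc, (h.pow_right _).eq]

variable {T : R} (hT : T ^ n = 1)
include hT

lemma pow_mul_eigenProj (t k : ZMod n) :
    T ^ t.val * eigenProj T k = (ZMod.stdAddChar (t * k) : ℂ) • eigenProj T k := by
  rw [eigenProj, ZMod.dft_apply, mul_smul_comm, smul_comm _ (n : ℂ)⁻¹, Finset.mul_sum]
  congr 1
  rw [Finset.smul_sum]
  refine Fintype.sum_equiv (Equiv.addLeft t) _ _ fun s => ?_
  rw [Equiv.coe_addLeft, pow_zmod_val_add hT, mul_smul_comm, smul_smul, ← AddChar.map_add_eq_mul]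
  congr 2
  ring_nf

lemma mul_eigenProj (k : ZMod n) :
    T * eigenProj T k = (ZMod.stdAddChar k : ℂ) • eigenProj T k := by
  simpa only [pow_zmod_val_one hT, one_mul] using pow_mul_eigenProj hT 1 k

lemma eigenProj_mul_eigenProj (j k : ZMod n) :
    eigenProj T j * eigenProj T k = if j = k then eigenProj T k else 0 := by
  have hn : (n : ℂ) ≠ 0 := NeZero.ne _
  have character_sum : ∑ s : ZMod n, (ZMod.stdAddChar (s * (k - j)) : ℂ) =
      if k - j = 0 then (n : ℂ) else 0 := by
    rw [AddChar.sum_mulShift _ (ZMod.isPrimitive_stdAddChar n), ZMod.card]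
    split_ifs <;> simp
  have shift (s : ZMod n) : -(s * j) + s * k = s * (k - j) := by ring
  rw [eigenProj, ZMod.dft_apply, smul_mul_assoc, Finset.sum_mul]
  simp_rw [smul_mul_assoc, pow_mul_eigenProj hT, smul_smul, ← AddChar.map_add_eq_mul,
    ← Finset.sum_smul, shift, character_sum, sub_eq_zero, eq_comm (a := k)]
  split_ifs
  · rw [smul_smul, inv_mul_cancel₀ hn, one_smul]
  · rw [zero_smul, smul_zero]

lemma isIdempotentElem_eigenProj (k : ZMod n) : IsIdempotentElem (eigenProj T k) := by
  rw [IsIdempotentElem, eigenProj_mul_eigenProj hT, if_pos rfl]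

end EigenProjections

section EigenvalueMultiplicity

variable {n : ℕ} [NeZero n] {ι : Type*} [Fintype ι] [DecidableEq ι] {T : Matrix ι ι ℂ}

/-- For `T ^ n = 1`, the multiplicity of the `n`-th root of unity `exp(2πik/n)` as an eigenvalue
of `T`. -/
noncomputable def eigenMult (T : Matrix ι ι ℂ) (k : ZMod n) : ℕ := (eigenProj T k).rank

variable (hT : T ^ n = 1)
include hT

lemma trace_eigenProj (k : ZMod n) : (eigenProj T k).trace = eigenMult T k :=
  trace_eq_rank_of_isIdempotentElem (isIdempotentElem_eigenProj hT k)

lemma trace_pow_eq_sum (t : ZMod n) :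
    (T ^ t.val).trace = ∑ k : ZMod n, ZMod.stdAddChar (k * t) * eigenMult T k := by
  simp only [← sum_stdAddChar_smul_eigenProj T t, Matrix.trace_sum, Matrix.trace_smul,
    trace_eigenProj hT, smul_eq_mul]

lemma sum_eigenMult : ∑ k : ZMod n, eigenMult T k = Fintype.card ι := by
  have := trace_pow_eq_sum hT 0
  simp only [ZMod.val_zero, pow_zero, Matrix.trace_one, mul_zero, AddChar.map_zero_eq_one,
    one_mul] at this
  exact_mod_cast this.symm

lemma trace_eq_sum : T.trace = ∑ k : ZMod n, ZMod.stdAddChar k * eigenMult T k := by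
  simpa only [pow_zmod_val_one hT, mul_one] using trace_pow_eq_sum hT 1

lemma isIntegral_trace : IsIntegral ℤ T.trace := by
  rw [trace_eq_sum hT]
  exact IsIntegral.sum _ fun k _ => (isIntegral_stdAddChar k).mul (isIntegral_natCast _)

end EigenvalueMultiplicity

section BurnsideScalar

lemma eq_of_sum_mul_eq_of_norm_eq_one {κ : Type*} [Fintype κ] {m : κ → ℕ} {z : κ → ℂ}
    (hz : ∀ k, ‖z k‖ = 1) {u : ℂ} (hu : ‖u‖ = 1) (hsum : ∑ k, z k * m k = u * ∑ k, (m k : ℂ))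
    {k : κ} (hk : m k ≠ 0) : z k = u := by
  have hu' : u * star u = 1 := by
    rw [Complex.star_def, Complex.mul_conj, Complex.normSq_eq_norm_sq, hu, one_pow,
      Complex.ofReal_one]
  have norm_eq (k) : ‖z k * star u‖ = 1 := by rw [norm_mul, norm_star, hz, hu, one_mul]
  have defect_sum : ∑ k, m k * (1 - (z k * star u).re) = 0 := by
    have rotated : ∑ k, m k * (z k * star u) = ∑ k, (m k : ℂ) := by
      simp only [mul_comm (m _ : ℂ), mul_right_comm _ (star u), ← Finset.sum_mul, hsum]
      rw [mul_right_comm, hu', one_mul]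
    have re_rotated := congrArg Complex.re rotated
    simp only [Complex.re_sum, ← Complex.ofReal_natCast, Complex.re_ofReal_mul,
      Complex.ofReal_re] at re_rotated
    simp only [mul_sub, mul_one, Finset.sum_sub_distrib, re_rotated, sub_self]
  have defect_nonneg (k) : 0 ≤ m k * (1 - (z k * star u).re) :=
    mul_nonneg (Nat.cast_nonneg _) (sub_nonneg.2 ((Complex.re_le_norm _).trans (norm_eq k).le))
  have defect_eq_zero :=
    (Finset.sum_eq_zero_iff_of_nonneg fun k _ => defect_nonneg k).1 defect_sum k (Finset.mem_univ k)
  have re_eq : (z k * star u).re = 1 := by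
    rcases mul_eq_zero.1 defect_eq_zero with h | h
    · exact absurd (Nat.cast_eq_zero.1 h) hk
    · linarith
  have prod_eq : z k * star u = 1 := by
    have normSq_eq : Complex.normSq (z k * star u) = 1 := by
      rw [Complex.normSq_eq_norm_sq, norm_eq, one_pow]
    rw [Complex.normSq_apply, re_eq, one_mul, add_eq_left] at normSq_eq
    exact Complex.ext re_eq (mul_self_eq_zero.1 normSq_eq)
  rw [← mul_one (z k), ← hu', mul_comm u, ← mul_assoc, prod_eq, one_mul]

-- Kronecker: every conjugate of `x` is again an average of roots of unity.
lemma norm_eq_one_of_isIntegral_of_mul_sum_eq {κ : Type*} [Fintype κ] {n : ℕ} [NeZero n]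
    {m : κ → ℕ} {z : κ → ℂ} (hz : ∀ k, z k ^ n = 1) {x : ℂ}
    (hx : IsIntegral ℤ x) (hx₀ : x ≠ 0)
    (hsum : ∑ k, z k * m k = x * ∑ k, (m k : ℂ)) (hm : ∑ k, m k ≠ 0) : ‖x‖ = 1 := by
  let K := IntermediateField.adjoin ℚ (Set.range z)
  have : FiniteDimensional ℚ K := IntermediateField.finiteDimensional_adjoin <| by
    rintro _ ⟨k, rfl⟩
    exact .of_pow (NeZero.pos n) (by rw [hz]; exact isIntegral_one)
  have : NumberField K := {}
  let ζ (k : κ) : K := ⟨z k, IntermediateField.subset_adjoin _ _ ⟨k, rfl⟩⟩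
  have hζ (k) : ζ k ^ n = 1 := Subtype.ext (hz k)
  have hm' : (∑ k, m k : ℂ) ≠ 0 := by exact_mod_cast hm
  let y : K := (∑ k, ζ k * m k) / ∑ k, (m k : K)
  have hy : (y : ℂ) = x := by
    have : algebraMap K ℂ y = (∑ k, z k * m k) / ∑ k, (m k : ℂ) := by
      simp only [y, map_div₀, map_sum, map_mul, map_natCast]
      rfl
    exact this.trans (by rw [hsum, mul_div_cancel_right₀ _ hm'])
  have hy_integral : IsIntegral ℤ y := by
    rw [← hy] at hx
    exact (isIntegral_algHom_iff (K.val.restrictScalars ℤ) Subtype.val_injective).1 hx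
  have hy₀ : y ≠ 0 := fun h => hx₀ (by rw [← hy, h, ZeroMemClass.coe_zero])
  have conjugate_le (φ : K →+* ℂ) : ‖φ y‖ ≤ 1 := by
    have hφζ (k) : ‖φ (ζ k)‖ = 1 :=
      Complex.norm_eq_one_of_pow_eq_one (by rw [← map_pow, hζ, map_one]) (NeZero.ne n)
    simp only [y, map_div₀, map_sum, map_mul, map_natCast, norm_div]
    refine div_le_one_of_le₀ ((norm_sum_le _ _).trans_eq ?_) (norm_nonneg _)
    simp only [norm_mul, hφζ, one_mul, Complex.norm_natCast, ← Nat.cast_sum]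
  obtain ⟨r, hr, hyr⟩ := NumberField.Embeddings.pow_eq_one_of_norm_le_one K ℂ hy₀ hy_integral
    conjugate_le
  rw [← hy]
  exact Complex.norm_eq_one_of_pow_eq_one (congrArg Subtype.val hyr) hr.ne'

lemma trace_eq_zero_or_exists_eq_smul_one {n : ℕ} [NeZero n] {ι : Type*} [Fintype ι] [DecidableEq ι]
    [Nonempty ι] {T : Matrix ι ι ℂ} (hT : T ^ n = 1)
    (hint : IsIntegral ℤ (T.trace / Fintype.card ι)) : T.trace = 0 ∨ ∃ c : ℂ, T = c • 1 := by
  have hι : (Fintype.card ι : ℂ) ≠ 0 := by exact_mod_cast Fintype.card_ne_zero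
  refine or_iff_not_imp_left.2 fun h₀ => ⟨T.trace / Fintype.card ι, ?_⟩
  have sum_mult : ∑ k : ZMod n, (eigenMult T k : ℂ) = Fintype.card ι := by
    exact_mod_cast sum_eigenMult hT
  have sum_eq : ∑ k : ZMod n, ZMod.stdAddChar k * (eigenMult T k : ℂ) =
      T.trace / Fintype.card ι * ∑ k : ZMod n, (eigenMult T k : ℂ) := by
    rw [sum_mult, div_mul_cancel₀ _ hι, trace_eq_sum hT]
  have norm_eq := norm_eq_one_of_isIntegral_of_mul_sum_eq stdAddChar_pow hint (div_ne_zero h₀ hι)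
    sum_eq (by rw [sum_eigenMult hT]; exact Fintype.card_ne_zero)
  generalize T.trace / (Fintype.card ι : ℂ) = c at sum_eq norm_eq ⊢
  rw [← mul_one T, ← sum_eigenProj (n := n) T, Finset.mul_sum, Finset.smul_sum]
  refine Finset.sum_congr rfl fun k _ => ?_
  rw [mul_eigenProj hT]
  by_cases hk : eigenMult T k = 0
  · rw [eq_zero_of_rank_eq_zero hk, smul_zero, smul_zero]
  · rw [eq_of_sum_mul_eq_of_norm_eq_one (fun k => Complex.norm_eq_one_of_pow_eq_one
      (stdAddChar_pow k) (NeZero.ne n)) norm_eq sum_eq hk]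

end BurnsideScalar

section Integrality

lemma dvd_of_isIntegral_div {a b : ℕ} (hb : b ≠ 0) (h : IsIntegral ℤ ((a : ℂ) / b)) : b ∣ a := by
  have hq : IsIntegral ℤ ((a : ℚ) / b) := by
    rw [← isIntegral_algHom_iff ((Algebra.ofId ℚ ℂ).restrictScalars ℤ) (algebraMap ℚ ℂ).injective]
    simpa [Algebra.ofId_apply] using h
  obtain ⟨y, hy⟩ := IsIntegrallyClosed.isIntegral_iff.1 hq
  have hb' : (b : ℚ) ≠ 0 := Nat.cast_ne_zero.2 hb
  rw [eq_div_iff hb', eq_intCast] at hy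
  exact Int.natCast_dvd_natCast.1 ⟨y, by rw [mul_comm]; exact_mod_cast hy.symm⟩

variable {X ι : Type*} [Group X] [Fintype ι] [DecidableEq ι]

lemma isIntegral_traceChar [Finite X] (W : ℂ[X] →ₐ[ℂ] Matrix ι ι ℂ) (x : X) :
    IsIntegral ℤ (traceChar W x) := by
  have : NeZero (Nat.card X) := ⟨Nat.card_pos.ne'⟩
  refine isIntegral_trace (n := Nat.card X) ?_
  rw [← map_pow, ← map_pow, pow_card_eq_one', map_one, map_one]

variable [Nonempty ι] [Finite X] {W : ℂ[X] →ₐ[ℂ] Matrix ι ι ℂ}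

lemma isIntegral_of_map_eq_smul_one {a : ℂ[X]} (ha : ∀ x, IsIntegral ℤ (a.coeff x)) {c : ℂ}
    (hc : W a = c • 1) : IsIntegral ℤ c := by
  cases nonempty_fintype X
  let O := integralClosure ℤ ℂ
  let L : O[X] →ₐ[O] Matrix ι ι ℂ := MonoidAlgebra.lift O _ X ((W : ℂ[X] →* _).comp (of ℂ X))
  let b : O[X] := ∑ x, MonoidAlgebra.single x ⟨a.coeff x, ha x⟩
  have map_b : L b = algebraMap ℂ (Matrix ι ι ℂ) c := by
    rw [Algebra.algebraMap_eq_smul_one, ← hc, eq_sum_coeff_smul_of a]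
    simp only [b, map_sum, L, MonoidAlgebra.lift_single, map_smul]
    rfl
  have integral_over_O : IsIntegral O c := by
    rw [← isIntegral_algHom_iff ((Algebra.ofId ℂ (Matrix ι ι ℂ)).restrictScalars O)
      (algebraMap ℂ (Matrix ι ι ℂ)).injective]
    exact map_b ▸ (IsIntegral.of_finite O b).map L
  exact isIntegral_trans (A := O) c integral_over_O

lemma card_dvd_card_of_surjective (hW : Function.Surjective W) :
    Fintype.card ι ∣ Nat.card X := by
  cases nonempty_fintype X
  have hX : (Nat.card X : ℂ) ≠ 0 := Nat.cast_ne_zero.2 Nat.card_pos.ne'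
  have hι : (Fintype.card ι : ℂ) ≠ 0 := Nat.cast_ne_zero.2 Fintype.card_ne_zero
  refine dvd_of_isIntegral_div Fintype.card_ne_zero <| isIntegral_of_map_eq_smul_one (W := W)
    (a := ((Nat.card X : ℂ) / Fintype.card ι) • charIdem (traceChar W)) (fun x => ?_)
    (by rw [map_smul, map_charIdem_traceChar hW])
  rw [MonoidAlgebra.coeff_smul, Finsupp.smul_apply, charIdem_coeff, traceChar_one, smul_eq_mul,
    ← mul_assoc, div_mul_div_cancel₀ hι, div_self hX, one_mul]
  exact isIntegral_traceChar W _

lemma traceChar_eq_zero_or_exists_eq_smul_one (hW : Function.Surjective W) {g : X}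
    (hg : (Fintype.card ι).Coprime (Subgroup.centralizer {g}).index) :
    traceChar W g = 0 ∨ ∃ c : ℂ, W (of ℂ X g) = c • 1 := by
  classical
  cases nonempty_fintype X
  have : NeZero (Nat.card X) := ⟨Nat.card_pos.ne'⟩
  have hι : (Fintype.card ι : ℂ) ≠ 0 := Nat.cast_ne_zero.2 Fintype.card_ne_zero
  set d := Fintype.card ι
  set k := (Subgroup.centralizer {g}).index
  have central_integral : IsIntegral ℤ (k * traceChar W g / d : ℂ) := by
    refine isIntegral_of_map_eq_smul_one (fun x => ?_) (map_classSum hW g)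
    rw [classSum_coeff]
    split_ifs
    exacts [isIntegral_one, isIntegral_zero]
  have bezout : (d : ℂ) * (d.gcdA k : ℤ) + k * (d.gcdB k : ℤ) = 1 := by
    have := Nat.gcd_eq_gcd_ab d k
    rw [hg.gcd_eq_one] at this
    exact_mod_cast (congrArg (Int.cast : ℤ → ℂ) this).symm
  have ratio_eq : traceChar W g / d =
      traceChar W g * (d.gcdA k : ℤ) + k * traceChar W g / d * (d.gcdB k : ℤ) := by
    field_simp
    linear_combination -traceChar W g * bezout
  refine trace_eq_zero_or_exists_eq_smul_one (n := Nat.card X) ?_ (?_ : IsIntegral ℤ _)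
  · rw [← map_pow, ← map_pow, pow_card_eq_one', map_one, map_one]
  · change IsIntegral ℤ (traceChar W g / d)
    rw [ratio_eq]
    exact ((isIntegral_traceChar W g).mul (isIntegral_intCast _)).add
      (central_integral.mul (isIntegral_intCast _))

end Integrality

section CharDegree

/-- The degree `f 1` of a character `f`, as a natural number. -/
noncomputable def charDegree {X : Type*} [One X] (f : X → ℂ) : ℕ := ⌊(f 1).re⌋₊

variable {X : Type*} [Group X]

lemma charDegree_traceChar {ι : Type*} [Fintype ι] [DecidableEq ι]
    (W : ℂ[X] →ₐ[ℂ] Matrix ι ι ℂ) : charDegree (traceChar W) = Fintype.card ι := by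
  rw [charDegree, traceChar_one, Complex.natCast_re, Nat.floor_natCast]

lemma charDegree_one : charDegree (fun _ : X => 1) = 1 := by
  rw [charDegree, Complex.one_re, Nat.floor_one]

namespace IsIrrChar

variable {f : X → ℂ} (hf : IsIrrChar f)
include hf

lemma exists_rep : ∃ W : ℂ[X] →ₐ[ℂ] Matrix (Fin (charDegree f)) (Fin (charDegree f)) ℂ,
    Function.Surjective W ∧ traceChar W = f := by
  obtain ⟨n, _, W, hW, rfl⟩ := hf
  rw [charDegree_traceChar, Fintype.card_fin]
  exact ⟨W, hW, rfl⟩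

/-- A matrix representation affording the irreducible character `f`. -/
noncomputable def rep : ℂ[X] →ₐ[ℂ] Matrix (Fin (charDegree f)) (Fin (charDegree f)) ℂ :=
  hf.exists_rep.choose

lemma rep_surjective : Function.Surjective hf.rep := hf.exists_rep.choose_spec.1

lemma traceChar_rep : traceChar hf.rep = f := hf.exists_rep.choose_spec.2

lemma trace_rep (x : X) : (hf.rep (of ℂ X x)).trace = f x := congrFun hf.traceChar_rep x

lemma apply_one : f 1 = charDegree f := by
  conv_lhs => rw [← hf.traceChar_rep, traceChar_one, Fintype.card_fin]

lemma charDegree_pos : 0 < charDegree f := by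
  obtain ⟨n, _, W, _, rfl⟩ := hf
  rw [charDegree_traceChar, Fintype.card_fin]
  exact NeZero.pos n

lemma nonempty_fin_charDegree : Nonempty (Fin (charDegree f)) := ⟨⟨0, hf.charDegree_pos⟩⟩

lemma isIntegral [Finite X] (x : X) : IsIntegral ℤ (f x) := by
  rw [← hf.traceChar_rep]
  exact isIntegral_traceChar _ x

lemma apply_conj (x y : X) : f (x * y * x⁻¹) = f y := by
  rw [← hf.traceChar_rep]
  exact traceChar_conj _ x y

lemma charDegree_dvd_card [Finite X] : charDegree f ∣ Nat.card X := by
  have := hf.nonempty_fin_charDegree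
  cases nonempty_fintype X
  simpa only [Fintype.card_fin] using card_dvd_card_of_surjective hf.rep_surjective

lemma sum_apply_inv_mul_self [Fintype X] : ∑ x, f x⁻¹ * f x = Nat.card X := by
  have := hf.nonempty_fin_charDegree
  simpa only [hf.traceChar_rep] using sum_traceChar_inv_mul_self hf.rep_surjective

end IsIrrChar

open Classical in
lemma sum_irrChars_charDegree_mul [Finite X] (x : X) :
    ∑ f ∈ irrChars X, (charDegree f : ℂ) * f x = if x = 1 then (Nat.card X : ℂ) else 0 := by
  classical
  cases nonempty_fintype X
  have regular_trace := sum_irrChars_mul_sum_coeff (of ℂ X x)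
  simp only [MonoidAlgebra.of_apply, MonoidAlgebra.coeff_single, Finsupp.single_apply, ite_mul,
    one_mul, zero_mul, Finset.sum_ite_eq, Finset.mem_univ, if_true, mul_ite, mul_one,
    mul_zero] at regular_trace
  rw [← regular_trace]
  exact Finset.sum_congr rfl fun f hf => by rw [(mem_irrChars.1 hf).apply_one]

lemma sum_irrChars_charDegree_sq [Finite X] :
    ∑ f ∈ irrChars X, charDegree f ^ 2 = Nat.card X := by
  classical
  have := sum_irrChars_charDegree_mul (1 : X)
  rw [if_pos rfl, Finset.sum_congr rfl fun f hf => by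
    rw [(mem_irrChars.1 hf).apply_one, ← sq]] at this
  exact_mod_cast this

variable {Y : Type*} [Group Y]

lemma mapDomainAlgHom_of (φ : Y →* X) (y : Y) :
    MonoidAlgebra.mapDomainAlgHom ℂ ℂ φ (of ℂ Y y) = of ℂ X (φ y) := by
  simp

lemma mapDomainAlgHom_surjective {φ : Y →* X} (hφ : Function.Surjective φ) :
    Function.Surjective (MonoidAlgebra.mapDomainAlgHom ℂ ℂ φ) := by
  intro a
  induction a using MonoidAlgebra.induction_linear with
  | zero => exact ⟨0, map_zero _⟩
  | add a b ha hb =>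
    obtain ⟨a, rfl⟩ := ha
    obtain ⟨b, rfl⟩ := hb
    exact ⟨a + b, map_add _ a b⟩
  | single x r =>
    obtain ⟨y, rfl⟩ := hφ x
    exact ⟨MonoidAlgebra.single y r, by simp⟩

lemma IsIrrChar.comp {f : X → ℂ} (hf : IsIrrChar f) {φ : Y →* X} (hφ : Function.Surjective φ) :
    IsIrrChar fun y => f (φ y) := by
  have := hf.nonempty_fin_charDegree
  convert isIrrChar_traceChar (W := hf.rep.comp (MonoidAlgebra.mapDomainAlgHom ℂ ℂ φ))
    (hf.rep_surjective.comp (mapDomainAlgHom_surjective hφ)) with y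
  rw [traceChar, AlgHom.comp_apply, mapDomainAlgHom_of, hf.trace_rep]

lemma isIrrChar_one : IsIrrChar fun _ : X => 1 := by
  let W : ℂ[X] →ₐ[ℂ] Matrix Unit Unit ℂ := MonoidAlgebra.lift ℂ _ X 1
  have hW : Function.Surjective W := fun B => ⟨B () () • 1, by ext; simp⟩
  convert isIrrChar_traceChar hW with x
  simp [traceChar, W]

lemma isIdempotentElem_average [Fintype X] {A F : Type*} [Ring A] [Algebra ℂ A] [FunLike F X A]
    [MulHomClass F X A] (φ : F) :
    IsIdempotentElem ((Nat.card X : ℂ)⁻¹ • ∑ x, φ x) := by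
  have hX : (Nat.card X : ℂ) ≠ 0 := Nat.cast_ne_zero.2 Nat.card_pos.ne'
  have mul_sum_eq (y : X) : φ y * ∑ x, φ x = ∑ x, φ x := by
    rw [Finset.mul_sum]
    exact Fintype.sum_equiv (Equiv.mulLeft y) _ _ fun x => (map_mul φ y x).symm
  rw [IsIdempotentElem, smul_mul_assoc, mul_smul_comm, Finset.sum_mul,
    Finset.sum_congr rfl fun y _ => mul_sum_eq y, Finset.sum_const, Finset.card_univ,
    ← Nat.card_eq_fintype_card, ← Nat.cast_smul_eq_nsmul ℂ, inv_smul_smul₀ hX]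

lemma exists_nat_sum_traceChar_subgroup {ι : Type*} [Fintype ι] [DecidableEq ι]
    (W : ℂ[X] →ₐ[ℂ] Matrix ι ι ℂ) (C : Subgroup X) [Fintype C] :
    ∃ m : ℕ, ∑ x : C, traceChar W x = m * Nat.card C := by
  have hC : (Nat.card C : ℂ) ≠ 0 := Nat.cast_ne_zero.2 Nat.card_pos.ne'
  let φ : C →* Matrix ι ι ℂ := (W : ℂ[X] →* Matrix ι ι ℂ).comp ((of ℂ X).comp C.subtype)
  refine ⟨((Nat.card C : ℂ)⁻¹ • ∑ x, φ x).rank, ?_⟩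
  rw [← trace_eq_rank_of_isIdempotentElem (isIdempotentElem_average φ),
    Matrix.trace_smul, Matrix.trace_sum, smul_eq_mul, mul_comm, mul_inv_cancel_left₀ hC]
  rfl

end CharDegree

section SimpleGroup

variable {S : Type*} [Group S] [IsSimpleGroup S]

lemma center_eq_bot_of_not_commutative (hna : ¬ ∀ x y : S, Commute x y) :
    Subgroup.center S = ⊥ :=
  (inferInstance : (Subgroup.center S).Normal).eq_bot_or_eq_top.resolve_right fun htop =>
    hna fun x y => Subgroup.mem_center_iff.1 (htop ▸ Subgroup.mem_top y) x

namespace IsIrrChar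

variable [Finite S] {f : S → ℂ} (hf : IsIrrChar f) (hf₁ : f ≠ fun _ => 1)
include hf hf₁

lemma rep_of_injective : Function.Injective fun x => hf.rep (of ℂ S x) := by
  cases nonempty_fintype S
  let ρ : S →* Matrix (Fin (charDegree f)) (Fin (charDegree f)) ℂ :=
    (hf.rep : ℂ[S] →* _).comp (of ℂ S)
  refine (MonoidHom.ker_eq_bot_iff ρ).1 (ρ.normal_ker.eq_bot_or_eq_top.resolve_right fun htop => ?_)
  have f_const (x) : f x = charDegree f := by
    have : hf.rep (of ℂ S x) = 1 := MonoidHom.mem_ker.1 (htop ▸ Subgroup.mem_top x)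
    rw [← hf.trace_rep, this, Matrix.trace_one, Fintype.card_fin]
  have row := hf.sum_apply_inv_mul_self
  simp only [f_const, Finset.sum_const, Finset.card_univ, Nat.card_eq_fintype_card,
    nsmul_eq_mul] at row
  norm_cast at row
  have degree_sq := Nat.eq_of_mul_eq_mul_left Fintype.card_pos (row.trans (mul_one _).symm)
  refine hf₁ (funext fun x => ?_)
  rw [f_const, Nat.eq_one_of_mul_eq_one_right degree_sq, Nat.cast_one]

lemma commute_of_commute_rep {x y : S}
    (h : Commute (hf.rep (of ℂ S x)) (hf.rep (of ℂ S y))) : Commute x y :=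
  hf.rep_of_injective hf₁ <| by simpa only [map_mul] using h.eq

variable (hZ : Subgroup.center S = ⊥)
include hZ

lemma eq_one_of_rep_eq_smul_one {x : S} {c : ℂ} (hx : hf.rep (of ℂ S x) = c • 1) : x = 1 := by
  have : x ∈ Subgroup.center S := Subgroup.mem_center_iff.2 fun y =>
    hf.commute_of_commute_rep hf₁ (hx ▸ (Commute.one_right _).smul_right c)
  rwa [hZ, Subgroup.mem_bot] at this

lemma charDegree_ne_one : charDegree f ≠ 1 := by
  intro hdeg
  have : Unique (Fin (charDegree f)) := by rw [hdeg]; infer_instance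
  obtain ⟨x, hx⟩ := exists_ne (1 : S)
  refine hx (hf.eq_one_of_rep_eq_smul_one hf₁ hZ (c := hf.rep (of ℂ S x) default default) ?_)
  ext i j
  simp [Subsingleton.elim i default, Subsingleton.elim j default]

end IsIrrChar

variable (S) in
lemma exists_isIrrChar_ne_one [Finite S] : ∃ f : S → ℂ, IsIrrChar f ∧ f ≠ fun _ => 1 := by
  by_contra! h
  obtain ⟨x, hx⟩ := exists_ne (1 : S)
  have column := sum_irrChars_charDegree_mul x
  rw [if_neg hx, Finset.sum_eq_single_of_mem _ (mem_irrChars.2 isIrrChar_one) fun f hf hf₁ =>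
    absurd (h f (mem_irrChars.1 hf)) hf₁] at column
  simp [charDegree_one] at column

end SimpleGroup

section SimpleSpectrum

variable {ι : Type*} [Fintype ι] [DecidableEq ι]

open scoped Matrix

omit [DecidableEq ι] in
lemma exists_mul_mul_eq_smul_of_rank_eq_one {P : Matrix ι ι ℂ} (hP : P.rank = 1)
    (A : Matrix ι ι ℂ) : ∃ c : ℂ, P * A * P = c • P := by
  classical
  obtain ⟨w, r, rfl⟩ : ∃ w r : ι → ℂ, P = Matrix.vecMulVec w r := by
    obtain ⟨w, -, hw⟩ := finrank_eq_one_iff'.1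
      (show Module.finrank ℂ (LinearMap.range P.mulVecLin) = 1 from hP)
    choose r hr using hw
    refine ⟨w, fun j => r ⟨P *ᵥ Pi.single j 1, Pi.single j 1, rfl⟩, ?_⟩
    ext i j
    have column_eq := congrArg (fun w => w.1 i) (hr ⟨P *ᵥ Pi.single j 1, Pi.single j 1, rfl⟩)
    simp only [Submodule.coe_smul, Pi.smul_apply, smul_eq_mul] at column_eq
    rw [Matrix.vecMulVec_apply, mul_comm, column_eq, Matrix.mulVec_single_one, Matrix.col_apply]
  refine ⟨r ⬝ᵥ (A *ᵥ w), ?_⟩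
  rw [mul_assoc, Matrix.mul_vecMulVec, Matrix.vecMulVec_mul_vecMulVec, Matrix.vecMulVec_smul]

variable {n : ℕ} [NeZero n] {T : Matrix ι ι ℂ} (hT : T ^ n = 1)
include hT

lemma eigenMult_eq_one (hn : Fintype.card ι = n)
    (htrace : ∀ s : ZMod n, s ≠ 0 → (T ^ s.val).trace = 0) (k : ZMod n) : eigenMult T k = 1 := by
  have trace_eq := trace_eigenProj hT k
  rw [eigenProj, ZMod.dft_apply, Matrix.trace_smul, Matrix.trace_sum,
    Finset.sum_eq_single_of_mem 0 (Finset.mem_univ _) fun s _ hs => by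
      rw [Matrix.trace_smul, htrace s hs, smul_zero]] at trace_eq
  simp only [zero_mul, neg_zero, AddChar.map_zero_eq_one, ZMod.val_zero, pow_zero, one_smul,
    Matrix.trace_one, hn, smul_eq_mul, inv_mul_cancel₀ (NeZero.ne (n : ℂ))] at trace_eq
  exact_mod_cast trace_eq.symm

lemma exists_eq_sum_smul_eigenProj (hmult : ∀ k : ZMod n, eigenMult T k = 1) {A : Matrix ι ι ℂ}
    (hA : Commute A T) : ∃ c : ZMod n → ℂ, A = ∑ k, c k • eigenProj T k := by
  choose c hc using fun k : ZMod n => exists_mul_mul_eq_smul_of_rank_eq_one (hmult k) A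
  refine ⟨c, ?_⟩
  rw [← mul_one A, ← sum_eigenProj (n := n) T, Finset.mul_sum]
  refine Finset.sum_congr rfl fun k _ => ?_
  rw [← hc, ← (commute_eigenProj hA k).eq, mul_assoc, (isIdempotentElem_eigenProj hT k).eq]

lemma commute_of_eigenMult_eq_one (hmult : ∀ k : ZMod n, eigenMult T k = 1)
    {A B : Matrix ι ι ℂ} (hA : Commute A T) (hB : Commute B T) : Commute A B := by
  obtain ⟨c, rfl⟩ := exists_eq_sum_smul_eigenProj hT hmult hB
  exact Commute.sum_right _ _ _ fun k _ => (commute_eigenProj hA k).smul_right _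

end SimpleSpectrum

section PrimeDegree

lemma exists_orderOf_eq_and_sylow_le_centralizer {X : Type*} [Group X] [Finite X] {q : ℕ}
    [hq : Fact q.Prime] (hdvd : q ∣ Nat.card X) :
    ∃ z : X, orderOf z = q ∧ ∃ Q : Sylow q X, (Q : Subgroup X) ≤ Subgroup.centralizer {z} := by
  obtain ⟨Q⟩ := Sylow.nonempty (p := q) (G := X)
  have : Nontrivial Q := by
    rw [← Finite.one_lt_card_iff_nontrivial]
    exact hq.out.one_lt.trans_le (Nat.le_of_dvd Nat.card_pos (Q.dvd_card_of_dvd_card hdvd))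
  have center_nontrivial := Q.isPGroup'.center_nontrivial
  have hcenter : q ∣ Nat.card (Subgroup.center Q) :=
    ((Q.isPGroup'.to_subgroup (Subgroup.center Q)).card_eq_or_dvd).resolve_left
      Finite.one_lt_card.ne'
  obtain ⟨⟨⟨z, hzQ⟩, hzc⟩, hz⟩ := exists_prime_orderOf_dvd_card' q hcenter
  rw [Subgroup.orderOf_mk, Subgroup.orderOf_mk] at hz
  refine ⟨z, hz, Q, fun y hy => Subgroup.mem_centralizer_singleton_iff.2 ?_⟩
  exact congrArg Subtype.val (Subgroup.mem_center_iff.1 hzc ⟨y, hy⟩)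

variable {S : Type*} [Group S] [Finite S] [IsSimpleGroup S] (hZ : Subgroup.center S = ⊥)
  {q : ℕ} [hq : Fact q.Prime] {f : S → ℂ} (hf : IsIrrChar f) (hdeg : charDegree f = q)
include hZ hf hdeg

omit hZ hf [Finite S] [IsSimpleGroup S] in
lemma ne_one_of_charDegree_eq_prime : f ≠ fun _ => 1 := by
  rintro rfl
  exact hq.out.one_lt.ne (charDegree_one.symm.trans hdeg)

lemma IsIrrChar.eq_zero_of_sylow_le_centralizer {Q : Sylow q S} {x : S} (hx : x ≠ 1)
    (hQ : (Q : Subgroup S) ≤ Subgroup.centralizer {x}) : f x = 0 := by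
  have := hf.nonempty_fin_charDegree
  have coprime : (Fintype.card (Fin (charDegree f))).Coprime (Subgroup.centralizer {x}).index := by
    rw [Fintype.card_fin, hdeg, hq.out.coprime_iff_not_dvd]
    exact fun h => Q.not_dvd_index (h.trans (Subgroup.index_dvd_of_le hQ))
  rcases traceChar_eq_zero_or_exists_eq_smul_one hf.rep_surjective coprime with h | ⟨c, hc⟩
  · rwa [hf.traceChar_rep] at h
  · exact absurd
      (hf.eq_one_of_rep_eq_smul_one (ne_one_of_charDegree_eq_prime hdeg) hZ hc) hx

-- The eigenvalues of `z` are simple because `f` vanishes on its nontrivial powers.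
lemma IsIrrChar.commute_of_mem_centralizer {z : S} (hz : orderOf z = q) {Q : Sylow q S}
    (hQ : (Q : Subgroup S) ≤ Subgroup.centralizer {z}) {x y : S}
    (hx : Commute x z) (hy : Commute y z) : Commute x y := by
  have : NeZero q := ⟨hq.out.ne_zero⟩
  have hT : hf.rep (of ℂ S z) ^ q = 1 := by
    rw [← map_pow, ← map_pow, ← hz, pow_orderOf_eq_one, map_one, map_one]
  refine hf.commute_of_commute_rep (ne_one_of_charDegree_eq_prime hdeg)
    (commute_of_eigenMult_eq_one hT (eigenMult_eq_one hT ?_ fun s hs => ?_)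
      ((hx.map (of ℂ S)).map hf.rep) ((hy.map (of ℂ S)).map hf.rep))
  · rw [Fintype.card_fin, hdeg]
  rw [← map_pow, ← map_pow, hf.trace_rep]
  refine hf.eq_zero_of_sylow_le_centralizer hZ hdeg (Q := Q) (fun h => hs ?_) fun y hy => ?_
  · have := orderOf_dvd_of_pow_eq_one h
    rw [hz] at this
    exact (ZMod.val_eq_zero s).1 (Nat.eq_zero_of_dvd_of_lt this (ZMod.val_lt s))
  · have : Commute y z := Subgroup.mem_centralizer_singleton_iff.1 (hQ hy)
    exact Subgroup.mem_centralizer_singleton_iff.2 (this.pow_right _)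

lemma IsIrrChar.card_centralizer_eq {z : S} (hz : orderOf z = q) {Q : Sylow q S}
    (hQ : (Q : Subgroup S) ≤ Subgroup.centralizer {z}) :
    Nat.card (Subgroup.centralizer {z}) = q := by
  cases nonempty_fintype (Subgroup.centralizer {z})
  obtain ⟨m, hm⟩ := exists_nat_sum_traceChar_subgroup hf.rep (Subgroup.centralizer {z})
  have vanish (x : Subgroup.centralizer {z}) (hx : x ≠ 1) : f x = 0 := by
    refine hf.eq_zero_of_sylow_le_centralizer hZ hdeg (Q := Q) (by simpa using hx) fun y hy => ?_
    rw [Subgroup.mem_centralizer_singleton_iff]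
    exact hf.commute_of_mem_centralizer hZ hdeg hz hQ
      (Subgroup.mem_centralizer_singleton_iff.1 (hQ hy))
      (Subgroup.mem_centralizer_singleton_iff.1 x.2)
  rw [hf.traceChar_rep, Finset.sum_eq_single_of_mem 1 (Finset.mem_univ _) fun x _ hx => vanish x hx,
    Subgroup.coe_one, hf.apply_one, hdeg] at hm
  refine ((Nat.dvd_prime hq.out).1 (Dvd.intro_left m (by exact_mod_cast hm.symm))).resolve_left
    fun hone => ?_
  have hzmem : z ∈ Subgroup.centralizer {z} := Subgroup.mem_centralizer_singleton_iff.2 rfl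
  rw [Subgroup.eq_bot_of_card_eq _ hone, Subgroup.mem_bot] at hzmem
  rw [hzmem, orderOf_one] at hz
  exact hq.out.one_lt.ne hz

lemma exists_orderOf_eq_prime_charDegree : ∃ z : S, orderOf z = q ∧
    Nat.card (Subgroup.centralizer {z}) = q ∧
      ∀ f', IsIrrChar f' → charDegree f' = q → f' z = 0 := by
  obtain ⟨z, hz, Q, hQ⟩ := exists_orderOf_eq_and_sylow_le_centralizer
    (hdeg ▸ hf.charDegree_dvd_card)
  refine ⟨z, hz, hf.card_centralizer_eq hZ hdeg hz hQ, fun f' hf' hdeg' =>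
    hf'.eq_zero_of_sylow_le_centralizer hZ hdeg' ?_ hQ⟩
  rintro rfl
  exact hq.out.one_lt.ne (orderOf_one.symm.trans hz)

end PrimeDegree

section PowerSums

variable {n : ℕ} [NeZero n]

lemma pow_zmod_val_neg {S : Type*} [Group S] {z : S} (hz : z ^ n = 1) (s : ZMod n) :
    z ^ (-s).val = (z ^ s.val)⁻¹ := by
  rw [eq_inv_iff_mul_eq_one, ← pow_zmod_val_add hz, neg_add_cancel, ZMod.val_zero, pow_zero]

variable {ι : Type*} [Fintype ι] [DecidableEq ι] {T : Matrix ι ι ℂ} (hT : T ^ n = 1)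
include hT

lemma mul_eigenMult (k : ZMod n) :
    n * (eigenMult T k : ℂ) = ∑ s, ZMod.stdAddChar (-(s * k)) * (T ^ s.val).trace := by
  rw [← trace_eigenProj hT, eigenProj, ZMod.dft_apply, Matrix.trace_smul, Matrix.trace_sum,
    smul_eq_mul, mul_inv_cancel_left₀ (NeZero.ne _)]
  simp only [Matrix.trace_smul, smul_eq_mul]

lemma sum_trace_pow_mul_trace_pow_neg :
    ∑ s : ZMod n, (T ^ s.val).trace * (T ^ (-s).val).trace =
      n * ∑ k : ZMod n, (eigenMult T k : ℂ) ^ 2 := by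
  simp only [trace_pow_eq_sum hT (-_), Finset.mul_sum]
  rw [Finset.sum_comm]
  refine Finset.sum_congr rfl fun k _ => ?_
  rw [sq, ← mul_assoc, mul_eigenMult hT, Finset.sum_mul]
  refine Finset.sum_congr rfl fun s _ => ?_
  rw [mul_neg, mul_comm k, mul_left_comm, mul_assoc]

lemma eq_one_of_eigenMult_eq_zero (h : ∀ k : ZMod n, k ≠ 0 → eigenMult T k = 0) : T = 1 := by
  have proj_eq_zero (k : ZMod n) (hk : k ≠ 0) : eigenProj T k = 0 :=
    eq_zero_of_rank_eq_zero (h k hk)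
  have total := sum_eigenProj (n := n) T
  have pow_one := sum_stdAddChar_smul_eigenProj T (1 : ZMod n)
  rw [Fintype.sum_eq_single 0 proj_eq_zero] at total
  rwa [Fintype.sum_eq_single 0 fun k hk => by rw [proj_eq_zero k hk, smul_zero], zero_mul,
    AddChar.map_zero_eq_one, one_smul, total, pow_zmod_val_one hT, eq_comm] at pow_one

end PowerSums

section CharMult

open Classical in
/-- The multiplicity of `exp(2πik/q)` as an eigenvalue of `z` in a representation affording the
irreducible character `f`; it is `0` when `f` is not an irreducible character, so that one can sum
over all of them. -/
noncomputable def charMult {S : Type*} [Group S] {q : ℕ} [NeZero q] (f : S → ℂ) (z : S)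
    (k : ZMod q) : ℕ :=
  if hf : IsIrrChar f then eigenMult (hf.rep (of ℂ S z)) k else 0

variable {S : Type*} [Group S] {q : ℕ} [NeZero q] {f : S → ℂ} (hf : IsIrrChar f) {z : S}
  (hz : z ^ q = 1)

namespace IsIrrChar

include hf

lemma charMult_eq (z : S) (k : ZMod q) : charMult f z k = eigenMult (hf.rep (of ℂ S z)) k :=
  dif_pos hf

lemma trace_rep_pow (z : S) (t : ℕ) : (hf.rep (of ℂ S z) ^ t).trace = f (z ^ t) := by
  rw [← map_pow, ← map_pow, hf.trace_rep]

include hz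

omit [NeZero q] in
lemma rep_pow_eq_one : hf.rep (of ℂ S z) ^ q = 1 := by
  rw [← map_pow, ← map_pow, hz, map_one, map_one]

lemma sum_charMult : ∑ k : ZMod q, charMult f z k = charDegree f := by
  simp only [hf.charMult_eq, sum_eigenMult (hf.rep_pow_eq_one hz), Fintype.card_fin]

lemma mul_charMult (k : ZMod q) :
    q * (charMult f z k : ℂ) = ∑ s, ZMod.stdAddChar (-(s * k)) * f (z ^ s.val) := by
  rw [hf.charMult_eq, mul_eigenMult (hf.rep_pow_eq_one hz)]
  simp only [hf.trace_rep_pow]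

lemma sum_apply_pow_mul_inv :
    ∑ s : ZMod q, f (z ^ s.val) * f (z ^ s.val)⁻¹ = q * ∑ k : ZMod q, (charMult f z k : ℂ) ^ 2 := by
  simp only [hf.charMult_eq, ← sum_trace_pow_mul_trace_pow_neg (hf.rep_pow_eq_one hz),
    hf.trace_rep_pow, pow_zmod_val_neg hz]

end IsIrrChar

lemma sq_sum_add_emod_mul_le_card_mul_sum_sq {κ : Type*} [Fintype κ] (a : κ → ℤ) :
    (∑ k, a k) ^ 2 + (∑ k, a k) % Fintype.card κ * (Fintype.card κ - (∑ k, a k) % Fintype.card κ) ≤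
      Fintype.card κ * ∑ k, a k ^ 2 := by
  set q : ℤ := (Fintype.card κ : ℤ) with hq
  set N := ∑ k, a k
  set c := N / q
  have division : N = q * c + N % q := (Int.mul_ediv_add_emod N q).symm
  have le_sq : ∑ k, (a k - c) ≤ ∑ k, (a k - c) ^ 2 := Finset.sum_le_sum fun k _ => Int.le_self_sq _
  have sum_sub : ∑ k, (a k - c) = N - q * c := by
    rw [Finset.sum_sub_distrib, Finset.sum_const, Finset.card_univ, nsmul_eq_mul, hq]
  have sum_sub_sq : ∑ k, (a k - c) ^ 2 = ∑ k, a k ^ 2 - 2 * c * N + q * c ^ 2 := by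
    simp only [sub_sq, Finset.sum_add_distrib, Finset.sum_sub_distrib, mul_right_comm (2 : ℤ) _ c,
      ← Finset.mul_sum, Finset.sum_const, Finset.card_univ, nsmul_eq_mul, hq]
    rfl
  rw [sum_sub, sum_sub_sq] at le_sq
  have scaled := mul_le_mul_of_nonneg_left le_sq (Int.natCast_nonneg (Fintype.card κ))
  generalize N % q = r at division
  rw [division] at scaled ⊢
  linarith

lemma sq_sum_le_card_mul_sum_sq_sub_of_not_dvd {κ : Type*} [Fintype κ] {a : κ → ℤ}
    (h : ¬ (Fintype.card κ : ℤ) ∣ ∑ k, a k) :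
    (Fintype.card κ : ℤ) - 1 ≤ Fintype.card κ * ∑ k, a k ^ 2 - (∑ k, a k) ^ 2 := by
  have bound := sq_sum_add_emod_mul_le_card_mul_sum_sq a
  rcases (Fintype.card κ).eq_zero_or_pos with hκ | hκ
  · have : IsEmpty κ := Fintype.card_eq_zero_iff.1 hκ
    simp at h
  · have := Int.emod_nonneg (∑ k, a k) (Int.natCast_ne_zero.2 hκ.ne')
    have := Int.emod_lt_of_pos (∑ k, a k) (Int.natCast_pos.2 hκ)
    have := mt Int.dvd_of_emod_eq_zero h
    generalize (∑ k, a k) % Fintype.card κ = r at *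
    have : 0 ≤ (r - 1) * (Fintype.card κ - 1 - r) := mul_nonneg (by lia) (by lia)
    linarith

end CharMult

section Centralizer

lemma centralizer_pow_of_coprime {S : Type*} [Group S] {z : S} {m : ℕ}
    (hm : m.Coprime (orderOf z)) : Subgroup.centralizer {z ^ m} = Subgroup.centralizer {z} := by
  ext x
  rw [Subgroup.mem_centralizer_singleton_iff, Subgroup.mem_centralizer_singleton_iff]
  refine ⟨fun h => ?_, fun h => Commute.pow_right h m⟩
  obtain ⟨k, hk⟩ := exists_pow_eq_self_of_coprime hm
  exact hk ▸ Commute.pow_right h k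

lemma coprime_val_of_ne_zero {q : ℕ} [hq : Fact q.Prime] {s : ZMod q} (hs : s ≠ 0) :
    s.val.Coprime q :=
  ((Nat.Prime.coprime_iff_not_dvd hq.out).2 fun h => hs <| by
    rw [← ZMod.natCast_zmod_val s, (ZMod.natCast_eq_zero_iff _ _).2 h]).symm

variable {S : Type*} [Group S] [Finite S] {q : ℕ} [hq : Fact q.Prime] {z : S} (hz : orderOf z = q)
include hz

lemma sum_irrChars_sum_pow_mul_inv :
    ∑ f ∈ irrChars S, ∑ s ∈ Finset.univ.erase (0 : ZMod q), f (z ^ s.val) * f (z ^ s.val)⁻¹ =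
      (q - 1) * Nat.card (Subgroup.centralizer {z}) := by
  cases nonempty_fintype S
  rw [Finset.sum_comm]
  have column (s : ZMod q) (hs : s ∈ Finset.univ.erase 0) :
      ∑ f ∈ irrChars S, f (z ^ s.val) * f (z ^ s.val)⁻¹ =
        (Nat.card (Subgroup.centralizer {z}) : ℂ) := by
    rw [sum_irrChars_mul_inv, if_pos (IsConj.refl _), centralizer_pow_of_coprime
      (hz.symm ▸ coprime_val_of_ne_zero (Finset.ne_of_mem_erase hs))]
  rw [Finset.sum_congr rfl column, Finset.sum_const, Finset.card_erase_of_mem (Finset.mem_univ _),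
    Finset.card_univ, ZMod.card, nsmul_eq_mul, Nat.cast_pred hq.out.pos]

-- By Parseval along the powers of `z`, each character contributes `q ∑ mₖ² - (∑ mₖ)²` to the column
-- sums above, which is at least `q - 1` when `q` does not divide its degree.
lemma card_filter_not_dvd_charDegree_le :
    ((irrChars S).filter fun f => ¬ q ∣ charDegree f).card ≤
      Nat.card (Subgroup.centralizer {z}) := by
  have hzq : z ^ q = 1 := hz ▸ pow_orderOf_eq_one z
  let defect (f : S → ℂ) : ℤ :=
    q * ∑ k : ZMod q, (charMult f z k : ℤ) ^ 2 - (∑ k : ZMod q, (charMult f z k : ℤ)) ^ 2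
  have defect_nonneg (f) : 0 ≤ defect f := by
    simpa only [Finset.card_univ, ZMod.card, defect, sub_nonneg] using sq_sum_le_card_mul_sum_sq
      (s := Finset.univ) (f := fun k : ZMod q => (charMult f z k : ℤ))
  have le_defect {f} (hf : IsIrrChar f) (hdvd : ¬ q ∣ charDegree f) : (q : ℤ) - 1 ≤ defect f := by
    rw [← hf.sum_charMult hzq, ← Int.natCast_dvd_natCast, Nat.cast_sum] at hdvd
    simpa only [ZMod.card] using sq_sum_le_card_mul_sum_sq_sub_of_not_dvd
      (a := fun k : ZMod q => (charMult f z k : ℤ)) (by rwa [ZMod.card])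
  have defect_eq {f} (hf : f ∈ irrChars S) : (defect f : ℂ) =
      ∑ s ∈ Finset.univ.erase (0 : ZMod q), f (z ^ s.val) * f (z ^ s.val)⁻¹ := by
    have hf := mem_irrChars.1 hf
    have parseval := hf.sum_apply_pow_mul_inv hzq
    rw [← Finset.add_sum_erase _ _ (Finset.mem_univ 0), ZMod.val_zero, pow_zero, inv_one,
      hf.apply_one, ← hf.sum_charMult hzq] at parseval
    simp only [defect]
    push_cast at parseval ⊢
    rw [← parseval]
    ring
  have sum_defect : ∑ f ∈ irrChars S, defect f =
      ((q : ℤ) - 1) * Nat.card (Subgroup.centralizer {z}) := by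
    have := (Finset.sum_congr rfl fun f hf => defect_eq hf).trans (sum_irrChars_sum_pow_mul_inv hz)
    exact_mod_cast this
  have count := (Finset.card_nsmul_le_sum _ defect _ fun f hf =>
    le_defect (mem_irrChars.1 (Finset.mem_filter.1 hf).1) (Finset.mem_filter.1 hf).2).trans
    (Finset.sum_le_sum_of_subset_of_nonneg (Finset.filter_subset _ _) fun f _ _ => defect_nonneg f)
  rw [sum_defect, nsmul_eq_mul, mul_comm] at count
  exact_mod_cast le_of_mul_le_mul_left count (by have := hq.out.one_lt; lia)

end Centralizer

section FixedPoints

variable {p : ℕ} [Fact p.Prime] {P : Type*} [Group P] (hP : IsPGroup p P)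
  {D : Type*} [MulAction P D]
include hP

lemma dvd_card_orbit_of_notMem_fixedPoints [Finite D] {d : D}
    (hd : d ∉ MulAction.fixedPoints P D) : p ∣ Nat.card (MulAction.orbit P d) := by
  cases nonempty_fintype (MulAction.orbit P d)
  obtain ⟨n, hn⟩ := hP.card_orbit d
  rw [hn]
  refine dvd_pow_self p fun h => hd (MulAction.mem_fixedPoints_iff_card_orbit_eq_one.2 ?_)
  rw [← Nat.card_eq_fintype_card, hn, h, pow_zero]

variable [Fintype D] {w : D → ℕ} (hw : ∀ (x : P) d, w (x • d) = w d)
include hw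

open Classical in
lemma dvd_sum_filter_notMem_fixedPoints :
    p ∣ ∑ d with d ∉ MulAction.fixedPoints P D, w d := by
  rw [Finset.sum_partition (MulAction.orbitRel P D)]
  refine Finset.dvd_sum fun c hc => ?_
  obtain ⟨d, hd, rfl⟩ := Finset.mem_image.1 hc
  rw [Finset.mem_filter] at hd
  have fiber_eq : {e ∈ ({d | d ∉ MulAction.fixedPoints P D} : Finset D) |
      (⟦e⟧ : Quotient (MulAction.orbitRel P D)) = ⟦d⟧} = (MulAction.orbit P d).toFinset := by
    ext e
    simp only [Finset.mem_filter, Finset.mem_univ, true_and, Set.mem_toFinset, Quotient.eq,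
      MulAction.orbitRel_apply, and_iff_right_iff_imp,
      ← MulAction.subsingleton_orbit_iff_mem_fixedPoints]
    intro he
    rw [MulAction.orbit_eq_iff.2 he, MulAction.subsingleton_orbit_iff_mem_fixedPoints]
    exact hd.2
  have w_eq : ∀ e ∈ (MulAction.orbit P d).toFinset, w e = w d := fun e he => by
    obtain ⟨x, rfl⟩ := Set.mem_toFinset.1 he
    exact hw x d
  rw [fiber_eq, Finset.sum_congr rfl w_eq, Finset.sum_const, Set.toFinset_card,
    ← Nat.card_eq_fintype_card, smul_eq_mul]
  exact (dvd_card_orbit_of_notMem_fixedPoints hP hd.2).mul_right _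

lemma exists_mem_fixedPoints_ne_of_dvd_sum (hdvd : p ∣ ∑ d, w d) {a : D}
    (ha : a ∈ MulAction.fixedPoints P D) (hwa : ¬ p ∣ w a) :
    ∃ b ∈ MulAction.fixedPoints P D, b ≠ a ∧ ¬ p ∣ w b := by
  classical
  by_contra! h
  rw [← Finset.sum_filter_add_sum_filter_not _ (· ∈ MulAction.fixedPoints P D), Nat.dvd_add_left
    (dvd_sum_filter_notMem_fixedPoints hP hw), ← Finset.add_sum_erase _ w
    (Finset.mem_filter.2 ⟨Finset.mem_univ a, ha⟩), Nat.dvd_add_left] at hdvd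
  · exact hwa hdvd
  · refine Finset.dvd_sum fun b hb => ?_
    rw [Finset.mem_erase, Finset.mem_filter] at hb
    exact h b hb.2.2 hb.1

end FixedPoints

section ActionOnCharacters

lemma charDegree_comp {X Y : Type*} [Group X] [Group Y] (φ : Y →* X) (f : X → ℂ) :
    charDegree (fun y => f (φ y)) = charDegree f := by
  rw [charDegree, charDegree, map_one]

variable {S : Type*} [Group S] [Finite S] {P : Type*} [Group P] (α : P →* MulAut S)

/-- The action on the irreducible characters of `S` induced by an action `α` on `S`; the inverse
turns precomposition into a left action. -/
@[reducible] noncomputable def irrCharAction : MulAction P (irrChars S) where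
  smul x f := ⟨fun s => f.1 (α x⁻¹ s), mem_irrChars.2 <|
    (mem_irrChars.1 f.2).comp (φ := (α x⁻¹).toMonoidHom) (α x⁻¹).surjective⟩
  one_smul f := Subtype.ext <| funext fun s => show f.1 (α 1⁻¹ s) = f.1 s by
    rw [inv_one, map_one, MulAut.one_apply]
  mul_smul x y f := Subtype.ext <| funext fun s =>
    show f.1 (α (x * y)⁻¹ s) = f.1 (α y⁻¹ (α x⁻¹ s)) by
      rw [mul_inv_rev, map_mul, MulAut.mul_apply]

lemma mem_fixedPoints_irrCharAction {f : irrChars S} :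
    letI := irrCharAction α
    f ∈ MulAction.fixedPoints P (irrChars S) ↔ ∀ x s, f.1 (α x s) = f.1 s := by
  let _ := irrCharAction α
  refine ⟨fun h x s => ?_, fun h x => Subtype.ext <| funext fun s => h x⁻¹ s⟩
  have := congrFun (congrArg Subtype.val (h x⁻¹)) s
  change f.1 (α x⁻¹⁻¹ s) = f.1 s at this
  rwa [inv_inv] at this

lemma charDegree_irrCharAction_smul (x : P) (f : irrChars S) :
    letI := irrCharAction α
    charDegree (x • f).1 = charDegree f.1 :=
  charDegree_comp (α x⁻¹).toMonoidHom f.1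

variable {p : ℕ} [hp : Fact p.Prime] (hP : IsPGroup p P)
include hP

lemma exists_isIrrChar_ne_one_invariant (hS : p ∣ Nat.card S) :
    ∃ f : S → ℂ, IsIrrChar f ∧ f ≠ (fun _ => 1) ∧ ¬ p ∣ charDegree f ∧
      ∀ x s, f (α x s) = f s := by
  let _ := irrCharAction α
  rw [← sum_irrChars_charDegree_sq, ← Finset.sum_coe_sort] at hS
  obtain ⟨f, hfix, hf₁, hdvd⟩ := exists_mem_fixedPoints_ne_of_dvd_sum hP
    (fun x f => by rw [charDegree_irrCharAction_smul]) hS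
    (a := ⟨fun _ => 1, mem_irrChars.2 isIrrChar_one⟩)
    ((mem_fixedPoints_irrCharAction α).2 fun _ _ => rfl)
    (by rw [charDegree_one, one_pow]; exact hp.out.not_dvd_one)
  exact ⟨f.1, mem_irrChars.1 f.2, fun h => hf₁ (Subtype.ext h),
    fun h => hdvd (dvd_pow h two_ne_zero), (mem_fixedPoints_irrCharAction α).1 hfix⟩

-- The nontrivial characters of degree prime to `p` are too few to form an orbit of length `p`.
lemma IsIrrChar.apply_aut_eq_of_not_dvd_charDegree {z : S} (hz : orderOf z = p)
    (hC : Nat.card (Subgroup.centralizer {z}) = p) {f : S → ℂ} (hf : IsIrrChar f)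
    (hdvd : ¬ p ∣ charDegree f) (x : P) (s : S) : f (α x s) = f s := by
  classical
  let _ := irrCharAction α
  by_cases hf₁ : f = fun _ => 1
  · rw [hf₁]
  let one : irrChars S := ⟨fun _ => 1, mem_irrChars.2 isIrrChar_one⟩
  let φ : irrChars S := ⟨f, mem_irrChars.2 hf⟩
  refine (mem_fixedPoints_irrCharAction α (f := φ)).1 ?_ x s
  by_contra hfix
  let small : Finset (irrChars S) := {f | ¬ p ∣ charDegree f.1}
  have card_small : small.card ≤ p := by
    rw [← hC]
    refine le_trans (Finset.card_le_card_of_injOn Subtype.val (fun f hf => ?_)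
      Subtype.val_injective.injOn) (card_filter_not_dvd_charDegree_le hz)
    exact Finset.mem_coe.2 (Finset.mem_filter.2 ⟨f.2, (Finset.mem_filter.1 hf).2⟩)
  have one_mem : one ∈ small :=
    Finset.mem_filter.2 ⟨Finset.mem_univ _, by rw [charDegree_one]; exact hp.out.not_dvd_one⟩
  have orbit_subset : MulAction.orbit P φ ⊆ small.erase one := by
    rintro _ ⟨y, rfl⟩
    refine Finset.mem_coe.2 (Finset.mem_erase.2 ⟨fun h => hf₁ ?_, Finset.mem_filter.2
      ⟨Finset.mem_univ _, ?_⟩⟩)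
    · exact congrArg Subtype.val (eq_inv_smul_iff.2 h : φ = y⁻¹ • one)
    · change ¬ p ∣ charDegree (y • φ).1
      rwa [charDegree_irrCharAction_smul]
  have card_orbit_le := Nat.card_mono (small.erase one).finite_toSet orbit_subset
  have := (MulAction.nonempty_orbit (M := P) φ).to_subtype
  have := Nat.le_of_dvd Nat.card_pos
    (dvd_card_orbit_of_notMem_fixedPoints hP hfix)
  rw [Nat.card_coe_set_eq, Nat.card_coe_set_eq, Set.ncard_coe_finset] at *
  have := Finset.card_erase_lt_of_mem one_mem
  lia

end ActionOnCharacters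

section ColumnProducts

lemma pow_zmod_val_mul {M : Type*} [Monoid M] {n : ℕ} [NeZero n] {T : M} (hT : T ^ n = 1)
    (s t : ZMod n) : (T ^ s.val) ^ t.val = T ^ (s * t).val := by
  rw [ZMod.val_mul, ← pow_mul, ← pow_eq_pow_mod _ hT]

variable {S : Type*} [Group S] {q : ℕ} [hq : Fact q.Prime] {z : S} (hz : orderOf z = q)
include hz

lemma pow_zmod_val_eq_one_iff {s : ZMod q} : z ^ s.val = 1 ↔ s = 0 := by
  rw [← orderOf_dvd_iff_pow_eq_one, hz, ← ZMod.natCast_eq_zero_iff, ZMod.natCast_zmod_val]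

lemma isConj_pow_mul_iff {s : ZMod q} (hs : s ≠ 0) (u : ZMod q) :
    IsConj (z ^ s.val) (z ^ (u * s).val) ↔ IsConj z (z ^ u.val) := by
  have hzq : z ^ q = 1 := hz ▸ pow_orderOf_eq_one z
  refine ⟨fun h => ?_, fun h => ?_⟩
  · have := h.pow s⁻¹.val
    rwa [pow_zmod_val_mul hzq, pow_zmod_val_mul hzq, mul_inv_cancel₀ hs,
      mul_inv_cancel_right₀ hs, pow_zmod_val_one hzq] at this
  · rw [← pow_zmod_val_mul hzq]
    exact h.pow _

variable [Finite S]

open Classical in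
lemma sum_stdAddChar_mul_column {s : ZMod q} (hs : s ≠ 0) (j : ZMod q) :
    ∑ t : ZMod q, ZMod.stdAddChar (t * j) * ∑ f ∈ irrChars S, f (z ^ s.val) * f (z ^ t.val)⁻¹ =
      Nat.card (Subgroup.centralizer {z}) *
        ∑ u : ZMod q with IsConj z (z ^ u.val), ZMod.stdAddChar (s * (u * j)) := by
  cases nonempty_fintype S
  have column (t : ZMod q) : ∑ f ∈ irrChars S, f (z ^ s.val) * f (z ^ t.val)⁻¹ =
      if IsConj (z ^ s.val) (z ^ t.val) then (Nat.card (Subgroup.centralizer {z}) : ℂ) else 0 := by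
    rw [sum_irrChars_mul_inv, centralizer_pow_of_coprime (hz.symm ▸ coprime_val_of_ne_zero hs)]
  rw [Finset.sum_filter, Finset.mul_sum]
  refine (Fintype.sum_equiv (Equiv.mulRight₀ s hs) _ _ fun u => ?_).symm
  simp only [Equiv.mulRight₀_apply, column, isConj_pow_mul_iff hz hs, mul_ite, mul_zero,
    mul_comm (Nat.card _ : ℂ), mul_left_comm s, mul_assoc, ite_mul, zero_mul]

omit hz in
lemma sq_mul_sum_irrChars_charMult_mul_eq_sum_columns (hzq : z ^ q = 1) (i j : ZMod q) :
    (q : ℂ) ^ 2 * ∑ f ∈ irrChars S, (charMult f z i * charMult f z j : ℂ) =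
      ∑ s : ZMod q, ZMod.stdAddChar (-(s * i)) * ∑ t : ZMod q, ZMod.stdAddChar (t * j) *
        ∑ f ∈ irrChars S, f (z ^ s.val) * f (z ^ t.val)⁻¹ := by
  have mul_charMult {f : S → ℂ} (hf : IsIrrChar f) :
      (q * charMult f z j : ℂ) = ∑ t : ZMod q, ZMod.stdAddChar (t * j) * f (z ^ t.val)⁻¹ := by
    rw [hf.mul_charMult hzq]
    refine Fintype.sum_equiv (Equiv.neg _) _ _ fun s => ?_
    rw [Equiv.neg_apply, pow_zmod_val_neg hzq, inv_inv, neg_mul]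
  have product {f : S → ℂ} (hf : f ∈ irrChars S) :
      (q : ℂ) ^ 2 * (charMult f z i * charMult f z j : ℂ) = ∑ s : ZMod q, ∑ t : ZMod q,
        ZMod.stdAddChar (-(s * i)) * (ZMod.stdAddChar (t * j) *
          (f (z ^ s.val) * f (z ^ t.val)⁻¹)) := by
    have hf := mem_irrChars.1 hf
    rw [sq, mul_mul_mul_comm, hf.mul_charMult hzq, mul_charMult hf, Finset.sum_mul_sum]
    refine Finset.sum_congr rfl fun s _ => Finset.sum_congr rfl fun t _ => ?_
    ring
  rw [Finset.mul_sum, Finset.sum_congr rfl fun f hf => product hf, Finset.sum_comm]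
  refine Finset.sum_congr rfl fun s _ => ?_
  rw [Finset.sum_comm]
  simp only [Finset.mul_sum]

lemma sum_stdAddChar_mul_column_zero (j : ZMod q) :
    ∑ t : ZMod q, ZMod.stdAddChar (t * j) *
      ∑ f ∈ irrChars S, f (z ^ (0 : ZMod q).val) * f (z ^ t.val)⁻¹ = Nat.card S := by
  have column (t : ZMod q) : ∑ f ∈ irrChars S, f (z ^ (0 : ZMod q).val) * f (z ^ t.val)⁻¹ =
      if t = 0 then (Nat.card S : ℂ) else 0 := by
    rw [← Finset.sum_congr rfl fun f hf => show (charDegree f : ℂ) * f (z ^ t.val)⁻¹ = _ by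
      rw [ZMod.val_zero, pow_zero, (mem_irrChars.1 hf).apply_one], sum_irrChars_charDegree_mul]
    simp only [inv_eq_one, pow_zmod_val_eq_one_iff hz]
  rw [Fintype.sum_eq_single 0 fun t ht => by rw [column, if_neg ht, mul_zero], column, if_pos rfl,
    zero_mul, AddChar.map_zero_eq_one, one_mul]

open Classical in
lemma sq_mul_sum_irrChars_charMult_mul (hC : Nat.card (Subgroup.centralizer {z}) = q)
    (i j : ZMod q) :
    (q : ℤ) ^ 2 * ∑ f ∈ irrChars S, (charMult f z i * charMult f z j : ℤ) = Nat.card S +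
      q * ∑ u : ZMod q with IsConj z (z ^ u.val), ((if u * j = i then (q : ℤ) else 0) - 1) := by
  have orthogonality (u : ZMod q) : ∑ s ∈ Finset.univ.erase (0 : ZMod q),
      ZMod.stdAddChar (-(s * i)) * ZMod.stdAddChar (s * (u * j)) =
        (if u * j = i then (q : ℂ) else 0) - 1 := by
    have shift (s : ZMod q) : -(s * i) + s * (u * j) = s * (u * j - i) := by ring
    have total := AddChar.sum_mulShift (u * j - i) (ZMod.isPrimitive_stdAddChar q)
    simp only [← Finset.add_sum_erase _ _ (Finset.mem_univ (0 : ZMod q)), zero_mul,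
      AddChar.map_zero_eq_one, sub_eq_zero, ZMod.card, ← eq_sub_iff_add_eq'] at total
    simp only [← AddChar.map_add_eq_mul, shift, total, Nat.cast_ite, Nat.cast_zero]
  have : (q : ℂ) ^ 2 * ∑ f ∈ irrChars S, (charMult f z i * charMult f z j : ℂ) = Nat.card S +
      q * ∑ u : ZMod q with IsConj z (z ^ u.val), ((if u * j = i then (q : ℂ) else 0) - 1) := by
    rw [sq_mul_sum_irrChars_charMult_mul_eq_sum_columns (hz ▸ pow_orderOf_eq_one z),
      ← Finset.add_sum_erase _ _ (Finset.mem_univ 0), sum_stdAddChar_mul_column_zero hz, zero_mul,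
      neg_zero, AddChar.map_zero_eq_one, one_mul]
    congr 1
    simp only [← orthogonality]
    rw [Finset.sum_comm, Finset.mul_sum]
    refine Finset.sum_congr rfl fun s hs => ?_
    rw [sum_stdAddChar_mul_column hz (Finset.ne_of_mem_erase hs), hC, mul_left_comm, Finset.mul_sum]
  exact_mod_cast this

lemma sum_irrChars_charMult_sub_sq_le_two (hC : Nat.card (Subgroup.centralizer {z}) = q)
    {i j : ZMod q} (hi : i ≠ 0) (hj : j ≠ 0) (hij : i ≠ j) :
    ∑ f ∈ irrChars S, (charMult f z i - charMult f z j : ℤ) ^ 2 ≤ 2 := by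
  classical
  let v (u : ZMod q) : ℤ := (if u * i = i then 1 else 0) - (if u * j = i then 1 else 0) -
    (if u * i = j then 1 else 0) + (if u * j = j then 1 else 0)
  have v_le (u : ZMod q) : v u ≤ if u = 1 then 2 else 0 := by
    have fix_iff {k : ZMod q} (hk : k ≠ 0) : u * k = k ↔ u = 1 := mul_eq_right₀ hk
    simp only [v, fix_iff hi, fix_iff hj]
    split_ifs <;> simp_all
  have scaled : (q : ℤ) ^ 2 * ∑ f ∈ irrChars S, (charMult f z i - charMult f z j : ℤ) ^ 2 =
      q ^ 2 * ∑ u : ZMod q with IsConj z (z ^ u.val), v u := by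
    have square (f : S → ℂ) : (charMult f z i - charMult f z j : ℤ) ^ 2 =
        charMult f z i * charMult f z i - charMult f z i * charMult f z j -
          charMult f z j * charMult f z i + charMult f z j * charMult f z j := by ring
    have v_eq (u : ZMod q) : q * v u = ((if u * i = i then (q : ℤ) else 0) - 1) -
        ((if u * j = i then (q : ℤ) else 0) - 1) - ((if u * i = j then (q : ℤ) else 0) - 1) +
          ((if u * j = j then (q : ℤ) else 0) - 1) := by
      simp only [v]
      split_ifs <;> ring
    rw [Finset.sum_congr rfl fun f _ => square f, Finset.sum_add_distrib, Finset.sum_sub_distrib,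
      Finset.sum_sub_distrib, mul_add, mul_sub, mul_sub]
    simp only [sq_mul_sum_irrChars_charMult_mul hz hC]
    rw [sq (q : ℤ), mul_assoc, Finset.mul_sum _ v, Finset.sum_congr rfl fun u _ => v_eq u]
    simp only [Finset.sum_add_distrib, Finset.sum_sub_distrib]
    ring
  have hq₀ : (0 : ℤ) < q ^ 2 := pow_pos (Int.natCast_pos.2 hq.out.pos) 2
  rw [mul_right_inj' hq₀.ne'] at scaled
  rw [scaled]
  calc ∑ u : ZMod q with IsConj z (z ^ u.val), v u
    _ ≤ ∑ u : ZMod q with IsConj z (z ^ u.val), if u = 1 then 2 else 0 :=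
      Finset.sum_le_sum fun u _ => v_le u
    _ ≤ ∑ u : ZMod q, if u = 1 then 2 else 0 :=
      Finset.sum_le_sum_of_subset_of_nonneg (Finset.filter_subset _ _) fun u _ _ => by
        split_ifs <;> norm_num
    _ = 2 := by rw [Finset.sum_ite_eq' _ _ _, if_pos (Finset.mem_univ _)]

lemma mul_sum_irrChars_charDegree_mul_charMult (i : ZMod q) :
    q * ∑ f ∈ irrChars S, charDegree f * charMult f z i = Nat.card S := by
  have mul_charMult {f : S → ℂ} (hf : f ∈ irrChars S) :
      (q : ℂ) * (charDegree f * charMult f z i) =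
        ∑ s : ZMod q, ZMod.stdAddChar (-(s * i)) * (charDegree f * f (z ^ s.val)) := by
    rw [mul_left_comm, (mem_irrChars.1 hf).mul_charMult (hz ▸ pow_orderOf_eq_one z), Finset.mul_sum]
    exact Finset.sum_congr rfl fun s _ => mul_left_comm _ _ _
  have : (q : ℂ) * ∑ f ∈ irrChars S, (charDegree f * charMult f z i : ℂ) = Nat.card S := by
    rw [Finset.mul_sum, Finset.sum_congr rfl fun f hf => mul_charMult hf, Finset.sum_comm]
    simp only [← Finset.mul_sum, sum_irrChars_charDegree_mul, pow_zmod_val_eq_one_iff hz]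
    rw [Fintype.sum_eq_single 0 fun s hs => by rw [if_neg hs, mul_zero], if_pos rfl, zero_mul,
      neg_zero, AddChar.map_zero_eq_one, one_mul]
  exact_mod_cast this

lemma IsIrrChar.charMult_eq_or_charMult_eq (hC : Nat.card (Subgroup.centralizer {z}) = q)
    {f f' : S → ℂ} (hf : IsIrrChar f) (hf' : IsIrrChar f') (hdeg : charDegree f ≠ charDegree f')
    {i j : ZMod q} (hi : i ≠ 0) (hj : j ≠ 0) :
    charMult f z i = charMult f z j ∨ charMult f' z i = charMult f' z j := by
  classical
  by_contra! hne
  have hij : i ≠ j := fun h => hne.1 (by rw [h])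
  let d (g : S → ℂ) : ℤ := charMult g z i - charMult g z j
  have d_ne : d f ≠ 0 := sub_ne_zero.2 (Nat.cast_injective.ne hne.1)
  have d_ne' : d f' ≠ 0 := sub_ne_zero.2 (Nat.cast_injective.ne hne.2)
  have bound : ∑ g ∈ irrChars S, d g ^ 2 ≤ 2 := sum_irrChars_charMult_sub_sq_le_two hz hC hi hj hij
  have relation : ∑ g ∈ irrChars S, (charDegree g : ℤ) * d g = 0 := by
    have column := (mul_sum_irrChars_charDegree_mul_charMult hz i).trans
      (mul_sum_irrChars_charDegree_mul_charMult hz j).symm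
    have column := Nat.eq_of_mul_eq_mul_left hq.out.pos column
    simp only [d, mul_sub, Finset.sum_sub_distrib, sub_eq_zero]
    exact_mod_cast column
  have hf_mem := mem_irrChars.2 hf
  have hf'_mem : f' ∈ (irrChars S).erase f :=
    Finset.mem_erase.2 ⟨fun h => hdeg (by rw [h]), mem_irrChars.2 hf'⟩
  rw [← Finset.add_sum_erase _ _ hf_mem, ← Finset.add_sum_erase _ _ hf'_mem] at bound relation
  have rest_nonneg := Finset.sum_nonneg fun g (_ : g ∈ ((irrChars S).erase f).erase f') =>
    sq_nonneg (d g)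
  have one_le_sq {x : ℤ} (hx : x ≠ 0) : 1 ≤ x ^ 2 := Int.add_one_le_iff.2 (sq_pos_of_ne_zero hx)
  have := one_le_sq d_ne
  have := one_le_sq d_ne'
  have rest_eq_zero := (Finset.sum_eq_zero_iff_of_nonneg fun g _ => sq_nonneg (d g)).1
    (le_antisymm (by linarith) rest_nonneg)
  rw [Finset.sum_eq_zero fun g hg => by rw [pow_eq_zero_iff two_ne_zero |>.1 (rest_eq_zero g hg),
    mul_zero], add_zero] at relation
  have d_sq : d f ^ 2 = 1 := by linarith
  have d_sq' : d f' ^ 2 = 1 := by linarith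
  have := hf.charDegree_pos
  have := hf'.charDegree_pos
  rcases sq_eq_one_iff.1 d_sq with h | h <;> rcases sq_eq_one_iff.1 d_sq' with h' | h' <;>
    rw [h, h'] at relation <;> lia

end ColumnProducts

section PrimeDegrees

variable {S : Type*} [Group S] [Finite S]

lemma not_forall_eq_zero_or_dvd_charDegree {z : S} (hz : z ≠ 1) {r : ℕ} (hr : r.Prime) :
    ¬ ∀ f, IsIrrChar f → (f ≠ fun _ : S => 1) → f z = 0 ∨ r ∣ charDegree f := by
  classical
  intro h
  have hr₀ : (r : ℂ) ≠ 0 := Nat.cast_ne_zero.2 hr.ne_zero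
  let others := (irrChars S).erase fun _ => 1
  have relation := sum_irrChars_charDegree_mul z
  rw [if_neg hz, ← Finset.add_sum_erase _ _ (mem_irrChars.2 isIrrChar_one), charDegree_one,
    Nat.cast_one, mul_one] at relation
  have term (f) (hf : f ∈ others) :
      (charDegree f : ℂ) * f z = r * ((charDegree f / r : ℕ) * f z) := by
    rw [Finset.mem_erase, mem_irrChars] at hf
    rcases h f hf.2 hf.1 with hzero | hdvd
    · simp only [hzero, mul_zero]
    · rw [← mul_assoc, ← Nat.cast_mul, Nat.mul_div_cancel' hdvd]
  rw [Finset.sum_congr rfl term, ← Finset.mul_sum] at relation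
  have integral : IsIntegral ℤ (∑ f ∈ others, ((charDegree f / r : ℕ) : ℂ) * f z) :=
    IsIntegral.sum _ fun f hf => (isIntegral_natCast _).mul
      ((mem_irrChars.1 (Finset.mem_of_mem_erase hf)).isIntegral z)
  have inv_eq : ((1 : ℕ) : ℂ) / r = -∑ f ∈ others, ((charDegree f / r : ℕ) : ℂ) * f z := by
    rw [div_eq_iff hr₀, Nat.cast_one]
    linear_combination relation
  exact hr.one_lt.ne' (Nat.dvd_one.1 (dvd_of_isIntegral_div hr.ne_zero (inv_eq ▸ integral.neg)))

lemma ne_pred_of_prime_of_prime {q r l : ℕ} (hq : q.Prime) (hr : r.Prime) (hl : l.Prime)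
    (hlq : l < q) (hrl : r ≠ l) : r ≠ q - 1 := by
  have := hr.two_le
  have := hl.two_le
  rcases hq.eq_two_or_odd with _ | _ <;> rcases hr.eq_two_or_odd with _ | _ <;> lia

variable [IsSimpleGroup S]

lemma IsIrrChar.exists_charMult_ne {f : S → ℂ} (hf : IsIrrChar f) (hf₁ : f ≠ fun _ => 1) {q : ℕ}
    [hq : Fact q.Prime] {z : S} (hz : orderOf z = q) (hlt : charDegree f < q)
    (hne : charDegree f ≠ q - 1) :
    ∃ i j : ZMod q, i ≠ 0 ∧ j ≠ 0 ∧ charMult f z i ≠ charMult f z j := by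
  have hzq : z ^ q = 1 := hz ▸ pow_orderOf_eq_one z
  by_contra! hconst
  have eq_one {i : ZMod q} (hi : i ≠ 0) : charMult f z i = charMult f z 1 :=
    hconst i 1 hi one_ne_zero
  have charMult_one_ne : charMult f z (1 : ZMod q) ≠ 0 := by
    intro h₀
    have rep_z : hf.rep (of ℂ S z) = 1 := eq_one_of_eigenMult_eq_zero (hf.rep_pow_eq_one hzq)
      fun i hi => by rw [← hf.charMult_eq, eq_one hi, h₀]
    have z_eq : z = 1 := hf.rep_of_injective hf₁ (by simp only [rep_z, map_one])
    rw [z_eq, orderOf_one] at hz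
    exact hq.out.one_lt.ne hz
  have total := hf.sum_charMult hzq
  rw [← Finset.add_sum_erase _ _ (Finset.mem_univ (0 : ZMod q)),
    Finset.sum_congr rfl fun i hi => eq_one (Finset.ne_of_mem_erase hi), Finset.sum_const,
    Finset.card_erase_of_mem (Finset.mem_univ _), Finset.card_univ, ZMod.card, smul_eq_mul] at total
  have := Nat.le_mul_of_pos_right (q - 1) (Nat.pos_of_ne_zero charMult_one_ne)
  lia

lemma IsIrrChar.charDegree_eq_of_lt {q : ℕ} [hq : Fact q.Prime] {z : S} (hz : orderOf z = q)
    (hC : Nat.card (Subgroup.centralizer {z}) = q) {f f' : S → ℂ} (hf : IsIrrChar f)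
    (hf' : IsIrrChar f') (hp : (charDegree f).Prime) (hp' : (charDegree f').Prime)
    (hlt : charDegree f < q) (hlt' : charDegree f' < q) : charDegree f = charDegree f' := by
  by_contra hne
  have separated {i j : ZMod q} (hi : i ≠ 0) (hj : j ≠ 0) :=
    hf.charMult_eq_or_charMult_eq hz hC hf' hne hi hj
  have : Fact (charDegree f).Prime := ⟨hp⟩
  have : Fact (charDegree f').Prime := ⟨hp'⟩
  obtain ⟨i, j, hi, hj, hij⟩ := hf.exists_charMult_ne (ne_one_of_charDegree_eq_prime rfl) hz hlt
    (ne_pred_of_prime_of_prime hq.out hp hp' hlt' hne)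
  obtain ⟨k, l, hk, hl, hkl⟩ := hf'.exists_charMult_ne (ne_one_of_charDegree_eq_prime rfl) hz hlt'
    (ne_pred_of_prime_of_prime hq.out hp' hp hlt (Ne.symm hne))
  have := separated hi hj
  have := separated hk hl
  have := separated hi hk
  have := separated hj hk
  have := separated hi hl
  have := separated hj hl
  lia

lemma exists_prime_charDegree_not_dvd_charDegree (hZ : Subgroup.center S = ⊥)
    (h : ∃ f : S → ℂ, IsIrrChar f ∧ (charDegree f).Prime) :
    ∃ f f' : S → ℂ, IsIrrChar f ∧ f ≠ (fun _ => 1) ∧ ¬ (charDegree f).Prime ∧ IsIrrChar f' ∧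
      (charDegree f').Prime ∧ ¬ charDegree f' ∣ charDegree f := by
  classical
  by_contra! hdvd
  obtain ⟨f₀, hf₀, le_max⟩ := Finset.exists_max_image {f ∈ irrChars S | (charDegree f).Prime}
    charDegree (h.imp fun f hf => Finset.mem_filter.2 ⟨mem_irrChars.2 hf.1, hf.2⟩)
  rw [Finset.mem_filter, mem_irrChars] at hf₀
  have : Fact (charDegree f₀).Prime := ⟨hf₀.2⟩
  obtain ⟨z, hz, hC, vanish⟩ := exists_orderOf_eq_prime_charDegree hZ hf₀.1 rfl
  have hz₁ : z ≠ 1 := fun h => hf₀.2.one_lt.ne (by rw [← hz, h, orderOf_one])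
  have lt_of_ne {f : S → ℂ} (hf : IsIrrChar f) (hp : (charDegree f).Prime)
      (hne : charDegree f ≠ charDegree f₀) : charDegree f < charDegree f₀ :=
    lt_of_le_of_ne (le_max f (Finset.mem_filter.2 ⟨mem_irrChars.2 hf, hp⟩)) hne
  by_cases! hex : ∃ f : S → ℂ, IsIrrChar f ∧ (charDegree f).Prime ∧ charDegree f ≠ charDegree f₀
  · obtain ⟨f, hf, hp, hne⟩ := hex
    refine not_forall_eq_zero_or_dvd_charDegree hz₁ hp fun g hg hg₁ => ?_
    by_cases hgp : (charDegree g).Prime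
    · by_cases hgne : charDegree g = charDegree f₀
      · exact Or.inl (vanish g hg hgne)
      · exact Or.inr (hf.charDegree_eq_of_lt hz hC hg hp hgp (lt_of_ne hf hp hne)
          (lt_of_ne hg hgp hgne)).dvd
    · exact Or.inr (hdvd g f hg hg₁ hgp hf hp)
  · refine not_forall_eq_zero_or_dvd_charDegree hz₁ hf₀.2 fun g hg hg₁ => ?_
    by_cases hgp : (charDegree g).Prime
    · exact Or.inl (vanish g hg (hex g hg hgp))
    · exact Or.inr (hdvd g f₀ hg hg₁ hgp hf₀.1 hf₀.2)

end PrimeDegrees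

section MatrixUnits

variable {ι κ : Type*} [Fintype ι] [DecidableEq ι] [Fintype κ]

lemma exists_trace_map_one_eq_card_mul (Ψ : Matrix ι ι ℂ →ₗ[ℂ] Matrix κ κ ℂ)
    (hΨ : ∀ A B, Ψ (A * B) = Ψ A * Ψ B) : ∃ n : ℕ, (Ψ 1).trace = Fintype.card ι * n := by
  classical
  rcases isEmpty_or_nonempty ι with _ | ⟨⟨i₀⟩⟩
  · exact ⟨0, by simp [Subsingleton.elim (1 : Matrix ι ι ℂ) 0]⟩
  have trace_eq (i : ι) :
      (Ψ (Matrix.single i i 1)).trace = (Ψ (Matrix.single i₀ i₀ 1)).trace := by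
    have left : Matrix.single i i (1 : ℂ) = Matrix.single i i₀ 1 * Matrix.single i₀ i 1 := by simp
    have right : Matrix.single i₀ i₀ (1 : ℂ) = Matrix.single i₀ i 1 * Matrix.single i i₀ 1 := by
      simp
    rw [left, right, hΨ, hΨ, Matrix.trace_mul_comm]
  have idem : IsIdempotentElem (Ψ (Matrix.single i₀ i₀ 1)) := by
    rw [IsIdempotentElem, ← hΨ, Matrix.single_mul_single_same, mul_one]
  refine ⟨(Ψ (Matrix.single i₀ i₀ 1)).rank, ?_⟩
  rw [← trace_eq_rank_of_isIdempotentElem idem, ← Matrix.sum_single_one, map_sum, Matrix.trace_sum,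
    Finset.sum_congr rfl fun i _ => trace_eq i, Finset.sum_const, Finset.card_univ, nsmul_eq_mul]

end MatrixUnits

section CentralIdempotents

variable {X Y : Type*} [Group X] [Group Y]

lemma IsIrrChar.isIdempotentElem_charIdem [Fintype X] {f : X → ℂ} (hf : IsIrrChar f) :
    IsIdempotentElem (charIdem f) := by
  obtain ⟨n, d, _, ⟨e⟩⟩ := exists_wedderburn X
  obtain ⟨i, rfl⟩ := (isIrrChar_iff_exists_blockHom e).1 hf
  rw [IsIdempotentElem, charIdem_traceChar_blockHom, ← map_mul, pi_single_one_mul,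
    Pi.single_eq_same]

lemma IsIrrChar.charIdem_mul_charIdem_of_ne [Fintype X] {f f' : X → ℂ} (hf : IsIrrChar f)
    (hf' : IsIrrChar f') (hff' : f ≠ f') : charIdem f * charIdem f' = 0 := by
  obtain ⟨n, d, _, ⟨e⟩⟩ := exists_wedderburn X
  obtain ⟨i, rfl⟩ := (isIrrChar_iff_exists_blockHom e).1 hf
  obtain ⟨j, rfl⟩ := (isIrrChar_iff_exists_blockHom e).1 hf'
  have hij : i ≠ j := fun h => hff' (h ▸ rfl)
  rw [charIdem_traceChar_blockHom, charIdem_traceChar_blockHom, ← map_mul, pi_single_one_mul,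
    Pi.single_eq_of_ne hij, Pi.single_zero, map_zero]

lemma mapDomainAlgHom_charIdem [Fintype X] [Fintype Y] (φ : X ≃* Y) (f : X → ℂ) :
    MonoidAlgebra.mapDomainAlgHom ℂ ℂ φ.toMonoidHom (charIdem f) =
      charIdem fun y => f (φ.symm y) := by
  simp only [charIdem, map_sum, map_smul, mapDomainAlgHom_of, map_one, Nat.card_congr φ.toEquiv]
  exact Fintype.sum_equiv φ.toEquiv _ _ fun x => by simp

namespace IsIrrChar

variable {f : X → ℂ} (hf : IsIrrChar f)

/-- Fourier inversion: the linear section of `hf.rep` onto the block of `ℂ[X]` on which `hf.rep` is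
injective. -/
noncomputable def repSection [Fintype X] :
    Matrix (Fin (charDegree f)) (Fin (charDegree f)) ℂ →ₗ[ℂ] ℂ[X] :=
  ∑ x, (LinearMap.toSpanSingleton ℂ ℂ[X] (of ℂ X x)) ∘ₗ
    ((charDegree f / Nat.card X : ℂ) •
      Matrix.traceLinearMap _ ℂ ℂ ∘ₗ LinearMap.mulLeft ℂ (hf.rep (of ℂ X x⁻¹)))

include hf

lemma repSection_coeff [Fintype X] (A : Matrix (Fin (charDegree f)) (Fin (charDegree f)) ℂ)
    (x : X) : (hf.repSection A).coeff x =
      charDegree f / Nat.card X * (hf.rep (of ℂ X x⁻¹) * A).trace := by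
  simp only [repSection, LinearMap.sum_apply, LinearMap.comp_apply,
    LinearMap.toSpanSingleton_apply]
  exact coeff_sum_smul_of _ x

lemma repSection_rep [Fintype X] (a : ℂ[X]) : hf.repSection (hf.rep a) = charIdem f * a := by
  conv => rw [eq_sum_coeff_smul_of a]
  simp only [map_sum, map_smul, Finset.mul_sum, mul_smul_comm]
  refine Finset.sum_congr rfl fun y _ => congrArg _ (MonoidAlgebra.ext (Finsupp.ext fun x => ?_))
  rw [repSection_coeff, ← map_mul, ← map_mul, hf.trace_rep, MonoidAlgebra.of_apply,
    MonoidAlgebra.coeff_mul_single_apply, charIdem_coeff, mul_one, hf.apply_one, mul_inv_rev,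
    inv_inv, ← hf.apply_conj y (x⁻¹ * y)]
  group

lemma repSection_mul [Fintype X] (A B : Matrix (Fin (charDegree f)) (Fin (charDegree f)) ℂ) :
    hf.repSection (A * B) = hf.repSection A * hf.repSection B := by
  obtain ⟨a, rfl⟩ := hf.rep_surjective A
  obtain ⟨b, rfl⟩ := hf.rep_surjective B
  rw [← map_mul, repSection_rep, repSection_rep, repSection_rep,
    (hf.commute_charIdem a).symm.mul_mul_mul_comm, hf.isIdempotentElem_charIdem.eq]

lemma repSection_one [Fintype X] : hf.repSection 1 = charIdem f := by
  rw [← map_one hf.rep, repSection_rep, mul_one]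

lemma sum_rep_mul_mul_rep_inv [Fintype X]
    (A : Matrix (Fin (charDegree f)) (Fin (charDegree f)) ℂ) :
    ∑ x, hf.rep (of ℂ X x) * A * hf.rep (of ℂ X x⁻¹) =
      (Nat.card X * A.trace / charDegree f : ℂ) • 1 := by
  have hd : (charDegree f : ℂ) ≠ 0 := Nat.cast_ne_zero.2 hf.charDegree_pos.ne'
  have commute_of (x : X) :
      Commute (hf.rep (of ℂ X x)) (∑ x, hf.rep (of ℂ X x) * A * hf.rep (of ℂ X x⁻¹)) := by
    rw [Commute, SemiconjBy, Finset.mul_sum, Finset.sum_mul]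
    refine Fintype.sum_equiv (Equiv.mulLeft x) _ _ fun y => ?_
    rw [Equiv.coe_mulLeft, mul_assoc _ _ (hf.rep (of ℂ X x)), ← map_mul hf.rep (of ℂ X (x * y)⁻¹),
      ← map_mul, mul_inv_rev, inv_mul_cancel_right, map_mul, map_mul]
    simp only [mul_assoc]
  obtain ⟨c, hc⟩ := exists_eq_smul_one_of_forall_commute
    (A := ∑ x, hf.rep (of ℂ X x) * A * hf.rep (of ℂ X x⁻¹)) fun B => by
      obtain ⟨b, rfl⟩ := hf.rep_surjective B
      rw [eq_sum_coeff_smul_of b, map_sum]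
      exact Commute.sum_left _ _ _ fun x _ => by
        rw [map_smul]
        exact (commute_of x).smul_left _
  have trace_eq := congrArg Matrix.trace hc
  rw [Matrix.trace_sum, Finset.sum_congr rfl fun x _ => by
    rw [Matrix.trace_mul_comm, ← mul_assoc, ← map_mul, ← map_mul, inv_mul_cancel, map_one,
      map_one, one_mul], Matrix.trace_smul, Matrix.trace_one, Fintype.card_fin, Finset.sum_const,
    Finset.card_univ, nsmul_eq_mul, ← Nat.card_eq_fintype_card, smul_eq_mul] at trace_eq
  rw [hc, trace_eq, mul_div_cancel_right₀ _ hd]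

end IsIrrChar

end CentralIdempotents

section CliffordTheory

variable {G : Type*} [Group G] (M : Subgroup G)

/-- The inclusion `ℂ[M] → ℂ[G]` of group algebras. -/
noncomputable abbrev inclAlgHom : ℂ[M] →ₐ[ℂ] ℂ[G] :=
  MonoidAlgebra.mapDomainAlgHom ℂ ℂ M.subtype

variable {M}

lemma of_mul_inclAlgHom_mul_of_inv [M.Normal] (g : G) (a : ℂ[M]) :
    of ℂ G g * inclAlgHom M a * of ℂ G g⁻¹ =
      inclAlgHom M (MonoidAlgebra.mapDomainAlgHom ℂ ℂ (MulAut.conjNormal g).toMonoidHom a) := by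
  induction a using MonoidAlgebra.induction_linear with
  | zero => simp
  | add a b ha hb => rw [map_add, map_add, map_add, mul_add, add_mul, ha, hb]
  | single m r => simp [MulAut.conjNormal_apply]

/-- The inertia group in `G` of a function `ψ` on the normal subgroup `M`. -/
def inertiaGroup [M.Normal] (ψ : M → ℂ) : Subgroup G where
  carrier := {g | ∀ m, ψ (MulAut.conjNormal g m) = ψ m}
  one_mem' m := by simp
  mul_mem' {a b} ha hb m := by rw [map_mul, MulAut.mul_apply, ha, hb]
  inv_mem' {a} ha m := by rw [← ha, ← MulAut.mul_apply, ← map_mul, mul_inv_cancel, map_one,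
    MulAut.one_apply]

lemma mem_inertiaGroup [M.Normal] {ψ : M → ℂ} {g : G} :
    g ∈ inertiaGroup ψ ↔ ∀ m, ψ (MulAut.conjNormal g m) = ψ m := Iff.rfl

lemma of_mul_inclAlgHom_charIdem_mul_of_inv [M.Normal] [Fintype M] (ψ : M → ℂ) (g : G) :
    of ℂ G g * inclAlgHom M (charIdem ψ) * of ℂ G g⁻¹ =
      inclAlgHom M (charIdem fun m => ψ (MulAut.conjNormal g⁻¹ m)) := by
  rw [of_mul_inclAlgHom_mul_of_inv, mapDomainAlgHom_charIdem, map_inv]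
  rfl

open Classical in
lemma IsIrrChar.of_mul_charIdem_mul_of_inv_mul_charIdem [M.Normal] [Fintype M] {ψ : M → ℂ}
    (hψ : IsIrrChar ψ) (g : G) :
    of ℂ G g * inclAlgHom M (charIdem ψ) * of ℂ G g⁻¹ * inclAlgHom M (charIdem ψ) =
      if g ∈ inertiaGroup ψ then inclAlgHom M (charIdem ψ) else 0 := by
  have hψg : IsIrrChar fun m => ψ (MulAut.conjNormal g⁻¹ m) :=
    hψ.comp (φ := (MulAut.conjNormal g⁻¹).toMonoidHom) (MulEquiv.surjective _)
  have eq_iff : (fun m => ψ (MulAut.conjNormal g⁻¹ m)) = ψ ↔ g ∈ inertiaGroup ψ := by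
    rw [← inv_mem_iff, mem_inertiaGroup, funext_iff]
  rw [of_mul_inclAlgHom_charIdem_mul_of_inv, ← map_mul]
  split_ifs with hg
  · rw [eq_iff.2 hg, hψ.isIdempotentElem_charIdem.eq]
  · rw [hψg.charIdem_mul_charIdem_of_ne hψ (mt eq_iff.1 hg), map_zero]

/-- The irreducible character `f` of `G` lies over the irreducible character `ψ` of the subgroup
`M`, that is, `ψ` is a constituent of the restriction of `f`. -/
def LiesOver [Fintype M] (f : G → ℂ) (ψ : M → ℂ) : Prop := ∑ m : M, ψ m⁻¹ * f m ≠ 0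

lemma IsIrrChar.liesOver_iff [Fintype M] {f : G → ℂ} (hf : IsIrrChar f) {ψ : M → ℂ}
    (hψ : IsIrrChar ψ) : LiesOver f ψ ↔ hf.rep (inclAlgHom M (charIdem ψ)) ≠ 0 := by
  have trace_eq : (hf.rep (inclAlgHom M (charIdem ψ))).trace =
      charDegree ψ / Nat.card M * ∑ m : M, ψ m⁻¹ * f m := by
    simp only [charIdem, map_sum, map_smul, mapDomainAlgHom_of, Subgroup.subtype_apply,
      Matrix.trace_sum, Matrix.trace_smul, hf.trace_rep, smul_eq_mul, mul_assoc, hψ.apply_one,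
      Finset.mul_sum]
  have factor_ne_zero : (charDegree ψ / Nat.card M : ℂ) ≠ 0 :=
    div_ne_zero (Nat.cast_ne_zero.2 hψ.charDegree_pos.ne') (Nat.cast_ne_zero.2 Nat.card_pos.ne')
  rw [LiesOver, ← mul_ne_zero_iff_left factor_ne_zero, ← trace_eq, not_iff_not]
  refine ⟨fun h => eq_zero_of_rank_eq_zero ?_, fun h => by rw [h, Matrix.trace_zero]⟩
  rw [trace_eq_rank_of_isIdempotentElem ((hψ.isIdempotentElem_charIdem.map _).map hf.rep)] at h
  exact_mod_cast h

theorem IsIrrChar.index_inertiaGroup_mul_charDegree_dvd [Finite G] [M.Normal] [Fintype M]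
    {f : G → ℂ} (hf : IsIrrChar f) {ψ : M → ℂ} (hψ : IsIrrChar ψ) (h : LiesOver f ψ) :
    (inertiaGroup ψ).index * charDegree ψ ∣ charDegree f := by
  classical
  cases nonempty_fintype G
  have hd : (charDegree f : ℂ) ≠ 0 := Nat.cast_ne_zero.2 hf.charDegree_pos.ne'
  set A := hf.rep (inclAlgHom M (charIdem ψ)) with hA
  have A_ne_zero : A ≠ 0 := (hf.liesOver_iff hψ).1 h
  have sum_conj_mul : (∑ g, hf.rep (of ℂ G g) * A * hf.rep (of ℂ G g⁻¹)) * A =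
      (Nat.card (inertiaGroup ψ) : ℂ) • A := by
    simp only [Finset.sum_mul, hA, ← map_mul, hψ.of_mul_charIdem_mul_of_inv_mul_charIdem,
      apply_ite hf.rep, map_zero, ← Finset.sum_filter, Finset.sum_const,
      ← Nat.cast_smul_eq_nsmul ℂ, Nat.card_eq_fintype_card, Fintype.card_subtype]
  rw [hf.sum_rep_mul_mul_rep_inv, smul_mul_assoc, one_mul] at sum_conj_mul
  have card_inertia := smul_left_injective ℂ A_ne_zero sum_conj_mul
  obtain ⟨n, hn⟩ := exists_trace_map_one_eq_card_mul
    ((hf.rep.comp (inclAlgHom M)).toLinearMap ∘ₗ hψ.repSection) fun B C => by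
      simp only [LinearMap.comp_apply, hψ.repSection_mul, AlgHom.toLinearMap_apply, map_mul]
  rw [LinearMap.comp_apply, hψ.repSection_one, Fintype.card_fin] at hn
  change A.trace = _ at hn
  rw [hn, div_eq_iff hd, ← (inertiaGroup ψ).card_mul_index] at card_inertia
  have degree_eq : Nat.card (inertiaGroup ψ) * (inertiaGroup ψ).index * (charDegree ψ * n) =
      Nat.card (inertiaGroup ψ) * charDegree f := by exact_mod_cast card_inertia
  rw [mul_assoc] at degree_eq
  exact ⟨n, by rw [mul_assoc, Nat.eq_of_mul_eq_mul_left Nat.card_pos degree_eq]⟩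

end CliffordTheory

section CoprimeSection

lemma exists_section_of_coprime {E P : Type*} [Group E] [Finite E] [Group P] {π : E →* P}
    (hπ : Function.Surjective π) (hker : π.ker ≤ Subgroup.center E)
    (hcop : (Nat.card π.ker).Coprime (Nat.card P)) :
    ∃ s : P →* E, (∀ x, π (s x) = x) ∧ ∀ e, e ^ Nat.card P = 1 → s (π e) = e := by
  have card_quotient : π.ker.index = Nat.card P :=
    Nat.card_congr (QuotientGroup.quotientKerEquivOfSurjective π hπ).toEquiv
  obtain ⟨K, hK⟩ := Subgroup.exists_left_complement'_of_coprime (card_quotient ▸ hcop)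
  let s : P →* E := K.subtype.comp (hK.QuotientMulEquiv.toMonoidHom.comp
    (QuotientGroup.quotientKerEquivOfSurjective π hπ).symm.toMonoidHom)
  have π_s (x : P) : π (s x) = x := by
    obtain ⟨q, rfl⟩ := (QuotientGroup.quotientKerEquivOfSurjective π hπ).surjective x
    obtain ⟨k, rfl⟩ := hK.QuotientMulEquiv.symm.surjective q
    simp only [s, MonoidHom.comp_apply, MulEquiv.coe_toMonoidHom, MulEquiv.symm_apply_apply,
      MulEquiv.apply_symm_apply]
    rfl
  refine ⟨s, π_s, fun e he => ?_⟩
  set z := (s (π e))⁻¹ * e with hz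
  have z_mem : z ∈ π.ker := by rw [MonoidHom.mem_ker, map_mul, map_inv, π_s, inv_mul_cancel]
  have z_pow : z ^ Nat.card P = 1 := by
    have hcomm : Commute (s (π e)) z := (Subgroup.mem_center_iff.1 (hker z_mem) _)
    have e_eq : s (π e) * z = e := mul_inv_cancel_left _ _
    rwa [← e_eq, hcomm.mul_pow, ← map_pow, pow_card_eq_one', map_one, one_mul] at he
  have z_order : orderOf z ∣ Nat.card π.ker := by
    rw [← Subgroup.orderOf_mk z z_mem]
    exact orderOf_dvd_natCard _
  have := Nat.dvd_gcd z_order (orderOf_dvd_of_pow_eq_one z_pow)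
  rw [hcop.gcd_eq_one, Nat.dvd_one, orderOf_eq_one_iff] at this
  exact inv_mul_eq_one.1 this

end CoprimeSection

section Intertwiners

variable {ι : Type*} [Fintype ι] [DecidableEq ι]

open scoped MatrixGroups

lemma exists_forall_algEquiv_mul_eq_mul (σ : Matrix ι ι ℂ ≃ₐ[ℂ] Matrix ι ι ℂ) :
    ∃ T : Matrix ι ι ℂ, T.det ≠ 0 ∧ ∀ A, σ A * T = T * A := by
  let L := Matrix.toLinAlgEquiv' (R := ℂ) (n := ι)
  obtain ⟨T, hT⟩ := AlgEquiv.eq_linearEquivConjAlgEquiv (L.symm.trans (σ.trans L))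
  refine ⟨L.symm T.toLinearMap, ?_, fun A => L.injective ?_⟩
  · have inverse : T.toLinearMap * T.symm.toLinearMap = 1 := LinearEquiv.comp_symm T
    exact Matrix.det_ne_zero_of_right_inverse (B := L.symm T.symm.toLinearMap)
      (by rw [← map_mul, inverse, map_one])
  · have conj_eq := congrArg (fun F => F (L A)) hT
    simp only [AlgEquiv.trans_apply, AlgEquiv.symm_apply_apply] at conj_eq
    rw [map_mul, map_mul, AlgEquiv.apply_symm_apply, conj_eq]
    ext v
    simp [LinearEquiv.conjAlgEquiv_apply]

lemma exists_specialLinearGroup_smul_eq [Nonempty ι] {T : Matrix ι ι ℂ} (hT : T.det ≠ 0) :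
    ∃ (c : ℂ) (A : Matrix.SpecialLinearGroup ι ℂ), (A : Matrix ι ι ℂ) = c • T := by
  obtain ⟨c, hc⟩ := IsAlgClosed.exists_pow_nat_eq T.det⁻¹ (Fintype.card_pos (α := ι))
  exact ⟨c, ⟨c • T, by rw [Matrix.det_smul, hc, inv_mul_cancel₀ hT]⟩, rfl⟩

variable {X : Type*} [Group X] [Finite X]

lemma exists_specialLinearGroup_intertwines [Nonempty ι] {W W' : ℂ[X] →ₐ[ℂ] Matrix ι ι ℂ}
    (hW : Function.Surjective W) (hW' : Function.Surjective W')
    (h : traceChar W = traceChar W') :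
    ∃ T : Matrix.SpecialLinearGroup ι ℂ, ∀ a, W' a * T = T * W a := by
  obtain ⟨n, d, _, ⟨e⟩⟩ := exists_wedderburn X
  obtain ⟨i, Φ, rfl⟩ := exists_blockHom_algEquiv e hW
  obtain ⟨j, Φ', rfl⟩ := exists_blockHom_algEquiv e hW'
  rw [traceChar_algEquiv_comp, traceChar_algEquiv_comp] at h
  obtain rfl := traceChar_blockHom_injective e h
  obtain ⟨T, hT, σ_mul⟩ := exists_forall_algEquiv_mul_eq_mul (Φ.symm.trans Φ')
  obtain ⟨c, A, hA⟩ := exists_specialLinearGroup_smul_eq hT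
  refine ⟨A, fun a => ?_⟩
  have := σ_mul (Φ (blockHom e i a))
  rw [AlgEquiv.trans_apply, AlgEquiv.symm_apply_apply] at this
  rw [hA, mul_smul_comm, smul_mul_assoc]
  exact congrArg (c • ·) this

namespace IsIrrChar

variable {f : X → ℂ} (hf : IsIrrChar f)

lemma mem_center_specialLinearGroup {A : SL(charDegree f, ℂ)}
    (h : ∀ x, Commute (hf.rep (of ℂ X x)) (A : Matrix _ _ ℂ)) :
    A ∈ Subgroup.center _ := by
  refine Subgroup.mem_center_iff.2 fun B => Subtype.ext ?_
  obtain ⟨b, hb⟩ := hf.rep_surjective B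
  cases nonempty_fintype X
  change B.1 * A.1 = A.1 * B.1
  rw [← hb, eq_sum_coeff_smul_of b, map_sum]
  exact Commute.sum_left _ _ _ fun x _ => by rw [map_smul]; exact (h x).smul_left _

variable {P : Type*} [Group P] (α : P →* MulAut X)

/-- The pairs `(x, A)` such that `A` has determinant one and intertwines `hf.rep` with its twist by
`α x`. When `f` is `α`-invariant this is a central extension of `P`, through which the projective
action of `P` on `hf.rep` becomes linear. -/
def intertwiners : Subgroup (P × SL(charDegree f, ℂ)) where
  carrier := {e | ∀ y, hf.rep (of ℂ X (α e.1 y)) * e.2 = e.2 * hf.rep (of ℂ X y)}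
  one_mem' y := by simp
  mul_mem' {a b} ha hb y := by
    rw [Prod.fst_mul, Prod.snd_mul, map_mul, MulAut.mul_apply, Matrix.SpecialLinearGroup.coe_mul,
      ← mul_assoc, ha, mul_assoc, hb, mul_assoc]
  inv_mem' {a} ha y := by
    have inv_mul : (a.2⁻¹).1 * a.2.1 = 1 := congrArg Subtype.val (inv_mul_cancel a.2)
    have mul_inv : a.2.1 * (a.2⁻¹).1 = 1 := congrArg Subtype.val (mul_inv_cancel a.2)
    have := ha ((α a.1)⁻¹ y)
    rw [MulAut.apply_inv_self] at this
    rw [Prod.fst_inv, Prod.snd_inv, map_inv, ← one_mul (hf.rep _), ← inv_mul,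
      mul_assoc _ _ (hf.rep _), ← this, mul_assoc, mul_assoc, mul_inv, mul_one]

variable {α}

omit [Finite X] in
lemma mem_intertwiners {e : P × SL(charDegree f, ℂ)} :
    e ∈ hf.intertwiners α ↔ ∀ y, hf.rep (of ℂ X (α e.1 y)) * e.2 = e.2 * hf.rep (of ℂ X y) :=
  Iff.rfl

variable (α) in
/-- The projection of the group of intertwiners to `P`. -/
noncomputable abbrev intertwinersFst : hf.intertwiners α →* P :=
  (MonoidHom.fst _ _).comp (hf.intertwiners α).subtype

variable (α) in
/-- The matrix representation of the group of intertwiners. -/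
noncomputable abbrev intertwinersSnd : hf.intertwiners α →* SL(charDegree f, ℂ) :=
  (MonoidHom.snd _ _).comp (hf.intertwiners α).subtype

omit [Finite X] in
lemma rep_mul_intertwinersSnd (e : hf.intertwiners α) (y : X) :
    hf.rep (of ℂ X (α (hf.intertwinersFst α e) y)) * (hf.intertwinersSnd α e).1 =
      (hf.intertwinersSnd α e).1 * hf.rep (of ℂ X y) := hf.mem_intertwiners.1 e.2 y

omit [Finite X] in
lemma intertwiners_ext {e e' : hf.intertwiners α}
    (hfst : hf.intertwinersFst α e = hf.intertwinersFst α e')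
    (hsnd : hf.intertwinersSnd α e = hf.intertwinersSnd α e') : e = e' :=
  Subtype.ext (Prod.ext hfst hsnd)

lemma intertwinersFst_surjective (hα : ∀ x y, f (α x y) = f y) :
    Function.Surjective (hf.intertwinersFst α) := by
  intro x
  have := hf.nonempty_fin_charDegree
  let twist : ℂ[X] →ₐ[ℂ] ℂ[X] := MonoidAlgebra.mapDomainAlgHom ℂ ℂ (α x).toMonoidHom
  have twist_surjective : Function.Surjective twist := mapDomainAlgHom_surjective (α x).surjective
  obtain ⟨T, hT⟩ := exists_specialLinearGroup_intertwines hf.rep_surjective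
    (W' := hf.rep.comp twist) (hf.rep_surjective.comp twist_surjective) <| funext fun y => by
      rw [hf.traceChar_rep, traceChar, AlgHom.comp_apply, mapDomainAlgHom_of, hf.trace_rep,
        ← hα x y]
      rfl
  refine ⟨⟨(x, T), fun y => ?_⟩, rfl⟩
  rw [← hT, AlgHom.comp_apply, mapDomainAlgHom_of]
  rfl

lemma intertwinersSnd_mem_center {e : hf.intertwiners α}
    (he : e ∈ (hf.intertwinersFst α).ker) :
    hf.intertwinersSnd α e ∈ Subgroup.center SL(charDegree f, ℂ) := by
  refine hf.mem_center_specialLinearGroup fun y => ?_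
  have := hf.rep_mul_intertwinersSnd e y
  rwa [MonoidHom.mem_ker.1 he, map_one, MulAut.one_apply] at this

lemma ker_intertwinersFst_le_center :
    (hf.intertwinersFst α).ker ≤ Subgroup.center (hf.intertwiners α) := by
  refine fun e he => Subgroup.mem_center_iff.2 fun e' => hf.intertwiners_ext ?_ ?_
  · rw [map_mul, map_mul, MonoidHom.mem_ker.1 he, mul_one, one_mul]
  · rw [map_mul, map_mul]
    exact Subgroup.mem_center_iff.1 (hf.intertwinersSnd_mem_center he) _

lemma card_ker_intertwinersFst_dvd :
    Nat.card (hf.intertwinersFst α).ker ∣ charDegree f := by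
  have : NeZero (charDegree f) := ⟨hf.charDegree_pos.ne'⟩
  let toCenter : (hf.intertwinersFst α).ker →* Subgroup.center SL(charDegree f, ℂ) :=
    ((hf.intertwinersSnd α).comp (Subgroup.subtype _)).codRestrict _
      fun e => hf.intertwinersSnd_mem_center e.2
  have injective : Function.Injective toCenter := fun e e' h =>
    Subtype.ext (hf.intertwiners_ext (e.2.trans e'.2.symm) (congrArg Subtype.val h))
  have center_equiv :=
    Matrix.SpecialLinearGroup.center_equiv_rootsOfUnity' (R := ℂ) (0 : Fin (charDegree f))
  have card_center : Nat.card (Subgroup.center SL(charDegree f, ℂ)) =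
      charDegree f := by
    rw [Nat.card_congr center_equiv.toEquiv, Fintype.card_fin, Complex.card_rootsOfUnity]
  exact (Subgroup.card_dvd_of_injective toCenter injective).trans card_center.dvd

theorem exists_intertwining_hom [Finite P] (hα : ∀ x y, f (α x y) = f y)
    (hcop : (charDegree f).Coprime (Nat.card P)) :
    ∃ T : P →* SL(charDegree f, ℂ),
      (∀ x y, hf.rep (of ℂ X (α x y)) * T x = T x * hf.rep (of ℂ X y)) ∧
      ∀ x A, (x, A) ∈ hf.intertwiners α → A ^ Nat.card P = 1 → T x = A := by
  have finite_ker : Finite (hf.intertwinersFst α).ker :=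
    Nat.finite_of_card_ne_zero (ne_zero_of_dvd_ne_zero hf.charDegree_pos.ne'
      hf.card_ker_intertwinersFst_dvd)
  have : Finite (hf.intertwiners α) := by
    have := Finite.of_injective _ (QuotientGroup.kerLift_injective (hf.intertwinersFst α))
    exact Finite.of_subgroup_quotient (hf.intertwinersFst α).ker
  obtain ⟨s, fst_s, s_fst⟩ := exists_section_of_coprime (hf.intertwinersFst_surjective hα)
    hf.ker_intertwinersFst_le_center (hcop.coprime_dvd_left hf.card_ker_intertwinersFst_dvd)
  refine ⟨(hf.intertwinersSnd α).comp s, fun x y => ?_, fun x A hA hpow => ?_⟩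
  · have := hf.rep_mul_intertwinersSnd (s x) y
    rwa [fst_s] at this
  · have := s_fst ⟨(x, A), hA⟩ (hf.intertwiners_ext pow_card_eq_one' hpow)
    exact congrArg (hf.intertwinersSnd α) this

end IsIrrChar

end Intertwiners

section DegreesOverInvariantCharacter

lemma exists_card_mul_coeff_one_eq {X : Type*} [Group X] [Finite X] {a : ℂ[X]}
    (ha : IsIdempotentElem a) {n : ℕ}
    (hn : ∀ f (hf : IsIrrChar f), hf.rep a ≠ 0 → n ∣ charDegree f) :
    ∃ m : ℕ, (Nat.card X : ℂ) * a.coeff 1 = n * m := by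
  cases nonempty_fintype X
  have term_eq (f) (hf : f ∈ irrChars X) :
      ∃ m : ℕ, f 1 * ∑ x, a.coeff x * f x = (n : ℂ) * m := by
    replace hf := mem_irrChars.1 hf
    have trace_eq : ∑ x, a.coeff x * f x = (hf.rep a).trace := by
      rw [trace_eq_sum_coeff_mul_traceChar, hf.traceChar_rep]
    rw [trace_eq, hf.apply_one]
    by_cases h : hf.rep a = 0
    · exact ⟨0, by rw [h, Matrix.trace_zero, Nat.cast_zero, mul_zero, mul_zero]⟩
    · obtain ⟨c, hc⟩ := hn f hf h
      refine ⟨c * (hf.rep a).rank, ?_⟩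
      rw [trace_eq_rank_of_isIdempotentElem (ha.map hf.rep), Nat.cast_mul, ← mul_assoc,
        ← Nat.cast_mul n, ← hc]
  choose! m hm using term_eq
  refine ⟨∑ f ∈ irrChars X, m f, ?_⟩
  rw [← sum_irrChars_mul_sum_coeff, Finset.sum_congr rfl hm, Nat.cast_sum, Finset.mul_sum]

lemma IsIrrChar.mapDomainAlgHom_repSection {X : Type*} [Group X] [Fintype X] {f : X → ℂ}
    (hf : IsIrrChar f) (φ : X ≃* X) (hφ : ∀ x, f (φ x) = f x)
    {T T' : Matrix (Fin (charDegree f)) (Fin (charDegree f)) ℂ} (hTT' : T * T' = 1)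
    (hT : ∀ x, hf.rep (of ℂ X (φ x)) * T = T * hf.rep (of ℂ X x))
    (A : Matrix (Fin (charDegree f)) (Fin (charDegree f)) ℂ) :
    MonoidAlgebra.mapDomainAlgHom ℂ ℂ φ.toMonoidHom (hf.repSection A) =
      hf.repSection (T * A * T') := by
  have intertwines (a : ℂ[X]) :
      hf.rep (MonoidAlgebra.mapDomainAlgHom ℂ ℂ φ.toMonoidHom a) * T = T * hf.rep a := by
    rw [eq_sum_coeff_smul_of a]
    simp only [map_sum, map_smul, mapDomainAlgHom_of, Finset.sum_mul, Finset.mul_sum,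
      smul_mul_assoc, mul_smul_comm, MulEquiv.toMonoidHom_eq_coe, MonoidHom.coe_coe, hT]
  have symm_invariant : (fun x => f (φ.symm x)) = f :=
    funext fun x => by rw [← hφ, φ.apply_symm_apply]
  obtain ⟨a, rfl⟩ := hf.rep_surjective A
  rw [← intertwines, mul_assoc, hTT', mul_one, hf.repSection_rep, hf.repSection_rep, map_mul,
    mapDomainAlgHom_charIdem, symm_invariant]

variable {G : Type*} [Group G] {M : Subgroup G}

lemma inclAlgHom_coeff_coe (a : ℂ[M]) (m : M) : (inclAlgHom M a).coeff m = a.coeff m := by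
  rw [MonoidAlgebra.mapDomainAlgHom_apply, MonoidAlgebra.coeff_mapDomain]
  exact Finsupp.mapDomain_apply M.subtype_injective _ m

lemma inclAlgHom_coeff_of_notMem (a : ℂ[M]) {g : G} (hg : g ∉ M) :
    (inclAlgHom M a).coeff g = 0 := by
  rw [MonoidAlgebra.mapDomainAlgHom_apply, MonoidAlgebra.coeff_mapDomain]
  exact Finsupp.mapDomain_of_notMem_range _ _ fun ⟨m, hm⟩ => hg (hm ▸ m.2)

variable [M.Normal] [Fintype M] {ψ : M → ℂ} (hψ : IsIrrChar ψ)

namespace IsIrrChar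

section UntwistedHom

open scoped MatrixGroups

variable {P : Subgroup G} (T : P →* SL(charDegree ψ, ℂ)) (hP : P ≤ inertiaGroup ψ)
    (hT : ∀ (x : P) m,
      hψ.rep (of ℂ M (MulAut.conjNormal (x : G) m)) * T x = T x * hψ.rep (of ℂ M m))

/-- When `T` makes the representation `hψ.rep` of `M` one of `P M`, the elements `T x⁻¹ x` of the
block of `ψ` in `ℂ[G]` commute with `ℂ[M]` and form a group isomorphic to a quotient of `P`. Here
`T x⁻¹` stands for its image under `hψ.repSection`. -/
noncomputable def untwistedHom : P →ₙ* ℂ[G] where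
  toFun x := inclAlgHom M (hψ.repSection (T x⁻¹)) * of ℂ G x
  map_mul' x y := by
    have conj_eq : of ℂ G x * inclAlgHom M (hψ.repSection (T y⁻¹)) =
        inclAlgHom M (hψ.repSection (T x * (T y⁻¹) * (T x⁻¹))) * of ℂ G x := by
      rw [← hψ.mapDomainAlgHom_repSection _ (hP x.2) _ (hT x), ← of_mul_inclAlgHom_mul_of_inv,
        mul_assoc _ (of ℂ G _), ← map_mul, inv_mul_cancel, map_one, mul_one]
      rw [map_inv]
      exact congrArg Subtype.val (mul_inv_cancel (T x))
    have T_eq : T (x * y)⁻¹ = T x⁻¹ * (T x * T y⁻¹ * T x⁻¹) := by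
      simp only [← map_mul]
      group
    rw [mul_assoc _ (of ℂ G _), ← mul_assoc (of ℂ G _), conj_eq, T_eq,
      Matrix.SpecialLinearGroup.coe_mul, hψ.repSection_mul, map_mul, Subgroup.coe_mul, map_mul]
    simp only [Matrix.SpecialLinearGroup.coe_mul, mul_assoc]

lemma charIdem_mul_untwistedHom (x : P) :
    inclAlgHom M (charIdem ψ) * hψ.untwistedHom T hP hT x = hψ.untwistedHom T hP hT x := by
  change _ * (inclAlgHom M _ * _) = inclAlgHom M _ * _
  rw [← mul_assoc, ← map_mul, ← hψ.repSection_one, ← hψ.repSection_mul, one_mul]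

open Classical in
lemma untwistedHom_coeff_one
    (hTM : ∀ (x : P) (hx : (x : G) ∈ M), T x = hψ.rep (of ℂ M ⟨x, hx⟩)) (x : P) :
    (hψ.untwistedHom T hP hT x).coeff 1 =
      if x ∈ M.subgroupOf P then (charDegree ψ ^ 2 / Nat.card M : ℂ) else 0 := by
  change (inclAlgHom M (hψ.repSection (T x⁻¹)) * of ℂ G x).coeff 1 = _
  rw [MonoidAlgebra.of_apply, MonoidAlgebra.coeff_mul_single_apply, one_mul, mul_one]
  split_ifs with hx
  · rw [Subgroup.mem_subgroupOf] at hx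
    rw [← Subgroup.coe_mk M _ hx, ← Subgroup.coe_inv, inclAlgHom_coeff_coe, hψ.repSection_coeff,
      inv_inv, ← hTM x hx, ← Matrix.SpecialLinearGroup.coe_mul, ← map_mul, mul_inv_cancel, map_one,
      Matrix.SpecialLinearGroup.coe_one, Matrix.trace_one, Fintype.card_fin]
    ring
  · exact inclAlgHom_coeff_of_notMem _ fun h => hx (inv_mem_iff.1 h)

lemma card_mul_relIndex_mul_average_untwistedHom_coeff_one [Fintype P]
    (hTM : ∀ (x : P) (hx : (x : G) ∈ M), T x = hψ.rep (of ℂ M ⟨x, hx⟩)) :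
    (Nat.card P * P.relIndex M : ℂ) *
      ((Nat.card P : ℂ)⁻¹ • ∑ x, hψ.untwistedHom T hP hT x).coeff 1 = charDegree ψ ^ 2 := by
  classical
  have hcP : (Nat.card P : ℂ) ≠ 0 := Nat.cast_ne_zero.2 Nat.card_pos.ne'
  have hcM : (Nat.card M : ℂ) ≠ 0 := Nat.cast_ne_zero.2 Nat.card_pos.ne'
  have card_inter : Nat.card (M.subgroupOf P) = Nat.card (P.subgroupOf M) :=
    Nat.card_congr ⟨fun x => ⟨⟨x.1.1, x.2⟩, x.1.2⟩, fun x => ⟨⟨x.1.1, x.2⟩, x.1.2⟩,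
      fun _ => rfl, fun _ => rfl⟩
  have card_eq : (Nat.card (M.subgroupOf P) * P.relIndex M : ℂ) = Nat.card M := by
    rw [card_inter, Subgroup.relIndex]
    exact_mod_cast (P.subgroupOf M).card_mul_index
  have sum_eq : ∑ x, (hψ.untwistedHom T hP hT x).coeff 1 =
      Nat.card (M.subgroupOf P) * (charDegree ψ ^ 2 / Nat.card M : ℂ) := by
    simp only [hψ.untwistedHom_coeff_one T hP hT hTM, ← Finset.sum_filter, Finset.sum_const,
      nsmul_eq_mul, Nat.card_eq_fintype_card, Fintype.card_subtype]
  rw [MonoidAlgebra.coeff_smul, Finsupp.smul_apply, MonoidAlgebra.coeff_sum,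
    Finsupp.finsetSum_apply, sum_eq, smul_eq_mul]
  field_simp
  rw [← card_eq]
  ring

end UntwistedHom

include hψ

omit [M.Normal] in
lemma exists_liesOver [Finite G] : ∃ f : G → ℂ, IsIrrChar f ∧ LiesOver f ψ := by
  classical
  by_contra! h
  have sum_eq : ∑ m : M, ψ m⁻¹ * ∑ f ∈ irrChars G, (charDegree f : ℂ) * f m = 0 := by
    simp only [Finset.mul_sum]
    rw [Finset.sum_comm]
    refine Finset.sum_eq_zero fun f hf => ?_
    simp only [mul_left_comm (ψ _), ← Finset.mul_sum]
    rw [not_not.1 (h f (mem_irrChars.1 hf)), mul_zero]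
  simp only [sum_irrChars_charDegree_mul, OneMemClass.coe_eq_one, mul_ite, mul_zero,
    Finset.sum_ite_eq', Finset.mem_univ, if_true, inv_one, hψ.apply_one] at sum_eq
  have : (charDegree ψ * Nat.card G : ℂ) ≠ 0 :=
    mul_ne_zero (Nat.cast_ne_zero.2 hψ.charDegree_pos.ne') (Nat.cast_ne_zero.2 Nat.card_pos.ne')
  exact this sum_eq

omit [Fintype M] in
lemma exists_hom_extending_rep [Finite M] {P : Subgroup G} [Finite P] (hPψ : P ≤ inertiaGroup ψ)
    (hcop : (charDegree ψ).Coprime (Nat.card P)) (hdet : ∀ m, (hψ.rep (of ℂ M m)).det = 1) :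
    ∃ T : P →* Matrix.SpecialLinearGroup (Fin (charDegree ψ)) ℂ,
      (∀ (x : P) m,
        hψ.rep (of ℂ M (MulAut.conjNormal (x : G) m)) * T x = T x * hψ.rep (of ℂ M m)) ∧
      ∀ (x : P) (hx : (x : G) ∈ M), T x = hψ.rep (of ℂ M ⟨x, hx⟩) := by
  obtain ⟨T, hT, hT_unique⟩ := hψ.exists_intertwining_hom
    (α := (MulAut.conjNormal (H := M)).comp P.subtype) (fun x => hPψ x.2) hcop
  refine ⟨T, hT, fun x hx => ?_⟩
  let m : M := ⟨x, hx⟩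
  let R : Matrix.SpecialLinearGroup (Fin (charDegree ψ)) ℂ := ⟨hψ.rep (of ℂ M m), hdet m⟩
  have m_pow : m ^ Nat.card P = 1 :=
    Subtype.ext (congrArg (P.subtype) (pow_card_eq_one' (x := x)))
  have R_pow : R ^ Nat.card P = 1 := by
    refine Subtype.ext ?_
    change hψ.rep (of ℂ M m) ^ Nat.card P = 1
    rw [← map_pow, ← map_pow, m_pow, map_one, map_one]
  have R_intertwines (y : M) :
      hψ.rep (of ℂ M (MulAut.conjNormal (x : G) y)) * R = R * hψ.rep (of ℂ M y) := by
    rw [← map_mul, ← map_mul, ← map_mul, ← map_mul]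
    congr 2
    exact Subtype.ext (inv_mul_cancel_right ((x : G) * y) x)
  exact congrArg Subtype.val (hT_unique x R R_intertwines R_pow)

theorem exists_liesOver_not_dvd [Finite G] {p : ℕ} [Fact p.Prime] {P : Subgroup G}
    (hP : IsPGroup p P) (hPψ : P ≤ inertiaGroup ψ) (hpψ : ¬ p ∣ charDegree ψ)
    (hdet : ∀ m, (hψ.rep (of ℂ M m)).det = 1) {k h : ℕ} (hkh : P.index = k * h) (hph : ¬ p ∣ h) :
    ∃ f, IsIrrChar f ∧ LiesOver f ψ ∧ ¬ k * p ∣ charDegree f := by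
  have hp : p.Prime := Fact.out
  have hcop : (charDegree ψ).Coprime (Nat.card P) := by
    obtain ⟨n, hn⟩ := hP.exists_card_eq
    exact hn ▸ (hp.coprime_iff_not_dvd.2 hpψ).symm.pow_right n
  cases nonempty_fintype P
  obtain ⟨T, hT, hTM⟩ := hψ.exists_hom_extending_rep hPψ hcop hdet
  by_contra! hdvd
  obtain ⟨n, hn⟩ := exists_card_mul_coeff_one_eq (n := k * p)
    (isIdempotentElem_average (hψ.untwistedHom T hPψ hT)) fun f hf hne =>
      hdvd f hf <| (hf.liesOver_iff hψ).2 fun h0 => hne <| by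
        rw [map_smul, map_sum, Finset.sum_congr rfl fun x _ => by
          rw [← hψ.charIdem_mul_untwistedHom T hPψ hT x, map_mul, h0, zero_mul],
          Finset.sum_const_zero, smul_zero]
  have index_mul_sq : P.index * charDegree ψ ^ 2 = P.relIndex M * (k * p * n) := by
    have coeff_eq := hψ.card_mul_relIndex_mul_average_untwistedHom_coeff_one T hPψ hT hTM
    rw [← P.card_mul_index] at hn
    push_cast at hn
    have : ((P.index * charDegree ψ ^ 2 : ℕ) : ℂ) = (P.relIndex M * (k * p * n) : ℕ) := by
      push_cast
      linear_combination P.relIndex M * hn - P.index * coeff_eq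
    exact_mod_cast this
  have k_ne_zero : k ≠ 0 := fun hk => P.index_ne_zero_of_finite (by rw [hkh, hk, zero_mul])
  have : p * (P.relIndex M * n) = h * charDegree ψ ^ 2 :=
    Nat.eq_of_mul_eq_mul_left (Nat.pos_of_ne_zero k_ne_zero) <| by
      rw [← mul_assoc k h, ← hkh, index_mul_sq]
      ring
  rcases hp.dvd_mul.1 ⟨_, this.symm⟩ with hdvd | hdvd
  exacts [hph hdvd, hpψ (hp.dvd_of_dvd_pow hdvd)]

end IsIrrChar

end DegreesOverInvariantCharacter

section MinimalNormal

open scoped Pointwise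

variable {G : Type*} [Group G]

/-- `S` is a minimal normal subgroup of `M`, for subgroups `S` and `M` of the ambient group `G`;
the minimal normal subgroups of `G` itself are obtained for `M = ⊤`. -/
def IsMinimalNormalIn (M S : Subgroup G) : Prop :=
  Minimal (fun T => T ≠ ⊥ ∧ T ≤ M ∧ M ≤ Subgroup.normalizer (T : Set G)) S

lemma exists_isMinimalNormalIn [Finite G] {M : Subgroup G} (hM : M ≠ ⊥) :
    ∃ S, IsMinimalNormalIn M S :=
  (Set.toFinite {T : Subgroup G | T ≠ ⊥ ∧ T ≤ M ∧
    M ≤ Subgroup.normalizer (T : Set G)}).exists_minimal ⟨M, hM, le_rfl, Subgroup.le_normalizer⟩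

lemma le_centralizer_of_disjoint {A B : Subgroup G} (hAB : A ≤ Subgroup.normalizer (B : Set G))
    (hBA : B ≤ Subgroup.normalizer (A : Set G)) (h : Disjoint A B) :
    A ≤ Subgroup.centralizer (B : Set G) := by
  rw [← Subgroup.commutator_eq_bot_iff_le_centralizer, eq_bot_iff, ← h.eq_bot]
  exact le_inf (Subgroup.le_normalizer_iff_commutator_le_left.1 hBA)
    (Subgroup.le_normalizer_iff_commutator_le_right.1 hAB)

lemma le_normalizer_conj_smul {M S : Subgroup G} [M.Normal]
    (h : M ≤ Subgroup.normalizer (S : Set G)) (g : G) :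
    M ≤ Subgroup.normalizer ((MulAut.conj g • S : Subgroup G) : Set G) := by
  refine Subgroup.le_normalizer_iff.2 fun m hm x hx => ?_
  obtain ⟨s, hs, rfl⟩ := (Subgroup.mem_smul_pointwise_iff_exists _ _ _).1 hx
  refine (Subgroup.mem_smul_pointwise_iff_exists _ _ _).2 ⟨(g⁻¹ * m * g) * s * (g⁻¹ * m * g)⁻¹,
    Subgroup.le_normalizer_iff.1 h _ (Subgroup.Normal.conj_mem' ‹_› m hm g) s hs, ?_⟩
  simp only [MulAut.smul_def, MulAut.conj_apply]
  group

namespace IsMinimalNormalIn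

variable {M S : Subgroup G}

lemma ne_bot (hS : IsMinimalNormalIn M S) : S ≠ ⊥ :=
  hS.prop.1

lemma le (hS : IsMinimalNormalIn M S) : S ≤ M :=
  hS.prop.2.1

lemma le_normalizer (hS : IsMinimalNormalIn M S) : M ≤ Subgroup.normalizer (S : Set G) :=
  hS.prop.2.2

lemma eq_bot_or_eq (hS : IsMinimalNormalIn M S) {T : Subgroup G} (hTS : T ≤ S)
    (hMT : M ≤ Subgroup.normalizer (T : Set G)) : T = ⊥ ∨ T = S :=
  or_iff_not_imp_left.2 fun hT => hS.eq_of_le ⟨hT, hTS.trans hS.le, hMT⟩ hTS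

lemma eq_bot_or_eq_of_normal (hM : IsMinimalNormalIn ⊤ M) {K : Subgroup G} [K.Normal]
    (hK : K ≤ M) : K = ⊥ ∨ K = M :=
  hM.eq_bot_or_eq hK (Subgroup.normalizer_eq_top_iff.2 ‹_›).ge

lemma normalClosure_eq (hM : IsMinimalNormalIn ⊤ M) [M.Normal] (hS : IsMinimalNormalIn M S) :
    Subgroup.normalClosure (S : Set G) = M :=
  (hM.eq_bot_or_eq_of_normal (Subgroup.normalClosure_le_normal hS.le)).resolve_left fun h =>
    hS.ne_bot (eq_bot_iff.2 (Subgroup.normalClosure_eq_bot_iff.1 h))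

lemma commutator_eq_top (hM : IsMinimalNormalIn ⊤ M) [M.Normal]
    (hna : ¬ M ≤ Subgroup.centralizer (M : Set G)) : commutator M = ⊤ := by
  rw [← Subgroup.commutator_eq_bot_iff_le_centralizer] at hna
  refine Subgroup.map_injective M.subtype_injective ?_
  rw [Subgroup.map_subtype_commutator, ← MonoidHom.range_eq_map, Subgroup.range_subtype]
  exact (hM.eq_bot_or_eq_of_normal (Subgroup.commutator_le_left M M)).resolve_left hna

lemma conj_mem_centralizer [Finite G] [M.Normal] (hS : IsMinimalNormalIn M S) {g s : G}
    (hg : g ∉ Subgroup.normalizer (S : Set G)) (hs : s ∈ S) :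
    g * s * g⁻¹ ∈ Subgroup.centralizer (S : Set G) := by
  have conj_le : MulAut.conj g • S ≤ M := by
    rw [← Subgroup.Normal.conj_smul_eq_self g M]
    exact Subgroup.pointwise_smul_le_pointwise_smul_iff.2 hS.le
  have normalizes := le_normalizer_conj_smul hS.le_normalizer g
  rcases hS.eq_bot_or_eq inf_le_right ((le_inf normalizes hS.le_normalizer).trans
    Subgroup.inf_normalizer_le_normalizer_inf) with h | h
  · exact le_centralizer_of_disjoint (conj_le.trans hS.le_normalizer) (hS.le.trans normalizes)
      (disjoint_iff.2 h) (Subgroup.smul_mem_pointwise_smul s (MulAut.conj g) S hs)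
  · refine absurd (Subgroup.mem_normalizer_iff_map_conj_eq.2 ?_) hg
    exact (Subgroup.eq_of_le_of_card_ge (inf_eq_right.1 h)
      (Nat.card_congr (Subgroup.equivSMul (MulAut.conj g) S).toEquiv).ge).symm

variable [Finite G] (hM : IsMinimalNormalIn ⊤ M) [M.Normal] (hS : IsMinimalNormalIn M S)
include hM hS

lemma le_sup_centralizer : M ≤ S ⊔ Subgroup.centralizer (S : Set G) := by
  rw [← hM.normalClosure_eq hS, Subgroup.normalClosure, Subgroup.closure_le]
  intro x hx
  obtain ⟨s, hs, hconj⟩ := Group.mem_conjugatesOfSet_iff.1 hx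
  obtain ⟨g, rfl⟩ := isConj_iff.1 hconj
  by_cases hg : g ∈ Subgroup.normalizer (S : Set G)
  · exact Subgroup.mem_sup_left ((Subgroup.mem_normalizer_iff.1 hg s).1 hs)
  · exact Subgroup.mem_sup_right (hS.conj_mem_centralizer hg hs)

lemma not_le_centralizer (hna : ¬ M ≤ Subgroup.centralizer (M : Set G)) :
    ¬ S ≤ Subgroup.centralizer (S : Set G) := by
  intro hab
  have hMS : M ≤ Subgroup.centralizer (S : Set G) :=
    (hM.le_sup_centralizer hS).trans (sup_le hab le_rfl)
  apply hna
  conv_lhs => rw [← hM.normalClosure_eq hS]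
  exact Subgroup.normalClosure_le_normal (Subgroup.le_centralizer_iff.1 hMS)

lemma isSimpleGroup : IsSimpleGroup S := by
  have : Nontrivial S := (Subgroup.nontrivial_iff_ne_bot S).2 hS.ne_bot
  refine ⟨fun L hL => ?_⟩
  have le_centralizer : Subgroup.centralizer (S : Set G) ≤
      Subgroup.normalizer (L.map S.subtype : Set G) :=
    (Subgroup.centralizer_le (Subgroup.map_subtype_le L)).trans
      (Subgroup.centralizer_le_normalizer _)
  have le_normalizer : S ≤ Subgroup.normalizer (L.map S.subtype : Set G) := by
    have := Subgroup.le_normalizer_map (H := L) S.subtype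
    rwa [Subgroup.normalizer_eq_top, ← MonoidHom.range_eq_map, Subgroup.range_subtype] at this
  refine (hS.eq_bot_or_eq (Subgroup.map_subtype_le L) ((hM.le_sup_centralizer hS).trans
    (sup_le le_normalizer le_centralizer))).imp (fun h => ?_) fun h => ?_
  · exact (Subgroup.map_eq_bot_iff_of_injective L S.subtype_injective).1 h
  · exact Subgroup.map_injective S.subtype_injective
      (by rw [h, ← MonoidHom.range_eq_map, Subgroup.range_subtype])

lemma normalizer_ne_top (hns : ¬ IsSimpleGroup M) : Subgroup.normalizer (S : Set G) ≠ ⊤ := by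
  intro h
  have : S.Normal := Subgroup.normalizer_eq_top_iff.1 h
  obtain rfl := (hM.eq_bot_or_eq_of_normal hS.le).resolve_left hS.ne_bot
  exact hns (hM.isSimpleGroup hS)

end IsMinimalNormalIn

end MinimalNormal

section Projection

variable {G : Type*} [Group G] {M S : Subgroup G}

/-- `π` is a projection of `M` onto its factor `S` along the centralizer of `S`. -/
def IsProjection (π : M →* S) : Prop :=
  ∀ m, (π m : G)⁻¹ * m ∈ Subgroup.centralizer (S : Set G)

lemma conj_mem_centralizer_of_mem_normalizer {x c : G}
    (hx : x ∈ Subgroup.normalizer (S : Set G)) (hc : c ∈ Subgroup.centralizer (S : Set G)) :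
    x * c * x⁻¹ ∈ Subgroup.centralizer (S : Set G) :=
  (Subgroup.normal_subgroupOf_iff (Subgroup.centralizer_le_normalizer _)).1 inferInstance c x hc hx

lemma eq_of_inv_mul_mem_centralizer (hZ : Subgroup.center S = ⊥) {s t : S} {m : G}
    (hs : (s : G)⁻¹ * m ∈ Subgroup.centralizer (S : Set G))
    (ht : (t : G)⁻¹ * m ∈ Subgroup.centralizer (S : Set G)) : s = t := by
  have mem_centralizer := mul_mem hs (inv_mem ht)
  rw [mul_inv_rev, inv_inv, mul_assoc, mul_inv_cancel_left] at mem_centralizer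
  refine inv_mul_eq_one.1 (Subgroup.mem_bot.1 (hZ ▸ Subgroup.mem_center_iff.2 fun x => ?_))
  exact Subtype.ext (Subgroup.mem_centralizer_iff.1 mem_centralizer x x.2)

lemma exists_inv_mul_mem_centralizer {m : G}
    (hm : m ∈ S ⊔ Subgroup.centralizer (S : Set G)) :
    ∃ s : S, (s : G)⁻¹ * m ∈ Subgroup.centralizer (S : Set G) := by
  rw [← SetLike.mem_coe, Subgroup.coe_mul_of_right_le_normalizer_left _ _
    (Subgroup.centralizer_le_normalizer _)] at hm
  obtain ⟨s, hs, c, hc, rfl⟩ := hm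
  exact ⟨⟨s, hs⟩, by rwa [inv_mul_cancel_left]⟩

lemma exists_isProjection (hZ : Subgroup.center S = ⊥)
    (hMS : M ≤ S ⊔ Subgroup.centralizer (S : Set G)) : ∃ π : M →* S, IsProjection π := by
  choose π hπ using fun m : M => exists_inv_mul_mem_centralizer (hMS m.2)
  refine ⟨MonoidHom.mk' π fun a b => eq_of_inv_mul_mem_centralizer hZ (hπ _) ?_, hπ⟩
  have := mul_mem (conj_mem_centralizer_of_mem_normalizer
    (inv_mem (Subgroup.le_normalizer (π b).2)) (hπ a)) (hπ b)
  convert this using 1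
  simp only [Subgroup.coe_mul]
  group

namespace IsProjection

variable {π : M →* S} (hπ : IsProjection π) (hZ : Subgroup.center S = ⊥)
include hπ hZ

lemma apply_eq {m : M} {s : S} (h : (s : G)⁻¹ * m ∈ Subgroup.centralizer (S : Set G)) :
    π m = s :=
  eq_of_inv_mul_mem_centralizer hZ (hπ m) h

lemma apply_coe (s : S) (hs : (s : G) ∈ M) : π ⟨s, hs⟩ = s :=
  hπ.apply_eq hZ (by rw [inv_mul_cancel]; exact one_mem _)

lemma apply_eq_one {m : M} (hm : (m : G) ∈ Subgroup.centralizer (S : Set G)) : π m = 1 :=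
  hπ.apply_eq hZ (by rwa [Subgroup.coe_one, inv_one, one_mul])

lemma apply_conjNormal [M.Normal] (x : Subgroup.normalizer (S : Set G)) (m : M) :
    π (MulAut.conjNormal (x : G) m) = S.normalizerMonoidHom x (π m) := by
  refine hπ.apply_eq hZ ?_
  convert conj_mem_centralizer_of_mem_normalizer x.2 (hπ m) using 1
  change ((x : G) * π m * (x : G)⁻¹)⁻¹ * (x * m * (x : G)⁻¹) = _
  group

end IsProjection

end Projection

section ProductCharacters

open scoped Kronecker

variable {X Y ι κ : Type*} [Group X] [Finite X] [Group Y] [Finite Y]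
  [Fintype ι] [DecidableEq ι] [Fintype κ] [DecidableEq κ]
  {V : ℂ[X] →ₐ[ℂ] Matrix ι ι ℂ} {V' : ℂ[Y] →ₐ[ℂ] Matrix κ κ ℂ}

lemma surjective_of_forall_eq_kronecker (hV : Function.Surjective V)
    (hV' : Function.Surjective V') {W : ℂ[X × Y] →ₐ[ℂ] Matrix (ι × κ) (ι × κ) ℂ}
    (hW : ∀ x y, W (of ℂ (X × Y) (x, y)) = V (of ℂ X x) ⊗ₖ V' (of ℂ Y y)) :
    Function.Surjective W := by
  cases nonempty_fintype X
  cases nonempty_fintype Y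
  have kronecker_mem (A : Matrix ι ι ℂ) (B : Matrix κ κ ℂ) : A ⊗ₖ B ∈ W.range := by
    obtain ⟨a, rfl⟩ := hV A
    obtain ⟨b, rfl⟩ := hV' B
    change Matrix.kroneckerBilinear (R := ℂ) (V a) (V' b) ∈ W.range
    rw [eq_sum_coeff_smul_of a, eq_sum_coeff_smul_of b]
    simp only [map_sum, map_smul, LinearMap.sum_apply, LinearMap.smul_apply]
    refine sum_mem fun y _ => Subalgebra.smul_mem _ (sum_mem fun x _ =>
      Subalgebra.smul_mem _ ?_ _) _
    exact ⟨of ℂ (X × Y) (x, y), hW x y⟩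
  intro C
  rw [← AlgHom.mem_range, Matrix.matrix_eq_sum_single C]
  refine sum_mem fun i _ => sum_mem fun j _ => ?_
  rw [← mul_one (C i j), ← Matrix.single_kronecker_single]
  exact kronecker_mem _ _

lemma IsIrrChar.prod {f : X → ℂ} {f' : Y → ℂ} (hf : IsIrrChar f) (hf' : IsIrrChar f') :
    IsIrrChar fun z : X × Y => f z.1 * f' z.2 := by
  have := hf.nonempty_fin_charDegree
  have := hf'.nonempty_fin_charDegree
  let ρ : X × Y →* Matrix (Fin (charDegree f) × Fin (charDegree f'))
      (Fin (charDegree f) × Fin (charDegree f')) ℂ :=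
    { toFun := fun z => hf.rep (of ℂ X z.1) ⊗ₖ hf'.rep (of ℂ Y z.2)
      map_one' := by simp only [Prod.fst_one, Prod.snd_one, map_one, Matrix.one_kronecker_one]
      map_mul' := fun z w => by
        simp only [Prod.fst_mul, Prod.snd_mul, map_mul, Matrix.mul_kronecker_mul] }
  have lift_of (z : X × Y) : MonoidAlgebra.lift ℂ _ _ ρ (of ℂ (X × Y) z) = ρ z :=
    MonoidAlgebra.lift_of ρ z
  convert isIrrChar_traceChar (surjective_of_forall_eq_kronecker hf.rep_surjective
    hf'.rep_surjective fun x y => lift_of (x, y)) with z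
  rw [traceChar, lift_of, ← hf.trace_rep, ← hf'.trace_rep]
  exact (Matrix.trace_kronecker _ _).symm

lemma IsIrrChar.charDegree_eq_of_proportional {f f' : X → ℂ} (hf : IsIrrChar f)
    (hf' : IsIrrChar f') (h : ∀ x, charDegree f' * f x = charDegree f * f' x) :
    charDegree f = charDegree f' := by
  cases nonempty_fintype X
  have scaled : (charDegree f' : ℂ) ^ 2 * Nat.card X = (charDegree f : ℂ) ^ 2 * Nat.card X := by
    rw [← hf.sum_apply_inv_mul_self, Finset.mul_sum, hf.sum_apply_inv_mul_self,
      ← hf'.sum_apply_inv_mul_self, Finset.mul_sum]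
    refine Finset.sum_congr rfl fun x _ => ?_
    rw [sq, sq, mul_mul_mul_comm, mul_mul_mul_comm (charDegree f : ℂ), h, h]
  have := mul_right_cancel₀ (Nat.cast_ne_zero.2 Nat.card_pos.ne') scaled
  exact (Nat.pow_left_injective two_ne_zero (by exact_mod_cast this)).symm

omit [Finite X] in
lemma det_apply_of_eq_one (hX : commutator X = ⊤) (W : ℂ[X] →ₐ[ℂ] Matrix ι ι ℂ) (x : X) :
    (W (of ℂ X x)).det = 1 := by
  let δ : X →* ℂ := Matrix.detMonoidHom.comp ((W : ℂ[X] →* Matrix ι ι ℂ).comp (of ℂ X))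
  have := Abelianization.commutator_subset_ker δ.toHomUnits (hX ▸ Subgroup.mem_top x)
  exact congrArg Units.val (MonoidHom.mem_ker.1 this)

end ProductCharacters

section PairCharacters

variable {G : Type*} [Group G] {M S : Subgroup G} [M.Normal]

/-- The character `θ₁ × θ₂ᵍ` of a group `M` that projects onto both `S` and its conjugate
`g S g⁻¹`: it is `θ₁` on the factor `S`, the transport of `θ₂` on the factor `g S g⁻¹`, and trivial
on what centralizes both. -/
def pairChar (π : M →* S) (g : G) (θ₁ θ₂ : S → ℂ) (m : M) : ℂ :=
  θ₁ (π m) * θ₂ (π (MulAut.conjNormal g⁻¹ m))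

lemma IsIrrChar.charDegree_pairChar {θ₁ θ₂ : S → ℂ} (hθ₁ : IsIrrChar θ₁) (hθ₂ : IsIrrChar θ₂)
    (π : M →* S) (g : G) : charDegree (pairChar π g θ₁ θ₂) = charDegree θ₁ * charDegree θ₂ := by
  rw [charDegree, pairChar, map_one, map_one, map_one, hθ₁.apply_one, hθ₂.apply_one,
    ← Nat.cast_mul, Complex.natCast_re, Nat.floor_natCast]

variable [Finite G] (hS : IsMinimalNormalIn M S) (hZ : Subgroup.center S = ⊥) {π : M →* S}
  (hπ : IsProjection π) {g : G}
include hS hZ hπ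

lemma IsProjection.apply_conjNormal_eq_one (hg : g ∉ Subgroup.normalizer (S : Set G)) (s : S) :
    π (MulAut.conjNormal g ⟨s, hS.le s.2⟩) = 1 :=
  hπ.apply_eq_one hZ (hS.conj_mem_centralizer hg s.2)

lemma IsProjection.prod_conjNormal_surjective (hg : g ∉ Subgroup.normalizer (S : Set G)) :
    Function.Surjective (π.prod (π.comp (MulAut.conjNormal g⁻¹).toMonoidHom)) := by
  rintro ⟨s, t⟩
  have hg' : g⁻¹ ∉ Subgroup.normalizer (S : Set G) := fun h => hg (inv_mem_iff.1 h)
  have conj_inv_conj : MulAut.conjNormal g⁻¹ (MulAut.conjNormal g (⟨t, hS.le t.2⟩ : M)) =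
      ⟨t, hS.le t.2⟩ := by
    rw [← MulAut.mul_apply, ← map_mul, inv_mul_cancel, map_one, MulAut.one_apply]
  refine ⟨⟨s, hS.le s.2⟩ * MulAut.conjNormal g ⟨t, hS.le t.2⟩, Prod.ext ?_ ?_⟩
  · change π (_ * _) = s
    rw [map_mul, hπ.apply_coe hZ, hπ.apply_conjNormal_eq_one hS hZ hg, mul_one]
  · change π (MulAut.conjNormal g⁻¹ (_ * _)) = t
    rw [map_mul, map_mul, hπ.apply_conjNormal_eq_one hS hZ hg', conj_inv_conj, hπ.apply_coe hZ,
      one_mul]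

variable {θ₁ θ₂ : S → ℂ} (hθ₁ : IsIrrChar θ₁) (hθ₂ : IsIrrChar θ₂)
include hθ₁ hθ₂

lemma isIrrChar_pairChar (hg : g ∉ Subgroup.normalizer (S : Set G)) :
    IsIrrChar (pairChar π g θ₁ θ₂) :=
  (hθ₁.prod hθ₂).comp (hπ.prod_conjNormal_surjective hS hZ hg)

-- If `x` fixes the pair character but moves `S`, evaluating on `S` shows that `θ₁` is proportional
-- to a conjugate of `θ₂` or to the trivial character.
lemma inertiaGroup_pairChar_le (hg : g ∉ Subgroup.normalizer (S : Set G))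
    (hne : charDegree θ₁ ≠ charDegree θ₂) (hne_one : charDegree θ₁ ≠ 1) :
    inertiaGroup (pairChar π g θ₁ θ₂) ≤ Subgroup.normalizer (S : Set G) := by
  intro x hx
  by_contra hxS
  have hg' : g⁻¹ ∉ Subgroup.normalizer (S : Set G) := fun h => hg (inv_mem_iff.1 h)
  have on_S (s : S) : charDegree θ₁ * θ₂ (π (MulAut.conjNormal (g⁻¹ * x) ⟨s, hS.le s.2⟩)) =
      charDegree θ₂ * θ₁ s := by
    have := mem_inertiaGroup.1 hx ⟨s, hS.le s.2⟩
    rwa [pairChar, pairChar, hπ.apply_coe hZ, hπ.apply_conjNormal_eq_one hS hZ hxS,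
      hπ.apply_conjNormal_eq_one hS hZ hg', hθ₁.apply_one, hθ₂.apply_one, ← MulAut.mul_apply,
      ← map_mul, mul_comm (θ₁ s)] at this
  by_cases hgx : g⁻¹ * x ∈ Subgroup.normalizer (S : Set G)
  · let α := S.normalizerMonoidHom ⟨g⁻¹ * x, hgx⟩
    have hα : charDegree (fun s => θ₂ (α s)) = charDegree θ₂ := charDegree_comp α.toMonoidHom θ₂
    refine hne ((hθ₁.charDegree_eq_of_proportional
      (hθ₂.comp (φ := α.toMonoidHom) α.surjective) fun s => ?_).trans hα)
    have := hπ.apply_conjNormal hZ ⟨g⁻¹ * x, hgx⟩ ⟨s, hS.le s.2⟩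
    rw [hπ.apply_coe hZ] at this
    exact hα ▸ ((on_S s).symm.trans (by rw [this]; rfl))
  · refine hne_one ((hθ₁.charDegree_eq_of_proportional isIrrChar_one fun s => ?_).trans
      charDegree_one)
    have := on_S s
    rw [hπ.apply_conjNormal_eq_one hS hZ hgx, hθ₂.apply_one, mul_comm] at this
    rw [charDegree_one, Nat.cast_one, one_mul, mul_one]
    exact (mul_left_cancel₀ (Nat.cast_ne_zero.2 hθ₂.charDegree_pos.ne') this).symm

end PairCharacters

section TwoPrimeDegrees

lemma two_lt_length_primeFactorsList {k d a : ℕ} (ha : a ≠ 0) (hk : k ≠ 1) (hd : d ≠ 1)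
    (hd' : ¬ d.Prime) (h : k * d ∣ a) : 2 < a.primeFactorsList.length := by
  obtain ⟨c, rfl⟩ := h
  obtain ⟨hkd, hc⟩ := mul_ne_zero_iff.1 ha
  obtain ⟨hk₀, hd₀⟩ := mul_ne_zero_iff.1 hkd
  have one_le : 1 ≤ ArithmeticFunction.cardFactors k := Nat.one_le_iff_ne_zero.2 <|
    ArithmeticFunction.cardFactors_eq_zero_iff_eq_zero_or_one.not.2 (not_or.2 ⟨hk₀, hk⟩)
  have ne_zero : ArithmeticFunction.cardFactors d ≠ 0 :=
    ArithmeticFunction.cardFactors_eq_zero_iff_eq_zero_or_one.not.2 (not_or.2 ⟨hd₀, hd⟩)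
  have ne_one : ArithmeticFunction.cardFactors d ≠ 1 :=
    ArithmeticFunction.cardFactors_eq_one_iff_prime.not.2 hd'
  rw [← ArithmeticFunction.cardFactors_apply, ArithmeticFunction.cardFactors_mul hkd hc,
    ArithmeticFunction.cardFactors_mul hk₀ hd₀]
  omega

variable {G : Type*} [Group G] [Finite G] {M S : Subgroup G} [M.Normal]
  (hS : IsMinimalNormalIn M S) (hZ : Subgroup.center S = ⊥) {π : M →* S} (hπ : IsProjection π)
  {g : G} (hg : g ∉ Subgroup.normalizer (S : Set G)) {θ₁ θ₂ : S → ℂ} (hθ₁ : IsIrrChar θ₁)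
  (hdeg : charDegree θ₁ ≠ 1)
include hS hZ hπ hg hθ₁ hdeg

lemma index_normalizer_mul_charDegree_dvd [Fintype M] (hθ₂ : IsIrrChar θ₂)
    (hne : charDegree θ₁ ≠ charDegree θ₂) {χ : G → ℂ} (hχ : IsIrrChar χ)
    (h : LiesOver χ (pairChar π g θ₁ θ₂)) :
    (Subgroup.normalizer (S : Set G)).index * (charDegree θ₁ * charDegree θ₂) ∣ charDegree χ := by
  rw [← hθ₁.charDegree_pairChar hθ₂ π g]
  exact (mul_dvd_mul_right (Subgroup.index_dvd_of_le
    (inertiaGroup_pairChar_le hS hZ hπ hθ₁ hθ₂ hg hne hdeg)) _).trans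
    (hχ.index_inertiaGroup_mul_charDegree_dvd (isIrrChar_pairChar hS hZ hπ hθ₁ hθ₂ hg) h)

variable {p : ℕ} [Fact p.Prime] (Q : Sylow p (Subgroup.normalizer (S : Set G)))
  (hM : commutator M = ⊤) (hp : ¬ p ∣ charDegree θ₁)
  (hQ : ∀ (x : Q) s, θ₁ (S.normalizerMonoidHom x s) = θ₁ s)
include hM hp hQ

omit hdeg in
lemma exists_liesOver_pairChar_not_dvd [Fintype M] :
    ∃ χ : G → ℂ, IsIrrChar χ ∧ LiesOver χ (pairChar π g θ₁ fun _ => 1) ∧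
      ¬ (Subgroup.normalizer (S : Set G)).index * p ∣ charDegree χ := by
  have hψ := isIrrChar_pairChar hS hZ hπ hθ₁ isIrrChar_one hg
  have hψ_deg := hθ₁.charDegree_pairChar isIrrChar_one π g
  rw [charDegree_one, mul_one] at hψ_deg
  refine hψ.exists_liesOver_not_dvd (Q.isPGroup'.map (Subgroup.subtype _)) ?_ (by rwa [hψ_deg])
    (det_apply_of_eq_one hM _) ((Subgroup.index_map_subtype _).trans (mul_comm _ _)) Q.not_dvd_index
  rintro _ ⟨x, hx, rfl⟩
  refine mem_inertiaGroup.2 fun m => ?_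
  rw [pairChar, pairChar, mul_one, mul_one, Subgroup.subtype_apply, hπ.apply_conjNormal hZ]
  exact hQ ⟨x, hx⟩ (π m)

lemma not_dvd_charDegree_of_invariant (hdeg' : ¬ (charDegree θ₁).Prime)
    (h2 : ∀ χ χ' : G → ℂ, IsIrrChar χ → IsIrrChar χ' → charDegree χ ≠ charDegree χ' →
      (Nat.gcd (charDegree χ) (charDegree χ')).primeFactorsList.length ≤ 2)
    (hθ₂ : IsIrrChar θ₂) : ¬ p ∣ charDegree θ₂ := by
  intro hp₂
  cases nonempty_fintype M
  obtain ⟨χ, hχ, hχθ, hχp⟩ := exists_liesOver_pairChar_not_dvd hS hZ hπ hg hθ₁ Q hM hp hQ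
  obtain ⟨χ', hχ', hχθ'⟩ := (isIrrChar_pairChar hS hZ hπ hθ₁ hθ₂ hg).exists_liesOver
  have dvd := index_normalizer_mul_charDegree_dvd hS hZ hπ hg hθ₁ hdeg isIrrChar_one
    (by rwa [charDegree_one]) hχ hχθ
  rw [charDegree_one, mul_one] at dvd
  have dvd' := index_normalizer_mul_charDegree_dvd hS hZ hπ hg hθ₁ hdeg hθ₂
    (fun h => hp (h ▸ hp₂)) hχ' hχθ'
  have hne : charDegree χ ≠ charDegree χ' := fun h =>
    hχp (h ▸ (mul_dvd_mul_left _ (hp₂.mul_left _)).trans dvd')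
  have hindex : (Subgroup.normalizer (S : Set G)).index ≠ 1 := fun h =>
    hg (Subgroup.index_eq_one.1 h ▸ Subgroup.mem_top g)
  refine (h2 χ χ' hχ hχ' hne).not_gt (two_lt_length_primeFactorsList
    (Nat.gcd_pos_of_pos_left _ hχ.charDegree_pos).ne' hindex hdeg hdeg' (Nat.dvd_gcd dvd ?_))
  exact (mul_dvd_mul_left _ (Dvd.intro _ rfl)).trans dvd'

end TwoPrimeDegrees

-- If no irreducible character of `S` has prime degree, any prime divisor `p` of a character degree
-- will do. Otherwise `p` is a prime degree: then `S` has a self-centralizing subgroup of order `p`,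
-- and every irreducible character of degree prime to `p` is invariant.
lemma exists_sylow_invariant_dvd {S H : Type*} [Group S] [Finite S] [IsSimpleGroup S] [Group H]
    (hZ : Subgroup.center S = ⊥) (α : H →* MulAut S) :
    ∃ (p : ℕ) (_ : Fact p.Prime) (Q : Sylow p H) (f f' : S → ℂ), IsIrrChar f ∧
      f ≠ (fun _ => 1) ∧ ¬ (charDegree f).Prime ∧ ¬ p ∣ charDegree f ∧
      (∀ (x : Q) s, f (α x s) = f s) ∧ IsIrrChar f' ∧ p ∣ charDegree f' := by
  by_cases exists_prime : ∃ f : S → ℂ, IsIrrChar f ∧ (charDegree f).Prime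
  · obtain ⟨f, f', hf, hf₁, hf_prime, hf', hp, hff'⟩ :=
      exists_prime_charDegree_not_dvd_charDegree hZ exists_prime
    have : Fact (charDegree f').Prime := ⟨hp⟩
    obtain ⟨Q⟩ : Nonempty (Sylow (charDegree f') H) := inferInstance
    obtain ⟨z, hz, hCz, -⟩ := exists_orderOf_eq_prime_charDegree hZ hf' rfl
    exact ⟨_, this, Q, f, f', hf, hf₁, hf_prime, hff', hf.apply_aut_eq_of_not_dvd_charDegree
      (α.comp (Q : Subgroup H).subtype) Q.isPGroup' hz hCz hff', hf', dvd_rfl⟩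
  · obtain ⟨f', hf', hf'₁⟩ := exists_isIrrChar_ne_one S
    obtain ⟨p, hp, hpf'⟩ := Nat.exists_prime_and_dvd (hf'.charDegree_ne_one hf'₁ hZ)
    have : Fact p.Prime := ⟨hp⟩
    obtain ⟨Q⟩ : Nonempty (Sylow p H) := inferInstance
    obtain ⟨f, hf, hf₁, hfp, hfQ⟩ := exists_isIrrChar_ne_one_invariant
      (α.comp (Q : Subgroup H).subtype) Q.isPGroup' (hpf'.trans hf'.charDegree_dvd_card)
    exact ⟨p, this, Q, f, f', hf, hf₁, fun h => exists_prime ⟨f, hf, h⟩, hfp, hfQ, hf', hpf'⟩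

lemma IsMinimalNormalIn.isSimpleGroup_of_length_primeFactorsList_le {G : Type*} [Group G]
    [Finite G] {M : Subgroup G} [M.Normal] (hM : IsMinimalNormalIn ⊤ M)
    (hna : ¬ M ≤ Subgroup.centralizer (M : Set G))
    (h2 : ∀ χ χ' : G → ℂ, IsIrrChar χ → IsIrrChar χ' → charDegree χ ≠ charDegree χ' →
      (Nat.gcd (charDegree χ) (charDegree χ')).primeFactorsList.length ≤ 2) :
    IsSimpleGroup M := by
  by_contra hns
  obtain ⟨S, hS⟩ := exists_isMinimalNormalIn hM.ne_bot
  have := hM.isSimpleGroup hS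
  have hZ : Subgroup.center S = ⊥ := center_eq_bot_of_not_commutative fun h =>
    hM.not_le_centralizer hS hna fun x hx y hy => congrArg Subtype.val (h ⟨y, hy⟩ ⟨x, hx⟩)
  obtain ⟨π, hπ⟩ := exists_isProjection hZ (hM.le_sup_centralizer hS)
  obtain ⟨g, hg⟩ : ∃ g, g ∉ Subgroup.normalizer (S : Set G) := by
    simpa only [ne_eq, Subgroup.eq_top_iff', not_forall] using hM.normalizer_ne_top hS hns
  obtain ⟨p, _, Q, f, f', hf, hf₁, hf_prime, hfp, hfQ, hf', hpf'⟩ :=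
    exists_sylow_invariant_dvd hZ S.normalizerMonoidHom
  exact not_dvd_charDegree_of_invariant hS hZ hπ hg hf (hf.charDegree_ne_one hf₁ hZ) Q
    (hM.commutator_eq_top hna) hfp hfQ hf_prime h2 hf' hpf'

section Representations

variable {X : Type} [Group X] {f : X → ℂ}

/-- An irreducible character, viewed through a matrix algebra representation affording it, as an
object of the category of representations in which `charDegrees` is phrased. -/
noncomputable def IsIrrChar.fdRep (hf : IsIrrChar f) : FDRep ℂ X :=
  FDRep.of (V := Fin (charDegree f) → ℂ)
    ((Matrix.toLinAlgEquiv' : _ ≃ₐ[ℂ] _).toAlgHom.toMonoidHom.comp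
      ((hf.rep : ℂ[X] →* _).comp (of ℂ X)) : Representation ℂ X (Fin (charDegree f) → ℂ))

lemma IsIrrChar.exists_smul_id_eq (hf : IsIrrChar f) (w : hf.fdRep ⟶ hf.fdRep) :
    ∃ c : ℂ, c • 𝟙 hf.fdRep = w := by
  let L := Matrix.toLinAlgEquiv' (R := ℂ) (n := Fin (charDegree f))
  let A : (Fin (charDegree f) → ℂ) →ₗ[ℂ] (Fin (charDegree f) → ℂ) := w.hom.hom.hom
  have commute_of (x : X) : Commute (hf.rep (of ℂ X x)) (L.symm A) := by
    refine L.injective ?_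
    rw [map_mul, map_mul, AlgEquiv.apply_symm_apply]
    exact (congrArg (fun z => z.hom.hom) (w.comm x)).symm
  obtain ⟨c, hc⟩ := exists_eq_smul_one_of_forall_commute (A := L.symm A) fun B => by
    obtain ⟨a, rfl⟩ := hf.rep_surjective B
    induction a using MonoidAlgebra.induction_on with
    | of x => exact commute_of x
    | add a b ha hb => exact map_add hf.rep a b ▸ ha.add_left hb
    | smul r a ha => exact map_smul hf.rep r a ▸ ha.smul_left r
  refine ⟨c, Action.hom_ext _ _ (FGModuleCat.hom_ext ?_)⟩
  have hA : A = c • 1 := L.symm.injective (by rw [hc, map_smul, map_one])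
  exact hA.symm

lemma IsIrrChar.simple_fdRep [Finite X] (hf : IsIrrChar f) : Simple hf.fdRep := by
  have := hf.nonempty_fin_charDegree
  have : NeZero (Nat.card X : ℂ) := ⟨Nat.cast_ne_zero.2 Nat.card_pos.ne'⟩
  rw [FDRep.simple_iff_end_is_rank_one]
  refine (finrank_eq_one_iff_of_nonzero' (𝟙 hf.fdRep) fun h => ?_).2 hf.exists_smul_id_eq
  have : (1 : Module.End ℂ (Fin (charDegree f) → ℂ)) = 0 := congrArg (fun z => z.hom.hom.hom) h
  exact one_ne_zero this

lemma IsIrrChar.charDegree_mem_charDegrees [Finite X] (hf : IsIrrChar f) :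
    charDegree f ∈ charDegrees X :=
  ⟨hf.fdRep, hf.simple_fdRep, Module.finrank_fin_fun ℂ⟩

end Representations

section ChiefFactor

variable {G : Type*} [Group G] {N M : Subgroup G} [N.Normal]

variable (N M) in
/-- The quotient `M / N` as a subgroup of `G / N`. -/
noncomputable def quotientEquivMap :
    M ⧸ N.subgroupOf M ≃* M.map (QuotientGroup.mk' N) :=
  (QuotientGroup.quotientMulEquivOfEq (by
    ext x
    rw [MonoidHom.mem_ker, Subgroup.mem_subgroupOf, Subtype.ext_iff]
    exact (QuotientGroup.eq_one_iff (x : G)).symm)).trans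
    (QuotientGroup.quotientKerEquivOfSurjective _
      ((QuotientGroup.mk' N).subgroupMap_surjective M))

lemma isMinimalNormalIn_map_mk' [M.Normal] (hNM : N < M)
    (hchief : ∀ K : Subgroup G, K.Normal → N < K → K < M → False) :
    IsMinimalNormalIn ⊤ (M.map (QuotientGroup.mk' N)) := by
  let q := QuotientGroup.mk' N
  have hq : Function.Surjective q := QuotientGroup.mk'_surjective N
  have hker : q.ker = N := QuotientGroup.ker_mk' N
  have map_eq_bot {K : Subgroup G} : K.map q = ⊥ ↔ K ≤ N := by rw [Subgroup.map_eq_bot_iff, hker]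
  refine ⟨⟨map_eq_bot.not.2 hNM.not_ge, le_top,
    (Subgroup.normalizer_eq_top_iff.2 (‹M.Normal›.map q hq)).ge⟩, ?_⟩
  rintro T ⟨hT, -, hTn⟩ hTM
  have hTn : T.Normal := Subgroup.normalizer_eq_top_iff.1 (top_le_iff.1 hTn)
  have map_comap : (T.comap q).map q = T := Subgroup.map_comap_eq_self_of_surjective hq T
  have comap_le : T.comap q ≤ M := by
    refine (Subgroup.comap_mono hTM).trans ?_
    rw [Subgroup.comap_map_eq, hker, sup_eq_left.2 hNM.le]
  have lt_comap : N < T.comap q := by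
    refine lt_of_le_not_ge (hker.ge.trans (Subgroup.ker_le_comap q T)) fun h => hT ?_
    rw [← map_comap, map_eq_bot.2 h]
  by_contra h
  refine hchief _ (hTn.comap q) lt_comap (lt_of_le_not_ge comap_le fun hM => h ?_)
  exact Subgroup.map_le_iff_le_comap.2 hM

end ChiefFactor

theorem chief_factor_simple_or_A5xA5_general (G : Type) [Group G] [Finite G]
    (hG : TwoPrimeHypothesis G) (N M : Subgroup G) [N.Normal] [M.Normal] (hNM : N < M)
    (hchief : ∀ K : Subgroup G, K.Normal → N < K → K < M → False)
    (hnonab : ¬ ∀ x y : M ⧸ N.subgroupOf M, Commute x y) :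
    IsSimpleGroup (M ⧸ N.subgroupOf M) := by
  have hq := QuotientGroup.mk'_surjective N
  have : (M.map (QuotientGroup.mk' N)).Normal := ‹M.Normal›.map _ hq
  let e := quotientEquivMap N M
  have hna : ¬ M.map (QuotientGroup.mk' N) ≤ Subgroup.centralizer (M.map (QuotientGroup.mk' N)) :=
    fun h => hnonab fun x y => e.injective <| Subtype.ext <| by
      rw [map_mul, map_mul]
      exact h (e y).2 _ (e x).2
  have degree_mem (χ : G ⧸ N → ℂ) (hχ : IsIrrChar χ) : charDegree χ ∈ charDegrees G :=
    charDegree_comp (QuotientGroup.mk' N) χ ▸ (hχ.comp hq).charDegree_mem_charDegrees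
  exact e.isSimpleGroup_congr.2 <|
    (isMinimalNormalIn_map_mk' hNM hchief).isSimpleGroup_of_length_primeFactorsList_le hna
      fun χ χ' hχ hχ' => hG _ (degree_mem χ hχ) _ (degree_mem χ' hχ')

/-- A nonabelian chief factor `M/N` of a finite nonsolvable group satisfying the two-prime
hypothesis is simple or isomorphic to `A₅ × A₅`. -/
theorem chief_factor_simple_or_A5xA5
    (G : Type) [Group G] [Finite G] (hG : TwoPrimeHypothesis G)
    (hns : ¬ IsSolvable G)
    (N M : Subgroup G) [N.Normal] [M.Normal] (hNM : N < M)
    (hchief : ∀ K : Subgroup G, K.Normal → N < K → K < M → False)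
    (hnonab : ¬ ∀ x y : M ⧸ N.subgroupOf M, Commute x y) :
    IsSimpleGroup (M ⧸ N.subgroupOf M) ∨
      Nonempty ((M ⧸ N.subgroupOf M) ≃*
        (alternatingGroup (Fin 5) × alternatingGroup (Fin 5))) :=
  Or.inl (chief_factor_simple_or_A5xA5_general G hG N M hNM hchief hnonab)
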